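/- arXiv:1003.1688 — 3 statements merged into one kernel-verified Lean document; each statement's English description precedes it below -/
import Mathlib

section
/- Let n be a positive integer, let 0 ≤ k ≤ 1, and let λ be a partition with exactly two parts satisfying 1 < λ_1 ≤ k+n. Then the difference s_{S(λ^t,k,n)} − s_{S(λ,k,n)} is Schur-positive. -/
/-!
In a Littlewood-Richardson filling of a staircase with bad foundation, the staircase part is
forced: its columns read `1, 2, 3, …` (`staircase_forced`), so it contains `v` exactly
`n + 1 - v` times. For a fixed content `ν`, the number `x v` of entries `v` in the foundation is
therefore fixed as well, and only fillings of the foundation have to be compared.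

*Two rows.* The lattice condition makes the first row strictly increasing, so it is a set `A`;
the filling is determined by `A` and `x` (`rowSet_injOn`). The lattice condition for the second
row says `x (v+1) ≤ [v ≤ n] + [v ∈ A]`, and column strictness says that the path with steps
`2[v ∈ A] - x v` never goes below zero (`RowData`). In particular all multiplicities are at most
two, and a value of multiplicity two is preceded by a value of `A`. The support of `x` thus splits
into blocks `s, s+1, …, e` in which `s` is single and the other values are double; all values but
`e` are in `A`, and the path gains `1` or loses `1` over the block according to whether `e ∈ A`.

*Two columns.* A filling is given by the set `C` of entries of the first column: double values
are in both columns, and the single ones are distributed freely so that the path with steps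
`2[v ∈ C] - x v` stays nonnegative (`ColData`). The only further condition concerns `n + 2`, which
does not occur in the staircase and must be read after an `n + 1`: if `n + 1` and `n + 2` are both
single and `n + 1` is in the first column, so is `n + 2`.

*The injection.* Put the single value `s` of a block in `C` if and only if the last value `e` of
the block is in `A` (`recolour`). Path heights at block ends are preserved, hence the path stays
nonnegative, `|C| = |A|`, and `A` can be recovered. If `n + 1` and `n + 2` are both single, then
this `C` contains `n + 1` but not `n + 2`, violating the further condition. In that case `n + 1` is
replaced in `C` by `n + 2` if `l2 < l1`, and by the last single value `≤ n` if `l2 = l1`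
(`toCol`). In the second situation the path is at height zero just before `n + 1`, so that last
single value is a down step and not in `C`; it exists because `1 < l1`.
-/

/-- The cells of the rotated staircase `Δ_n`, realized as the skew diagram
`(n^n)/δ_{n-1}`, placed in rows `0,…,n-1` and columns `k,…,n+k-1`
(each row right-justified; the row of length `i+1` is row `i`). -/
def staircaseCells (n k : ℕ) : Set (ℕ × ℕ) :=
  {p | p.1 < n ∧ k + n - 1 - p.1 ≤ p.2 ∧ p.2 < n + k}

/-- The cells of the foundation `λ/δ_{k-1}`, placed in rows `n, n+1, …`;
row `n + i` contains the cells of row `i` of `λ/δ_{k-1}`. -/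
def foundationCells (lam : ℕ → ℕ) (k n : ℕ) : Set (ℕ × ℕ) :=
  {p | n ≤ p.1 ∧ k - 1 - (p.1 - n) ≤ p.2 ∧ p.2 < lam (p.1 - n)}

/-- The staircase with bad foundation `𝒮(λ,k,n)`: the foundation `λ/δ_{k-1}`
is placed immediately below `Δ_n`, extending `k` columns to its left, so that
rows overlap in exactly `λ₁ - k` columns. -/
def SBF (lam : ℕ → ℕ) (k n : ℕ) : Set (ℕ × ℕ) :=
  staircaseCells n k ∪ foundationCells lam k n

/-- `T` is a semistandard Young tableau of shape `D`: positive entries on `D`,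
zero outside `D`, rows weakly increasing, columns strictly increasing. -/
def IsSSYT (D : Set (ℕ × ℕ)) (T : ℕ × ℕ → ℕ) : Prop :=
  (∀ p ∈ D, 0 < T p) ∧ (∀ p, p ∉ D → T p = 0) ∧
  (∀ i j1 j2, j1 ≤ j2 → (i, j1) ∈ D → (i, j2) ∈ D → T (i, j1) ≤ T (i, j2)) ∧
  (∀ i1 i2 j, i1 < i2 → (i1, j) ∈ D → (i2, j) ∈ D → T (i1, j) < T (i2, j))

/-- The set of cells of `D` read up to (and including) cell `q`, when rows are
read right to left, from the top row to the bottom row. -/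
def readUpTo (D : Set (ℕ × ℕ)) (q : ℕ × ℕ) : Set (ℕ × ℕ) :=
  {p ∈ D | p.1 < q.1 ∨ (p.1 = q.1 ∧ q.2 ≤ p.2)}

/-- The reading word of `T` is lattice: at every point while reading, for each
`v ≥ 1` the number of `v+1`'s read so far never exceeds the number of `v`'s. -/
def IsLattice (D : Set (ℕ × ℕ)) (T : ℕ × ℕ → ℕ) : Prop :=
  ∀ q ∈ D, ∀ v, 1 ≤ v →
    ({p ∈ readUpTo D q | T p = v + 1}).ncard ≤ ({p ∈ readUpTo D q | T p = v}).ncard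

/-- The number of entries of `T` (on the shape `D`) equal to `v`. -/
noncomputable def contentOf (D : Set (ℕ × ℕ)) (T : ℕ × ℕ → ℕ) (v : ℕ) : ℕ :=
  ({p ∈ D | T p = v}).ncard

/-- The number of SSYT of shape `D` with lattice reading word and content `ν`
(`ν v` = number of entries equal to `v`, for `v ≥ 1`).  By the
Littlewood-Richardson rule this is the coefficient of the Schur function `s_ν`
in the skew Schur function `s_D`. -/
noncomputable def LRcount (D : Set (ℕ × ℕ)) (nu : ℕ → ℕ) : ℕ :=
  {T : ℕ × ℕ → ℕ | IsSSYT D T ∧ IsLattice D T ∧ ∀ v, 1 ≤ v → contentOf D T v = nu v}.ncard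

/-- The number of SSYT of shape `D` with content `α`.  For `α` supported on
`{1,…,m}` this is the coefficient of the monomial `x^α` in the skew Schur
polynomial `s_D(x_1,…,x_m)`; hence `s_{D₁} = s_{D₂}` in `m` variables iff
`SSYTcount D₁ α = SSYTcount D₂ α` for all such `α`. -/
noncomputable def SSYTcount (D : Set (ℕ × ℕ)) (alpha : ℕ → ℕ) : ℕ :=
  {T : ℕ × ℕ → ℕ | IsSSYT D T ∧ ∀ v, 1 ≤ v → contentOf D T v = alpha v}.ncard

/-- `lam` is a partition, recorded as its weakly decreasing, eventually zero
sequence of row lengths: `lam i` is the length of row `i+1`. -/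
def IsPartition (lam : ℕ → ℕ) : Prop :=
  (∀ i j, i ≤ j → lam j ≤ lam i) ∧ ∃ N, ∀ i, N ≤ i → lam i = 0

/-- The two-part partition `λ = (l1, l2)`. -/
def twoRowFun (l1 l2 : ℕ) : ℕ → ℕ := fun i => if i = 0 then l1 else if i = 1 then l2 else 0

/-- The transpose `λᵗ = (2^{l2}, 1^{l1-l2})` of the two-part partition `(l1, l2)`. -/
def twoRowTransposeFun (l1 l2 : ℕ) : ℕ → ℕ := fun i => if i < l2 then 2 else if i < l1 then 1 else 0

/-! ### Run ends and lattice heights -/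

/-- The height of the lattice path attached to `x` and `A`: each `v < t` contributes
`2[v ∈ A] - x v`, that is, the number of copies of `v` placed in the part recorded by `A`
minus the number of copies placed in the other part. -/
noncomputable def height (x : ℕ → ℕ) (A : Finset ℕ) (t : ℕ) : ℤ :=
  ∑ v ∈ Finset.range t, (2 * (if v ∈ A then 1 else 0) - (x v : ℤ))

/-- The last element of the block of consecutive values `v, v+1, …` in which all values after
`v` have multiplicity two. -/
noncomputable def runEnd (x : ℕ → ℕ) (v : ℕ) : ℕ := sInf {e | v ≤ e ∧ x (e + 1) ≠ 2}

lemma runEnd_of_ne {x : ℕ → ℕ} {v : ℕ} (h : x (v + 1) ≠ 2) : runEnd x v = v := by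
  apply le_antisymm
  · exact Nat.sInf_le ⟨le_rfl, h⟩
  · exact le_csInf ⟨v, le_rfl, h⟩ (fun e he => he.1)

lemma runEnd_of_eq {x : ℕ → ℕ} {v : ℕ} (h : x (v + 1) = 2) :
    runEnd x v = runEnd x (v + 1) := by
  unfold runEnd
  congr 1
  ext e
  simp only [Set.mem_ofPred_eq]
  constructor
  · rintro ⟨h1, h2⟩
    refine ⟨?_, h2⟩
    rcases Nat.eq_or_lt_of_le h1 with rfl | h3
    · exact absurd h h2
    · exact h3
  · rintro ⟨h1, h2⟩
    exact ⟨by omega, h2⟩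

lemma height_succ (x : ℕ → ℕ) (A : Finset ℕ) (t : ℕ) :
    height x A (t + 1) = height x A t + (2 * (if t ∈ A then 1 else 0) - (x t : ℤ)) := by
  unfold height
  rw [Finset.sum_range_succ]

/-- The conditions met by the set `A` of first-row entries of the two-row foundation in a
Littlewood-Richardson filling, where `x v` is the number of entries `v` in the foundation. -/
structure RowData (n k l1 l2 : ℕ) (x : ℕ → ℕ) (A : Finset ℕ) : Prop where
  mem_le : ∀ v ∈ A, v ≤ n + 1
  mem_x : ∀ v ∈ A, 1 ≤ x v
  card : A.card = l1
  low : ∀ v, v < 2 - k → x v = 0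
  bd : ∀ v, x (v + 1) ≤ (if v ≤ n then 1 else 0) + (if v ∈ A then 1 else 0)
  sum : ∑ v ∈ Finset.range (n + 3), x v = l1 + l2
  dom : ∀ t, 0 ≤ height x A t

/-- The conditions on the set `C` of first-column entries which make it extend to a
Littlewood-Richardson filling of the transposed foundation, where again `x v` is the number of
entries `v` in the foundation. -/
structure ColData (n k l1 l2 : ℕ) (x : ℕ → ℕ) (C : Finset ℕ) : Prop where
  mem_x : ∀ v ∈ C, 1 ≤ x v
  card : C.card = l1
  low : ∀ v, v < 2 - k → x v = 0
  low' : x (2 - k) ≤ 1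
  le_two : ∀ v, x v ≤ 2
  two_mem : ∀ v, x v = 2 → v ∈ C
  pred : ∀ v, x (v + 1) = 2 → 1 ≤ x v
  top : ∀ v, n + 2 < v → x v = 0
  top' : x (n + 2) ≤ 1
  top_pred : x (n + 2) = 1 → 1 ≤ x (n + 1)
  sum : ∑ v ∈ Finset.range (n + 3), x v = l1 + l2
  bal : ∀ t, 0 ≤ height x C t
  exc : x (n + 1) = 1 → x (n + 2) = 1 → n + 1 ∈ C → n + 2 ∈ C

lemma height_top {x : ℕ → ℕ} {A : Finset ℕ} {N : ℕ} (h : ∀ v ∈ A, v < N) :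
    height x A N = 2 * A.card - ∑ v ∈ Finset.range N, (x v : ℤ) := by
  unfold height
  rw [Finset.sum_sub_distrib, ← Finset.mul_sum, Finset.sum_boole]
  congr 3
  congr 1
  ext v
  simp only [Finset.mem_filter, Finset.mem_range]
  exact ⟨fun h => h.2, fun hv => ⟨h v hv, hv⟩⟩

namespace RowData

variable {n k l1 l2 : ℕ} {x : ℕ → ℕ} {A : Finset ℕ}

lemma x_zero (hA : RowData n k l1 l2 x A) (hk : k ≤ 1) : x 0 = 0 := hA.low 0 (by omega)

lemma zero_notMem (hA : RowData n k l1 l2 x A) (hk : k ≤ 1) : 0 ∉ A := fun h => by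
  have := hA.mem_x 0 h
  have := hA.x_zero hk
  omega

lemma le_two (hA : RowData n k l1 l2 x A) (hk : k ≤ 1) (v : ℕ) : x v ≤ 2 := by
  rcases v with _ | v
  · rw [hA.x_zero hk]; omega
  · have := hA.bd v
    split_ifs at this <;> omega

lemma mem_of_two (hA : RowData n k l1 l2 x A) {v : ℕ} (h : x (v + 1) = 2) : v ∈ A := by
  have := hA.bd v
  by_contra h2
  rw [if_neg h2] at this
  split_ifs at this <;> omega

lemma top (hA : RowData n k l1 l2 x A) {v : ℕ} (h : n + 2 < v) : x v = 0 := by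
  obtain ⟨w, rfl⟩ : ∃ w, v = w + 1 := ⟨v - 1, by omega⟩
  have := hA.bd w
  have h2 : w ∉ A := fun h => by have := hA.mem_le w h; omega
  rw [if_neg h2, if_neg (by omega)] at this
  omega

lemma top' (hA : RowData n k l1 l2 x A) : x (n + 2) ≤ 1 := by
  have : x (n + 2) ≤ _ := hA.bd (n + 1)
  rw [if_neg (by omega : ¬ n + 1 ≤ n)] at this
  split_ifs at this <;> omega

lemma top_mem (hA : RowData n k l1 l2 x A) (h : x (n + 2) = 1) : n + 1 ∈ A := by
  have : x (n + 2) ≤ _ := hA.bd (n + 1)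
  rw [if_neg (by omega : ¬ n + 1 ≤ n)] at this
  by_contra h2
  rw [if_neg h2] at this
  omega

/-- Along a block, all values except the last are in `A`, so the total height change over the
block depends only on the multiplicity of its first value and on whether its last is in `A`. -/
lemma height_runEnd (hA : RowData n k l1 l2 x A) :
    ∀ d v, v + d = n + 3 →
      height x A (runEnd x v + 1) =
        height x A v + (2 * (if runEnd x v ∈ A then 1 else 0) - (x v : ℤ)) := by
  intro d
  induction d with
  | zero =>
    intro v hv
    have : x (v + 1) ≠ 2 := by rw [hA.top (by omega)]; omega
    rw [runEnd_of_ne this, height_succ]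
  | succ d ih =>
    intro v hv
    by_cases h : x (v + 1) = 2
    · rw [runEnd_of_eq h, ih (v + 1) (by omega), height_succ, if_pos (hA.mem_of_two h), h]
      push_cast
      ring
    · rw [runEnd_of_ne h, height_succ]

end RowData

/-- Recolouring of a block: values of multiplicity two occur in both columns, and the single
first value of a block goes to the first column precisely when the last value of the block
belongs to `A`. -/
noncomputable def recolour (n : ℕ) (x : ℕ → ℕ) (A : Finset ℕ) : Finset ℕ :=
  (Finset.range (n + 3)).filter (fun v => x v = 2 ∨ (x v = 1 ∧ runEnd x v ∈ A))

namespace RowData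

variable {n k l1 l2 : ℕ} {x : ℕ → ℕ} {A : Finset ℕ}

lemma mem_recolour (hA : RowData n k l1 l2 x A) (v : ℕ) :
    v ∈ recolour n x A ↔ x v = 2 ∨ (x v = 1 ∧ runEnd x v ∈ A) := by
  unfold recolour
  simp only [Finset.mem_filter, Finset.mem_range, and_iff_right_iff_imp]
  intro h
  by_contra h2
  have := hA.top (v := v) (by omega)
  omega

lemma height_recolour (hA : RowData n k l1 l2 x A) (hk : k ≤ 1) (t : ℕ) :
    height x (recolour n x A) (t + 1) = height x A (runEnd x t + 1) := by
  induction t with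
  | zero =>
    have h1 : x (0 + 1) ≠ 2 := fun h => hA.zero_notMem hk (hA.mem_of_two h)
    have h2 : 0 ∉ recolour n x A := by
      rw [hA.mem_recolour, hA.x_zero hk]; omega
    rw [runEnd_of_ne h1, height_succ, height_succ, if_neg h2, if_neg (hA.zero_notMem hk)]
    simp [height]
  | succ t ih =>
    rw [height_succ, ih]
    have hle := hA.le_two hk (t + 1)
    by_cases h2 : x (t + 1) = 2
    · rw [if_pos ((hA.mem_recolour _).2 (Or.inl h2)), runEnd_of_eq h2, h2]
      push_cast; ring
    · rw [runEnd_of_ne h2]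
      by_cases h1 : x (t + 1) = 1
      · have htop : t + 1 ≤ n + 2 := by
          by_contra h; have := hA.top (v := t + 1) (by omega); omega
        rw [hA.height_runEnd (n + 3 - (t + 1)) (t + 1) (by omega)]
        have : (t + 1 ∈ recolour n x A) ↔ runEnd x (t + 1) ∈ A := by
          rw [hA.mem_recolour]; simp [h1]
        simp only [this]
      · have h0 : x (t + 1) = 0 := by omega
        have hnA : t + 1 ∉ A := fun h => by have := hA.mem_x _ h; omega
        have h3 : x (t + 1 + 1) ≠ 2 := fun h => hnA (hA.mem_of_two h)
        have h4 : t + 1 ∉ recolour n x A := by rw [hA.mem_recolour]; omega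
        rw [runEnd_of_ne h3, height_succ x A (t + 1), if_neg h4, if_neg hnA]

lemma height_recolour_nonneg (hA : RowData n k l1 l2 x A) (hk : k ≤ 1) (t : ℕ) :
    0 ≤ height x (recolour n x A) t := by
  rcases t with _ | t
  · simp [height]
  · rw [hA.height_recolour hk]; exact hA.dom _

lemma height_recolour_top (hA : RowData n k l1 l2 x A) (hk : k ≤ 1) :
    height x (recolour n x A) (n + 3) = l1 - l2 := by
  have h3 : x (n + 2 + 1) ≠ 2 := by rw [hA.top (by omega)]; omega
  rw [hA.height_recolour hk, runEnd_of_ne h3,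
    height_top (fun v hv => by have := hA.mem_le v hv; omega), hA.card]
  have := hA.sum
  zify at this
  rw [this]; ring

lemma card_recolour (hA : RowData n k l1 l2 x A) (hk : k ≤ 1) :
    (recolour n x A).card = l1 := by
  have h := hA.height_recolour_top hk
  rw [height_top (fun v hv => by
    unfold recolour at hv
    exact Finset.mem_range.1 (Finset.mem_filter.1 hv).1)] at h
  have := hA.sum
  zify at this
  rw [this] at h
  omega

lemma recolour_inj {A' : Finset ℕ} (hA : RowData n k l1 l2 x A) (hA' : RowData n k l1 l2 x A')
    (hk : k ≤ 1) (h : recolour n x A = recolour n x A') : A = A' := by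
  have key : ∀ t, height x A t = height x A' t := by
    intro t
    induction t with
    | zero => simp [height]
    | succ t ih =>
      by_cases h2 : x (t + 1) = 2
      · rw [height_succ, height_succ, ih, if_pos (hA.mem_of_two h2), if_pos (hA'.mem_of_two h2)]
      · have e1 := hA.height_recolour hk t
        have e2 := hA'.height_recolour hk t
        rw [runEnd_of_ne h2] at e1 e2
        rw [← e1, ← e2, h]
  ext v
  have h1 := key v
  have h2 := key (v + 1)
  rw [height_succ, height_succ, h1] at h2
  by_cases h3 : v ∈ A <;> by_cases h4 : v ∈ A' <;> simp [h3, h4] at h2 ⊢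
  omega

end RowData

/-- The value moved to the first column in place of `n + 1` when `n + 1` and `n + 2` both occur
exactly once: `n + 2`, or, if the two rows are equally long, the last single value below
`n + 1`. -/
def swapTarget (n l1 l2 : ℕ) (x : ℕ → ℕ) : ℕ :=
  if l2 < l1 then n + 2 else Nat.findGreatest (fun s => x s = 1) n

/-- The set of first-column entries assigned to the set `A` of first-row entries. -/
noncomputable def toCol (n l1 l2 : ℕ) (x : ℕ → ℕ) (A : Finset ℕ) : Finset ℕ :=
  if x (n + 1) = 1 ∧ x (n + 2) = 1 then
    insert (swapTarget n l1 l2 x) ((recolour n x A).erase (n + 1))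
  else recolour n x A

lemma height_congr {x : ℕ → ℕ} {C : Finset ℕ} {a : ℕ} :
    ∀ b, a ≤ b → (∀ v, a ≤ v → v < b → (2 * (if v ∈ C then 1 else 0) - (x v : ℤ)) = 0) →
      height x C b = height x C a := by
  intro b hab
  induction b, hab using Nat.le_induction with
  | base => intro _; rfl
  | succ b hab ih =>
    intro h
    rw [height_succ, ih (fun v h1 h2 => h v h1 (by omega)), h b hab (by omega)]
    ring

/-- Moving `a` out of `C` and `w` into it changes heights by `2` beyond `a` and `w`. -/
lemma height_swap {x : ℕ → ℕ} {C : Finset ℕ} {a w : ℕ} (ha : a ∈ C) (hw : w ∉ C) (t : ℕ) :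
    height x (insert w (C.erase a)) t =
      height x C t - (if a < t then 2 else 0) + (if w < t then 2 else 0) := by
  have hne : w ≠ a := fun h => hw (h ▸ ha)
  induction t with
  | zero => simp [height]
  | succ t ih =>
    rw [height_succ, height_succ, ih]
    by_cases h1 : t = w
    · subst h1
      rw [if_pos (Finset.mem_insert_self _ _), if_neg hw, if_neg (lt_irrefl t),
        if_pos (Nat.lt_succ_self t)]
      have : a < t + 1 ↔ a < t := by omega
      simp only [this]; ring
    · by_cases h2 : t = a
      · subst h2
        have : t ∉ insert w (C.erase t) := by simp [h1]
        rw [if_neg this, if_pos ha, if_neg (lt_irrefl t), if_pos (Nat.lt_succ_self t)]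
        have : w < t + 1 ↔ w < t := by omega
        simp only [this]; ring
      · have h3 : t ∈ insert w (C.erase a) ↔ t ∈ C := by simp [h1, h2]
        have h4 : a < t + 1 ↔ a < t := by omega
        have h5 : w < t + 1 ↔ w < t := by omega
        simp only [h3, h4, h5]; ring

namespace RowData

variable {n k l1 l2 : ℕ} {x : ℕ → ℕ} {A : Finset ℕ}

lemma succ_mem_recolour (hA : RowData n k l1 l2 x A) (h1 : x (n + 1) = 1) (h2 : x (n + 2) = 1) :
    n + 1 ∈ recolour n x A := by
  have h3 : x (n + 1 + 1) ≠ 2 := by show x (n + 2) ≠ 2; omega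
  rw [hA.mem_recolour, runEnd_of_ne h3]
  exact Or.inr ⟨h1, hA.top_mem h2⟩

lemma succ_succ_notMem_recolour (hA : RowData n k l1 l2 x A) (h2 : x (n + 2) = 1) :
    n + 2 ∉ recolour n x A := by
  have h3 : x (n + 2 + 1) ≠ 2 := by rw [hA.top (by omega)]; omega
  rw [hA.mem_recolour, runEnd_of_ne h3]
  rintro (h | ⟨-, h⟩)
  · omega
  · have := hA.mem_le _ h; omega

/-- If `n + 1` and `n + 2` are single, the height below `n + 1` already equals the final one. -/
lemma height_before (hA : RowData n k l1 l2 x A) (hk : k ≤ 1) (h1 : x (n + 1) = 1)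
    (h2 : x (n + 2) = 1) : height x (recolour n x A) (n + 1) = l1 - l2 := by
  have h := hA.height_recolour_top hk
  rw [height_succ, height_succ, if_pos (hA.succ_mem_recolour h1 h2),
    if_neg (hA.succ_succ_notMem_recolour h2), h1, h2] at h
  push_cast at h
  linarith

/-- With equally long rows, the last single value below `n + 1` exists because `1 < l1`, and it
is a down step, because the path returns to height zero right after it. -/
lemma findGreatest_spec (hA : RowData n k l1 l2 x A) (hk : k ≤ 1) (hl : l1 = l2) (hl1 : 1 < l1)
    (h1 : x (n + 1) = 1) (h2 : x (n + 2) = 1) :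
    x (Nat.findGreatest (fun s => x s = 1) n) = 1 ∧
      Nat.findGreatest (fun s => x s = 1) n ∉ recolour n x A := by
  have hex : ∃ s, s ≤ n ∧ x s = 1 := by
    by_contra hcon
    push Not at hcon
    have hz : ∀ v, v ≤ n → x v = 0 := by
      intro v
      induction v with
      | zero => intro _; exact hA.x_zero hk
      | succ v ih =>
        intro hv
        have a1 := ih (by omega)
        have a2 := hcon (v + 1) hv
        have a3 := hA.le_two hk (v + 1)
        have a4 : x (v + 1) ≠ 2 := fun h => by
          have := hA.mem_x _ (hA.mem_of_two h); omega
        omega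
    have hs := hA.sum
    rw [Finset.sum_range_succ, Finset.sum_range_succ, h1, h2, Finset.sum_eq_zero] at hs
    · omega
    · intro v hv
      exact hz v (by have := Finset.mem_range.1 hv; omega)
  obtain ⟨s, hs, hxs⟩ := hex
  set w := Nat.findGreatest (fun s => x s = 1) n with hw
  have hxw : x w = 1 := Nat.findGreatest_spec (P := fun s => x s = 1) hs hxs
  have hwn : w ≤ n := Nat.findGreatest_le n
  refine ⟨hxw, fun hmem => ?_⟩
  have hh := hA.height_before hk h1 h2
  have hc := height_congr (x := x) (C := recolour n x A) (a := w + 1) (n + 1) (by omega) (by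
    intro v hv1 hv2
    have hv : ¬ x v = 1 := Nat.findGreatest_is_greatest (P := fun s => x s = 1) hv1 (by omega)
    have hle := hA.le_two hk v
    by_cases h : x v = 2
    · rw [if_pos ((hA.mem_recolour v).2 (Or.inl h)), h]; norm_num
    · have h0 : x v = 0 := by omega
      rw [if_neg (by rw [hA.mem_recolour]; omega), h0]; norm_num)
  have hn := hA.height_recolour_nonneg hk w
  rw [hh, height_succ, if_pos hmem, hxw, hl] at hc
  push_cast at hc
  linarith

lemma swapTarget_spec (hA : RowData n k l1 l2 x A) (hk : k ≤ 1) (hl21 : l2 ≤ l1) (hl1 : 1 < l1)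
    (h1 : x (n + 1) = 1) (h2 : x (n + 2) = 1) :
    x (swapTarget n l1 l2 x) = 1 ∧ swapTarget n l1 l2 x ∉ recolour n x A := by
  unfold swapTarget
  split_ifs with h
  · exact ⟨h2, hA.succ_succ_notMem_recolour h2⟩
  · exact hA.findGreatest_spec hk (by omega) hl1 h1 h2

lemma toCol_colData (hA : RowData n k l1 l2 x A) (hk : k ≤ 1) (hl21 : l2 ≤ l1) (hl1 : 1 < l1) :
    ColData n k l1 l2 x (toCol n l1 l2 x A) := by
  have hlow' : x (2 - k) ≤ 1 := by
    have hb := hA.bd (1 - k)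
    have e : 1 - k + 1 = 2 - k := by omega
    have hn : 1 - k ∉ A := fun h => by
      have := hA.mem_x _ h; have := hA.low (1 - k) (by omega); omega
    rw [e, if_neg hn] at hb
    split_ifs at hb <;> omega
  have htp : x (n + 2) = 1 → 1 ≤ x (n + 1) := fun h => hA.mem_x _ (hA.top_mem h)
  have hpred : ∀ v, x (v + 1) = 2 → 1 ≤ x v := fun v h => hA.mem_x _ (hA.mem_of_two h)
  have hmemx : ∀ v ∈ recolour n x A, 1 ≤ x v := fun v hv => by
    rw [hA.mem_recolour] at hv; omega
  have hnn := hA.height_recolour_nonneg hk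
  by_cases hc : x (n + 1) = 1 ∧ x (n + 2) = 1
  · obtain ⟨h1, h2⟩ := hc
    obtain ⟨hw1, hw2⟩ := hA.swapTarget_spec hk hl21 hl1 h1 h2
    have hmem := hA.succ_mem_recolour h1 h2
    have hne : swapTarget n l1 l2 x ≠ n + 1 := fun h => hw2 (h ▸ hmem)
    have e : toCol n l1 l2 x A =
        insert (swapTarget n l1 l2 x) ((recolour n x A).erase (n + 1)) := if_pos ⟨h1, h2⟩
    have hnot : n + 1 ∉ toCol n l1 l2 x A := by
      rw [e]; simp [hne.symm]
    refine ⟨?_, ?_, hA.low, hlow', hA.le_two hk, ?_, hpred, fun v => hA.top, hA.top', htp,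
      hA.sum, ?_, fun _ _ h => absurd h hnot⟩
    · intro v hv
      rw [e, Finset.mem_insert, Finset.mem_erase] at hv
      rcases hv with rfl | hv
      · omega
      · exact hmemx v hv.2
    · rw [e, Finset.card_insert_of_notMem (by simp [hw2]), Finset.card_erase_of_mem hmem,
        hA.card_recolour hk]
      omega
    · intro v hv
      rw [e, Finset.mem_insert, Finset.mem_erase]
      refine Or.inr ⟨?_, (hA.mem_recolour v).2 (Or.inl hv)⟩
      rintro rfl; omega
    · intro t
      rw [e, height_swap hmem hw2]
      have hb := hA.height_before hk h1 h2
      have htn := hnn t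
      by_cases ht : n + 1 < t
      · rw [if_pos ht]
        by_cases ht2 : swapTarget n l1 l2 x < t
        · rw [if_pos ht2]; linarith
        · -- here the target is `n + 2` and `t = n + 2`
          have hlt : l2 < l1 := by
            by_contra h
            apply ht2
            unfold swapTarget
            rw [if_neg h]
            exact lt_of_le_of_lt (Nat.findGreatest_le n) (by omega)
          have ht3 : t = n + 1 + 1 := by
            unfold swapTarget at ht2
            rw [if_pos hlt] at ht2
            omega
          rw [if_neg ht2, ht3, height_succ, hb, if_pos hmem, h1]
          push_cast
          have : (l2 : ℤ) < l1 := by exact_mod_cast hlt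
          linarith
      · rw [if_neg ht]
        split_ifs <;> linarith
  · have e : toCol n l1 l2 x A = recolour n x A := if_neg hc
    rw [e]
    exact ⟨hmemx, hA.card_recolour hk, hA.low, hlow', hA.le_two hk,
      fun v hv => (hA.mem_recolour v).2 (Or.inl hv), hpred, fun v => hA.top, hA.top', htp,
      hA.sum, hnn, fun h1 h2 => absurd ⟨h1, h2⟩ hc⟩

lemma toCol_inj {A' : Finset ℕ} (hA : RowData n k l1 l2 x A) (hA' : RowData n k l1 l2 x A')
    (hk : k ≤ 1) (hl21 : l2 ≤ l1) (hl1 : 1 < l1) (h : toCol n l1 l2 x A = toCol n l1 l2 x A') :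
    A = A' := by
  apply hA.recolour_inj hA' hk
  unfold toCol at h
  split_ifs at h with hc
  · obtain ⟨h1, h2⟩ := hc
    have hw := (hA.swapTarget_spec hk hl21 hl1 h1 h2).2
    have hw' := (hA'.swapTarget_spec hk hl21 hl1 h1 h2).2
    have hm := hA.succ_mem_recolour h1 h2
    have hm' := hA'.succ_mem_recolour h1 h2
    have h3 := congrArg (fun s => s.erase (swapTarget n l1 l2 x)) h
    rw [Finset.erase_insert (by simp [hw]), Finset.erase_insert (by simp [hw'])] at h3
    rw [← Finset.insert_erase hm, h3, Finset.insert_erase hm']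
  · exact h

end RowData

/-! ### The staircase part of a filling -/

/-- `T` restricts to the filling of `Δ_n` whose columns read `1, 2, 3, …` from the top. -/
def IsStd (n k : ℕ) (T : ℕ × ℕ → ℕ) : Prop :=
  ∀ p ∈ staircaseCells n k, T p = p.1 + p.2 + 2 - k - n

lemma mem_staircase {n k i j : ℕ} :
    (i, j) ∈ staircaseCells n k ↔ i < n ∧ k + n - 1 - i ≤ j ∧ j < n + k := Iff.rfl

lemma mem_SBF_of_staircase {lam : ℕ → ℕ} {n k : ℕ} {p : ℕ × ℕ} (h : p ∈ staircaseCells n k) :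
    p ∈ SBF lam k n := Or.inl h

lemma mem_SBF_of_lt {lam : ℕ → ℕ} {n k : ℕ} {p : ℕ × ℕ} (h : p ∈ SBF lam k n) (hp : p.1 < n) :
    p ∈ staircaseCells n k := by
  rcases h with h | h
  · exact h
  · exact absurd h.1 (by omega)

lemma staircase_count {n k : ℕ} {T : ℕ × ℕ → ℕ} (hT : IsStd n k T) {v : ℕ} (hv : 1 ≤ v) :
    {p | p ∈ staircaseCells n k ∧ T p = v} =
      ↑((Finset.Ico (v - 1) n).image (fun i => (i, k + n + v - 2 - i))) := by
  ext ⟨i, j⟩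
  simp only [Finset.coe_image, Set.mem_image, Finset.coe_Ico, Set.mem_Ico, Prod.mk.injEq,
    Set.mem_ofPred_eq]
  constructor
  · rintro ⟨h1, h2⟩
    rw [hT _ h1] at h2
    rw [mem_staircase] at h1
    simp only at h2
    exact ⟨i, by omega, rfl, by omega⟩
  · rintro ⟨i', h1, rfl, rfl⟩
    have hm : (i', k + n + v - 2 - i') ∈ staircaseCells n k := by
      rw [mem_staircase]; omega
    refine ⟨hm, ?_⟩
    rw [hT _ hm]
    simp only
    omega

/-- Counting entries `v` among the cells selected by `R`, when `R` holds on the whole staircase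
and the foundation is the disjoint union of two lines enumerated by `f` and `g`. -/
lemma count_total {lam : ℕ → ℕ} {n k l1 l2 : ℕ} {T : ℕ × ℕ → ℕ} {f g : ℕ → ℕ × ℕ}
    (hfound : ∀ p, p ∈ foundationCells lam k n ↔ (∃ j < l1, p = f j) ∨ (∃ j < l2, p = g j))
    (hf : Function.Injective f) (hg : Function.Injective g) (hfg : ∀ i j, f i ≠ g j)
    (hT : IsStd n k T) (R : ℕ × ℕ → Prop) [DecidablePred R]
    (hR : ∀ p ∈ staircaseCells n k, R p) {v : ℕ} (hv : 1 ≤ v) :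
    {p | p ∈ SBF lam k n ∧ R p ∧ T p = v}.ncard = (n + 1 - v) +
      (((Finset.range l1).filter (fun j => R (f j) ∧ T (f j) = v)).card +
       ((Finset.range l2).filter (fun j => R (g j) ∧ T (g j) = v)).card) := by
  set F1 := ((Finset.range l1).filter (fun j => R (f j) ∧ T (f j) = v)).image f with hF1
  set F2 := ((Finset.range l2).filter (fun j => R (g j) ∧ T (g j) = v)).image g with hF2
  set F0 := (Finset.Ico (v - 1) n).image (fun i => (i, k + n + v - 2 - i)) with hF0
  have hs := staircase_count hT hv
  have hfoundF : ∀ p, (p ∈ foundationCells lam k n ∧ R p ∧ T p = v) ↔ p ∈ F1 ∪ F2 := by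
    intro p
    rw [hfound]
    simp only [hF1, hF2, Finset.mem_union, Finset.mem_image, Finset.mem_filter, Finset.mem_range]
    constructor
    · rintro ⟨⟨j, hj, rfl⟩ | ⟨j, hj, rfl⟩, h⟩
      · exact Or.inl ⟨j, ⟨hj, h⟩, rfl⟩
      · exact Or.inr ⟨j, ⟨hj, h⟩, rfl⟩
    · rintro (⟨j, ⟨hj, h⟩, rfl⟩ | ⟨j, ⟨hj, h⟩, rfl⟩)
      · exact ⟨Or.inl ⟨j, hj, rfl⟩, h⟩
      · exact ⟨Or.inr ⟨j, hj, rfl⟩, h⟩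
  have hsF : ∀ p, (p ∈ staircaseCells n k ∧ T p = v) ↔ p ∈ F0 := fun p => by
    have := Set.ext_iff.1 hs p
    rwa [Finset.mem_coe] at this
  have hset : {p | p ∈ SBF lam k n ∧ R p ∧ T p = v} = ↑(F0 ∪ (F1 ∪ F2)) := by
    ext p
    rw [Finset.mem_coe, Finset.mem_union, ← hsF, ← hfoundF]
    constructor
    · rintro ⟨h | h, h2⟩
      · exact Or.inl ⟨h, h2.2⟩
      · exact Or.inr ⟨h, h2⟩
    · rintro (⟨h, h2⟩ | ⟨h, h2⟩)
      · exact ⟨Or.inl h, hR p h, h2⟩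
      · exact ⟨Or.inr h, h2⟩
  have hd1 : Disjoint F0 (F1 ∪ F2) := by
    rw [Finset.disjoint_left]
    intro p h1 h2
    rw [← hsF] at h1
    rw [← hfoundF] at h2
    have := h1.1.1
    have := h2.1.1
    omega
  have hd2 : Disjoint F1 F2 := by
    rw [Finset.disjoint_left]
    intro p h1 h2
    rw [hF1, Finset.mem_image] at h1
    rw [hF2, Finset.mem_image] at h2
    obtain ⟨i, -, rfl⟩ := h1
    obtain ⟨j, -, h⟩ := h2
    exact hfg i j h.symm
  rw [hset, Set.ncard_coe_finset, Finset.card_union_of_disjoint hd1,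
    Finset.card_union_of_disjoint hd2, hF1, hF2, Finset.card_image_of_injective _ hf,
    Finset.card_image_of_injective _ hg, hF0, Finset.card_image_of_injective, Nat.card_Ico]
  · omega
  · intro a b h
    exact (Prod.mk.inj h).1

lemma staircase_finite (n k : ℕ) : (staircaseCells n k).Finite :=
  ((Set.finite_Iio n).prod (Set.finite_Iio (n + k))).subset fun _ hp => ⟨hp.1, hp.2.2⟩

lemma SBF_finite {lam : ℕ → ℕ} {n k l1 l2 : ℕ} {f g : ℕ → ℕ × ℕ}
    (hfound : ∀ p, p ∈ foundationCells lam k n ↔ (∃ j < l1, p = f j) ∨ (∃ j < l2, p = g j)) :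
    (SBF lam k n).Finite := by
  refine (staircase_finite n k).union (Set.Finite.subset
    (((Finset.range l1).image f ∪ (Finset.range l2).image g).finite_toSet) ?_)
  intro p hp
  rw [hfound] at hp
  simp only [Finset.coe_union, Finset.coe_image, Set.mem_union, Set.mem_image, Finset.mem_coe,
    Finset.mem_range]
  rcases hp with ⟨j, hj, rfl⟩ | ⟨j, hj, rfl⟩
  · exact Or.inl ⟨j, hj, rfl⟩
  · exact Or.inr ⟨j, hj, rfl⟩

lemma staircase_lower {lam : ℕ → ℕ} {n k : ℕ} {T : ℕ × ℕ → ℕ} (hT : IsSSYT (SBF lam k n) T) :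
    ∀ i j, (i, j) ∈ staircaseCells n k → i + j + 2 - k - n ≤ T (i, j) := by
  intro i
  induction i with
  | zero =>
    intro j hj
    have h0 := hT.1 _ (mem_SBF_of_staircase hj)
    rw [mem_staircase] at hj
    omega
  | succ i ih =>
    intro j hj
    have h0 := hT.1 _ (mem_SBF_of_staircase hj)
    by_cases hm : (i, j) ∈ staircaseCells n k
    · have h1 := ih j hm
      have h2 := hT.2.2.2 i (i + 1) j (by omega) (mem_SBF_of_staircase hm)
        (mem_SBF_of_staircase hj)
      omega
    · rw [mem_staircase] at hj hm
      omega

/-- In a Littlewood-Richardson filling the staircase part is forced: reading row `i` from the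
right, an entry exceeding the lower bound given by column strictness would break the lattice
condition at that very cell. -/
lemma staircase_forced {lam : ℕ → ℕ} {n k : ℕ} {T : ℕ × ℕ → ℕ} (hfin : (SBF lam k n).Finite)
    (hT : IsSSYT (SBF lam k n) T) (hL : IsLattice (SBF lam k n) T) : IsStd n k T := by
  have key : ∀ i, ∀ d j, j + d + 1 = n + k → (i, j) ∈ staircaseCells n k →
      T (i, j) = i + j + 2 - k - n := by
    intro i
    induction i using Nat.strong_induction_on with
    | _ i ihi =>
    intro d
    induction d using Nat.strong_induction_on with
    | _ d ihd =>
    intro j hjd hj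
    have hlow := staircase_lower hT i j hj
    have hjm := mem_staircase.1 hj
    refine le_antisymm ?_ hlow
    by_contra hcon
    push Not at hcon
    have hlat := hL (i, j) (mem_SBF_of_staircase hj)
    -- every cell read strictly before `(i, j)` is a staircase cell with the expected entry
    have hprev : ∀ p ∈ readUpTo (SBF lam k n) (i, j), p ≠ (i, j) →
        p ∈ staircaseCells n k ∧ T p = p.1 + p.2 + 2 - k - n := by
      rintro ⟨a, b⟩ ⟨hp1, hp2⟩ hne
      simp only at hp2
      have hm := mem_SBF_of_lt hp1 (by simp only; omega)
      refine ⟨hm, ?_⟩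
      have hm' := mem_staircase.1 hm
      rcases hp2 with h | ⟨rfl, h⟩
      · exact ihi a h (n + k - 1 - b) b (by omega) hm
      · have : b ≠ j := fun h => hne (by rw [h])
        exact ihd (n + k - 1 - b) (by omega) b (by omega) hm
    have hq : (i, j) ∈ readUpTo (SBF lam k n) (i, j) :=
      ⟨mem_SBF_of_staircase hj, Or.inr ⟨rfl, le_rfl⟩⟩
    have hfinr : (readUpTo (SBF lam k n) (i, j)).Finite := hfin.subset (fun p hp => hp.1)
    rcases Nat.eq_zero_or_pos d with rfl | hd
    · have h := hlat (T (i, j) - 1) (by omega)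
      have e : T (i, j) - 1 + 1 = T (i, j) := by omega
      rw [e] at h
      have h0 : {p ∈ readUpTo (SBF lam k n) (i, j) | T p = T (i, j) - 1} = ∅ := by
        rw [Set.eq_empty_iff_forall_notMem]
        rintro p ⟨hp1, hp2⟩
        by_cases hne : p = (i, j)
        · rw [hne] at hp2; omega
        · obtain ⟨hs, hp3⟩ := hprev p hp1 hne
          have h4 := hp1.2
          have hs' := mem_staircase.1 hs
          simp only at h4
          rcases h4 with h4 | ⟨h4, h5⟩
          · omega
          · exact hne (Prod.ext h4 (by simp only; omega))
      have h1 : 0 < {p ∈ readUpTo (SBF lam k n) (i, j) | T p = T (i, j)}.ncard := by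
        rw [Set.ncard_pos (hfinr.subset fun p hp => hp.1)]
        exact ⟨(i, j), hq, rfl⟩
      rw [h0, Set.ncard_empty] at h
      omega
    · have hj1 : (i, j + 1) ∈ staircaseCells n k := by rw [mem_staircase]; omega
      have hr := hT.2.2.1 i j (j + 1) (by omega) (mem_SBF_of_staircase hj)
        (mem_SBF_of_staircase hj1)
      rw [ihd (d - 1) (by omega) (j + 1) (by omega) hj1] at hr
      set e := i + j + 2 - k - n with he
      have hTe : T (i, j) = e + 1 := by omega
      have h := hlat e (by omega)
      have hfe : {p ∈ readUpTo (SBF lam k n) (i, j) | T p = e + 1}.Finite :=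
        hfinr.subset fun p hp => hp.1
      have hlt : {p ∈ readUpTo (SBF lam k n) (i, j) | T p = e}.ncard ≤
          ({p ∈ readUpTo (SBF lam k n) (i, j) | T p = e + 1} \ {(i, j)}).ncard := by
        apply Set.ncard_le_ncard_of_injOn (fun p => (p.1 + 1, p.2)) _ _ (hfe.subset Set.sdiff_subset)
        · rintro ⟨a, b⟩ ⟨hp1, hp2⟩
          have hne : (a, b) ≠ (i, j) := fun h => by rw [h] at hp2; omega
          obtain ⟨hs, hp3⟩ := hprev _ hp1 hne
          have hs' := mem_staircase.1 hs
          have h4 := hp1.2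
          simp only at h4 hp3
          have hab : a < i := by
            rcases h4 with h4 | ⟨h4, h5⟩
            · exact h4
            · exfalso; apply hne; rw [h4, Prod.mk.injEq]; exact ⟨rfl, by omega⟩
          have hne2 : (a + 1, b) ≠ (i, j) := fun h => by
            rw [Prod.mk.injEq] at h; omega
          have hm2 : (a + 1, b) ∈ staircaseCells n k := by rw [mem_staircase]; omega
          have hr2 : (a + 1, b) ∈ readUpTo (SBF lam k n) (i, j) :=
            ⟨mem_SBF_of_staircase hm2, by simp only; omega⟩
          have hv := (hprev _ hr2 hne2).2
          simp only at hv
          exact ⟨⟨hr2, by simp only; omega⟩, hne2⟩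
        · rintro ⟨a, b⟩ - ⟨a', b'⟩ - h
          simp only [Prod.mk.injEq] at h ⊢
          omega
      have hmem : (i, j) ∈ {p ∈ readUpTo (SBF lam k n) (i, j) | T p = e + 1} := ⟨hq, hTe⟩
      have := Set.ncard_sdiff_singleton_lt_of_mem hmem hfe
      omega
  rintro ⟨i, j⟩ hp
  have := mem_staircase.1 hp
  exact key i (n + k - 1 - j) j (by omega) hp

/-- The standard filling of the staircase is lattice: the entry above `v + 1` is `v`. -/
lemma staircase_lattice {lam : ℕ → ℕ} {n k : ℕ} {T : ℕ × ℕ → ℕ} (hfin : (SBF lam k n).Finite)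
    (hT : IsStd n k T) {q : ℕ × ℕ} (hq : q.1 < n) {v : ℕ} (hv : 1 ≤ v) :
    ({p ∈ readUpTo (SBF lam k n) q | T p = v + 1}).ncard ≤
      ({p ∈ readUpTo (SBF lam k n) q | T p = v}).ncard := by
  apply Set.ncard_le_ncard_of_injOn (fun p => (p.1 - 1, p.2)) _ _
    (hfin.subset fun p hp => hp.1.1)
  · rintro ⟨a, b⟩ ⟨⟨hp1, hp2⟩, hp3⟩
    simp only at hp2
    have hm := mem_SBF_of_lt hp1 (by simp only; omega)
    rw [hT _ hm] at hp3
    simp only at hp3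
    have hm' := mem_staircase.1 hm
    have hm2 : (a - 1, b) ∈ staircaseCells n k := by rw [mem_staircase]; omega
    refine ⟨⟨mem_SBF_of_staircase hm2, ?_⟩, ?_⟩
    · simp only; omega
    · rw [hT _ hm2]; simp only; omega
  · rintro ⟨a, b⟩ ⟨⟨hp1, hp2⟩, hp3⟩ ⟨a', b'⟩ ⟨⟨hp1', hp2'⟩, hp3'⟩ h
    simp only at hp2 hp2'
    have hm := mem_SBF_of_lt hp1 (by simp only; omega)
    have hm' := mem_SBF_of_lt hp1' (by simp only; omega)
    rw [hT _ hm] at hp3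
    rw [hT _ hm'] at hp3'
    simp only [Prod.mk.injEq] at h hp3 hp3' ⊢
    have := mem_staircase.1 hm
    have := mem_staircase.1 hm'
    omega

/-! ### Counting along lines -/

/-- `c 0, …, c (l-1)` takes the value `v` this many times. -/
def fib (c : ℕ → ℕ) (l v : ℕ) : ℕ := ((Finset.range l).filter (fun j => c j = v)).card

lemma sum_fib (c : ℕ → ℕ) (l t : ℕ) :
    ∑ v ∈ Finset.range t, fib c l v = ((Finset.range l).filter (fun j => c j < t)).card := by
  rw [Finset.card_eq_sum_card_fiberwise (f := c) (t := Finset.range t)]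
  · apply Finset.sum_congr rfl
    intro v hv
    unfold fib
    congr 1
    ext j
    simp only [Finset.mem_filter, Finset.mem_range] at hv ⊢
    constructor
    · rintro ⟨h1, h2⟩; exact ⟨⟨h1, by omega⟩, h2⟩
    · rintro ⟨⟨h1, -⟩, h2⟩; exact ⟨h1, h2⟩
  · intro j hj
    simpa using (Finset.mem_filter.1 (Finset.mem_coe.1 hj)).2

lemma fib_pos {c : ℕ → ℕ} {l j : ℕ} (hj : j < l) : 1 ≤ fib c l (c j) :=
  Finset.card_pos.2 ⟨j, by simp [hj]⟩

lemma fib_eq_zero {c : ℕ → ℕ} {l v : ℕ} (h : ∀ j < l, c j ≠ v) : fib c l v = 0 := by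
  unfold fib
  rw [Finset.card_eq_zero, Finset.filter_eq_empty_iff]
  intro j hj
  exact h j (Finset.mem_range.1 hj)

lemma fib_of_inj {c : ℕ → ℕ} {l : ℕ} (hc : ∀ i j, i < j → j < l → c i < c j) (v : ℕ) :
    fib c l v = if v ∈ (Finset.range l).image c then 1 else 0 := by
  split_ifs with h
  · rw [Finset.mem_image] at h
    obtain ⟨j, hj, rfl⟩ := h
    rw [Finset.mem_range] at hj
    unfold fib
    rw [Finset.card_eq_one]
    refine ⟨j, ?_⟩
    ext i
    simp only [Finset.mem_filter, Finset.mem_range, Finset.mem_singleton]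
    constructor
    · rintro ⟨h1, h2⟩
      rcases lt_trichotomy i j with h | h | h
      · have := hc i j h hj; omega
      · exact h
      · have := hc j i h h1; omega
    · rintro rfl; exact ⟨hj, rfl⟩
  · apply fib_eq_zero
    intro j hj he
    exact h (Finset.mem_image.2 ⟨j, Finset.mem_range.2 hj, he⟩)

lemma le_of_fib_eq {c c' : ℕ → ℕ} {l : ℕ} (hc : ∀ i j, i ≤ j → j < l → c i ≤ c j)
    (hc' : ∀ i j, i ≤ j → j < l → c' i ≤ c' j) (h : ∀ v, fib c l v = fib c' l v) :
    ∀ j < l, c' j ≤ c j := by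
  intro j hj
  by_contra hcon
  push Not at hcon
  have e : ((Finset.range l).filter (fun i => c i < c j + 1)).card =
      ((Finset.range l).filter (fun i => c' i < c j + 1)).card := by
    rw [← sum_fib, ← sum_fib]
    exact Finset.sum_congr rfl (fun v _ => h v)
  have h1 : (Finset.range (j + 1)).card ≤
      ((Finset.range l).filter (fun i => c i < c j + 1)).card := by
    apply Finset.card_le_card
    intro i hi
    simp only [Finset.mem_filter, Finset.mem_range] at hi ⊢
    have := hc i j (by omega) hj
    omega
  have h2 : ((Finset.range l).filter (fun i => c' i < c j + 1)).card ≤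
      (Finset.range j).card := by
    apply Finset.card_le_card
    intro i hi
    simp only [Finset.mem_filter, Finset.mem_range] at hi ⊢
    by_contra h3
    have := hc' j i (by omega) hi.1
    omega
  rw [Finset.card_range] at h1 h2
  omega

/-- A weakly increasing finite sequence is determined by the multiplicities of its values. -/
lemma eq_of_fib_eq {c c' : ℕ → ℕ} {l : ℕ} (hc : ∀ i j, i ≤ j → j < l → c i ≤ c j)
    (hc' : ∀ i j, i ≤ j → j < l → c' i ≤ c' j) (h : ∀ v, fib c l v = fib c' l v) :
    ∀ j < l, c j = c' j := fun j hj =>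
  le_antisymm (le_of_fib_eq hc' hc (fun v => (h v).symm) j hj) (le_of_fib_eq hc hc' h j hj)

/-- The number of entries `v` in the foundation of a filling with content `nu`: the staircase
contains `v` exactly `n + 1 - v` times, for `v ≥ 1`. -/
def foundContent (n : ℕ) (nu : ℕ → ℕ) (v : ℕ) : ℕ := if v = 0 then 0 else nu v - (n + 1 - v)

section Lines

variable {lam : ℕ → ℕ} {n k l1 l2 : ℕ} {T : ℕ × ℕ → ℕ} {f g : ℕ → ℕ × ℕ}

lemma content_eq
    (hfound : ∀ p, p ∈ foundationCells lam k n ↔ (∃ j < l1, p = f j) ∨ (∃ j < l2, p = g j))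
    (hf : Function.Injective f) (hg : Function.Injective g) (hfg : ∀ i j, f i ≠ g j)
    (hT : IsStd n k T) {v : ℕ} (hv : 1 ≤ v) :
    contentOf (SBF lam k n) T v =
      (n + 1 - v) + (fib (fun j => T (f j)) l1 v + fib (fun j => T (g j)) l2 v) := by
  have h := count_total hfound hf hg hfg hT (fun _ => True) (fun _ _ => trivial) hv
  simp only [true_and] at h
  exact h

/-- The number of entries `v` read up to a cell `q` below the staircase, in terms of the two lines
forming the foundation. -/
lemma read_eq
    (hfound : ∀ p, p ∈ foundationCells lam k n ↔ (∃ j < l1, p = f j) ∨ (∃ j < l2, p = g j))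
    (hf : Function.Injective f) (hg : Function.Injective g) (hfg : ∀ i j, f i ≠ g j)
    (hT : IsStd n k T) {q : ℕ × ℕ} (hq : n ≤ q.1) {v : ℕ} (hv : 1 ≤ v) :
    {p ∈ readUpTo (SBF lam k n) q | T p = v}.ncard = (n + 1 - v) +
      (((Finset.range l1).filter (fun j =>
          ((f j).1 < q.1 ∨ ((f j).1 = q.1 ∧ q.2 ≤ (f j).2)) ∧ T (f j) = v)).card +
       ((Finset.range l2).filter (fun j =>
          ((g j).1 < q.1 ∨ ((g j).1 = q.1 ∧ q.2 ≤ (g j).2)) ∧ T (g j) = v)).card) := by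
  rw [← count_total hfound hf hg hfg hT
    (fun p => p.1 < q.1 ∨ (p.1 = q.1 ∧ q.2 ≤ p.2)) (fun p hp => Or.inl (by
      have := hp.1; omega)) hv]
  congr 1
  ext p
  exact and_assoc

end Lines

/-! ### Fillings over the two-row foundation -/

lemma found_row {n k l1 l2 : ℕ} (hk : k ≤ 1) (p : ℕ × ℕ) :
    p ∈ foundationCells (twoRowFun l1 l2) k n ↔
      (∃ j < l1, p = (n, j)) ∨ (∃ j < l2, p = (n + 1, j)) := by
  obtain ⟨i, j⟩ := p
  have e : (i, j) ∈ foundationCells (twoRowFun l1 l2) k n ↔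
    n ≤ i ∧ k - 1 - (i - n) ≤ j ∧ j < twoRowFun l1 l2 (i - n) := Iff.rfl
  rw [e]
  unfold twoRowFun
  constructor
  · rintro ⟨h1, -, h3⟩
    split_ifs at h3 with h4 h5
    · exact Or.inl ⟨j, h3, by rw [Prod.mk.injEq]; omega⟩
    · exact Or.inr ⟨j, h3, by rw [Prod.mk.injEq]; omega⟩
    · omega
  · rintro (⟨j', h, he⟩ | ⟨j', h, he⟩)
    · rw [Prod.mk.injEq] at he
      obtain ⟨rfl, rfl⟩ := he
      refine ⟨le_rfl, by omega, ?_⟩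
      rw [if_pos (by omega)]; exact h
    · rw [Prod.mk.injEq] at he
      obtain ⟨rfl, rfl⟩ := he
      refine ⟨by omega, by omega, ?_⟩
      rw [if_neg (by omega), if_pos (by omega)]; exact h

/-- The fillings counted by `LRcount`. -/
def LRset (D : Set (ℕ × ℕ)) (nu : ℕ → ℕ) : Set (ℕ × ℕ → ℕ) :=
  {T | IsSSYT D T ∧ IsLattice D T ∧ ∀ v, 1 ≤ v → contentOf D T v = nu v}

/-- What is used of a Littlewood-Richardson filling over a two-row foundation, in terms of the
rows `a` and `b` of the foundation. -/
structure RowFilling (n k l1 l2 : ℕ) (nu : ℕ → ℕ) (T : ℕ × ℕ → ℕ) : Prop where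
  std : IsStd n k T
  a_low : ∀ j < l1, 2 - k ≤ T (n, j)
  a_le : ∀ j < l1, T (n, j) ≤ n + 1
  a_strict : ∀ i j, i < j → j < l1 → T (n, i) < T (n, j)
  b_mono : ∀ i j, i ≤ j → j < l2 → T (n + 1, i) ≤ T (n + 1, j)
  a_lt_b : ∀ j < l2, T (n, j) < T (n + 1, j)
  nu_le : ∀ v, 1 ≤ v → n + 1 - v ≤ nu v
  x_eq : ∀ v, foundContent n nu v =
    fib (fun j => T (n, j)) l1 v + fib (fun j => T (n + 1, j)) l2 v
  bd : ∀ v, 1 ≤ v → ∀ j < l2, T (n + 1, j) = v + 1 →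
    foundContent n nu (v + 1) ≤ (if v ≤ n then 1 else 0) + fib (fun j => T (n, j)) l1 v

lemma rowFilling_of_LR {n k l1 l2 : ℕ} {nu : ℕ → ℕ} {T : ℕ × ℕ → ℕ}
    (hn : 1 ≤ n) (hk : k ≤ 1) (hl21 : l2 ≤ l1) (hl1n : l1 ≤ k + n)
    (h : T ∈ LRset (SBF (twoRowFun l1 l2) k n) nu) : RowFilling n k l1 l2 nu T := by
  obtain ⟨hT, hL, hc⟩ := h
  have hfound := found_row (n := n) (l1 := l1) (l2 := l2) hk
  have hf : Function.Injective (fun j : ℕ => (n, j)) := fun a b h => (Prod.mk.inj h).2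
  have hg : Function.Injective (fun j : ℕ => (n + 1, j)) := fun a b h => (Prod.mk.inj h).2
  have hfg : ∀ i j : ℕ, (fun j : ℕ => (n, j)) i ≠ (fun j : ℕ => (n + 1, j)) j := fun i j h => by
    have := (Prod.mk.inj h).1; omega
  have hfin := SBF_finite hfound
  have hstd := staircase_forced hfin hT hL
  have hma : ∀ j < l1, (n, j) ∈ SBF (twoRowFun l1 l2) k n := fun j hj =>
    Or.inr ((hfound _).2 (Or.inl ⟨j, hj, rfl⟩))
  have hmb : ∀ j < l2, (n + 1, j) ∈ SBF (twoRowFun l1 l2) k n := fun j hj =>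
    Or.inr ((hfound _).2 (Or.inr ⟨j, hj, rfl⟩))
  have hmono : ∀ i j, i ≤ j → j < l1 → T (n, i) ≤ T (n, j) := fun i j hij hj =>
    hT.2.2.1 n i j hij (hma i (by omega)) (hma j hj)
  have hbmono : ∀ i j, i ≤ j → j < l2 → T (n + 1, i) ≤ T (n + 1, j) := fun i j hij hj =>
    hT.2.2.1 (n + 1) i j hij (hmb i (by omega)) (hmb j hj)
  have hab : ∀ j < l2, T (n, j) < T (n + 1, j) := fun j hj =>
    hT.2.2.2 n (n + 1) j (by omega) (hma j (by omega)) (hmb j hj)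
  have htwo : ∀ j < l1, k ≤ j → 2 ≤ T (n, j) := by
    intro j hj hkj
    have hs : (n - 1, j) ∈ staircaseCells n k := by rw [mem_staircase]; omega
    have h1 := hT.2.2.2 (n - 1) n j (by omega) (mem_SBF_of_staircase hs) (hma j hj)
    have h2 := hT.1 _ (mem_SBF_of_staircase (lam := twoRowFun l1 l2) hs)
    omega
  have hlow : ∀ j < l1, 2 - k ≤ T (n, j) := by
    intro j hj
    by_cases hkj : k ≤ j
    · have := htwo j hj hkj; omega
    · have := hT.1 _ (hma j hj); omega
  -- the lattice condition at the cell `(n, j)` for the values `w - 1` and `w`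
  have hfirst : ∀ j < l1, ∀ w, 2 ≤ w → T (n, j) = w → (n + 1 - w) +
      ((Finset.range l1).filter (fun i => j ≤ i ∧ T (n, i) = w)).card ≤ n + 2 - w := by
    intro j hj w hw hwj
    have h := hL (n, j) (hma j hj) (w - 1) (by omega)
    have e : w - 1 + 1 = w := by omega
    rw [e, read_eq hfound hf hg hfg hstd (by simp) (by omega),
      read_eq hfound hf hg hfg hstd (by simp) (by omega)] at h
    simp only [lt_irrefl, true_and, false_or, Nat.not_succ_lt_self, Nat.succ_ne_self,
      false_and, Finset.filter_false, Finset.card_empty] at h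
    have hz : ((Finset.range l1).filter (fun i => j ≤ i ∧ T (n, i) = w - 1)).card = 0 := by
      rw [Finset.card_eq_zero, Finset.filter_eq_empty_iff]
      rintro i hi ⟨h1, h2⟩
      have := hmono j i h1 (Finset.mem_range.1 hi)
      omega
    simp only [hz] at h
    omega
  have hstrict : ∀ i j, i < j → j < l1 → T (n, i) < T (n, j) := by
    intro i j hij hj
    refine lt_of_le_of_ne (hmono i j hij.le hj) (fun he => ?_)
    have h2 := htwo j hj (by omega)
    have h := hfirst i (by omega) (T (n, j)) h2 he
    have hsub : ({i, j} : Finset ℕ).card ≤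
        ((Finset.range l1).filter (fun i' => i ≤ i' ∧ T (n, i') = T (n, j))).card := by
      apply Finset.card_le_card
      intro m hm
      simp only [Finset.mem_insert, Finset.mem_singleton] at hm
      simp only [Finset.mem_filter, Finset.mem_range]
      rcases hm with rfl | rfl
      · exact ⟨by omega, le_rfl, he⟩
      · exact ⟨hj, hij.le, rfl⟩
    rw [Finset.card_pair (by omega)] at hsub
    omega
  have hle : ∀ j < l1, T (n, j) ≤ n + 1 := by
    intro j hj
    by_contra hcon
    have h := hfirst j hj (T (n, j)) (by omega) rfl
    have hpos : 0 < ((Finset.range l1).filter (fun i' => j ≤ i' ∧ T (n, i') = T (n, j))).card :=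
      Finset.card_pos.2 ⟨j, by simp [hj]⟩
    omega
  have hx : ∀ v, foundContent n nu v =
      fib (fun j => T (n, j)) l1 v + fib (fun j => T (n + 1, j)) l2 v := by
    intro v
    unfold foundContent
    split_ifs with hv
    · subst hv
      rw [fib_eq_zero, fib_eq_zero]
      · intro j hj
        have := hab j hj; omega
      · intro j hj
        have := hlow j hj; omega
    · rw [← hc v (by omega), content_eq hfound hf hg hfg hstd (by omega)]
      omega
  refine ⟨hstd, hlow, hle, hstrict, hbmono, hab, ?_, hx, ?_⟩
  · intro v hv
    rw [← hc v hv, content_eq hfound hf hg hfg hstd hv]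
    omega
  intro v hv j₀ hj₀ hbj₀
  -- read up to the leftmost entry `v + 1` of the second row
  have hex : ∃ j, j < l2 ∧ T (n + 1, j) = v + 1 := ⟨j₀, hj₀, hbj₀⟩
  classical
  obtain ⟨hj, hbj⟩ := Nat.find_spec hex
  have hmin : ∀ i, i < l2 → T (n + 1, i) = v + 1 → Nat.find hex ≤ i :=
    fun i h1 h2 => Nat.find_min' hex ⟨h1, h2⟩
  generalize Nat.find hex = j at hj hbj hmin
  have h := hL (n + 1, j) (hmb j hj) v hv
  rw [read_eq hfound hf hg hfg hstd (by simp) (by omega),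
    read_eq hfound hf hg hfg hstd (by simp) (by omega)] at h
  simp only [lt_irrefl, true_and, false_or, Nat.lt_succ_self, true_or] at h
  have hz : ((Finset.range l2).filter (fun i => j ≤ i ∧ T (n + 1, i) = v)).card = 0 := by
    rw [Finset.card_eq_zero, Finset.filter_eq_empty_iff]
    rintro i hi ⟨h1, h2⟩
    have := hbmono j i h1 (Finset.mem_range.1 hi)
    omega
  have hall : ((Finset.range l2).filter (fun i => j ≤ i ∧ T (n + 1, i) = v + 1)).card =
      fib (fun j => T (n + 1, j)) l2 (v + 1) := by
    unfold fib
    congr 1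
    ext i
    simp only [Finset.mem_filter, Finset.mem_range]
    exact ⟨fun h => ⟨h.1, h.2.2⟩, fun h => ⟨h.1, hmin i h.1 h.2, h.2⟩⟩
  simp only [hz, hall] at h
  rw [hx (v + 1)]
  change n + 1 - (v + 1) + (fib (fun j => T (n, j)) l1 (v + 1) + _) ≤
    n + 1 - v + (fib (fun j => T (n, j)) l1 v + 0) at h
  split_ifs <;> omega

/-- The set of entries of the first row of the foundation. -/
def rowSet (n l1 : ℕ) (T : ℕ × ℕ → ℕ) : Finset ℕ := (Finset.range l1).image (fun j => T (n, j))

namespace RowFilling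

variable {n k l1 l2 : ℕ} {nu : ℕ → ℕ} {T : ℕ × ℕ → ℕ}

lemma fib_a (h : RowFilling n k l1 l2 nu T) (v : ℕ) :
    fib (fun j => T (n, j)) l1 v = if v ∈ rowSet n l1 T then 1 else 0 :=
  fib_of_inj h.a_strict v

lemma mem_rowSet {v : ℕ} : v ∈ rowSet n l1 T ↔ ∃ j < l1, T (n, j) = v := by
  simp [rowSet]

lemma rowData (h : RowFilling n k l1 l2 nu T) (hk : k ≤ 1) (hl21 : l2 ≤ l1) :
    RowData n k l1 l2 (foundContent n nu) (rowSet n l1 T) := by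
  have hmle : ∀ v ∈ rowSet n l1 T, v ≤ n + 1 := by
    intro v hv
    obtain ⟨j, hj, rfl⟩ := mem_rowSet.1 hv
    exact h.a_le j hj
  have hbd : ∀ v, foundContent n nu (v + 1) ≤
      (if v ≤ n then 1 else 0) + (if v ∈ rowSet n l1 T then 1 else 0) := by
    intro v
    by_cases hex : ∃ j, j < l2 ∧ T (n + 1, j) = v + 1
    · obtain ⟨j, hj, hjv⟩ := hex
      have h1 := h.a_lt_b j hj
      have h2 := h.a_low j (by omega)
      rw [← h.fib_a v]
      exact h.bd v (by omega) j hj hjv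
    · push Not at hex
      rw [h.x_eq, fib_eq_zero hex, h.fib_a]
      by_cases hv : v + 1 ∈ rowSet n l1 T
      · have := hmle _ hv
        rw [if_pos hv, if_pos (by omega)]
        omega
      · rw [if_neg hv]; omega
  have hble : ∀ j < l2, T (n + 1, j) < n + 3 := by
    intro j hj
    by_contra hcon
    have h1 := h.x_eq (T (n + 1, j))
    have h2 := fib_pos (c := fun j => T (n + 1, j)) hj
    have h3 := hbd (T (n + 1, j) - 1)
    have e : T (n + 1, j) - 1 + 1 = T (n + 1, j) := by omega
    have hnm : T (n + 1, j) - 1 ∉ rowSet n l1 T := fun hm => by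
      have := hmle _ hm; omega
    rw [e, if_neg hnm, if_neg (by omega)] at h3
    omega
  refine ⟨hmle, ?_, ?_, ?_, hbd, ?_, ?_⟩
  · intro v hv
    rw [h.x_eq, h.fib_a, if_pos hv]; omega
  · unfold rowSet
    rw [Finset.card_image_of_injOn, Finset.card_range]
    intro i hi j hj hij
    simp only [Finset.coe_range, Set.mem_Iio] at hi hj hij
    rcases lt_trichotomy i j with h1 | h1 | h1
    · have := h.a_strict i j h1 hj; omega
    · exact h1
    · have := h.a_strict j i h1 hi; omega
  · intro v hv
    rw [h.x_eq, fib_eq_zero, fib_eq_zero]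
    · intro j hj
      have := h.a_lt_b j hj
      have := h.a_low j (by omega)
      omega
    · intro j hj
      have := h.a_low j hj
      omega
  · rw [Finset.sum_congr rfl (fun v _ => h.x_eq v), Finset.sum_add_distrib, sum_fib, sum_fib,
      Finset.filter_true_of_mem, Finset.filter_true_of_mem, Finset.card_range, Finset.card_range]
    · intro j hj; exact hble j (Finset.mem_range.1 hj)
    · intro j hj
      have := h.a_le j (Finset.mem_range.1 hj); omega
  · -- the height is the number of first-row entries below `t` minus that of second-row entries
    intro t
    have e : height (foundContent n nu) (rowSet n l1 T) t =
        ((∑ v ∈ Finset.range t, fib (fun j => T (n, j)) l1 v : ℕ) : ℤ) -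
        ((∑ v ∈ Finset.range t, fib (fun j => T (n + 1, j)) l2 v : ℕ) : ℤ) := by
      unfold height
      push_cast
      rw [← Finset.sum_sub_distrib]
      apply Finset.sum_congr rfl
      intro v _
      rw [h.x_eq]
      push_cast
      rw [h.fib_a v]
      push_cast
      ring
    rw [e, sum_fib, sum_fib, sub_nonneg, Nat.cast_le]
    apply Finset.card_le_card
    intro j hj
    simp only [Finset.mem_filter, Finset.mem_range] at hj ⊢
    have := h.a_lt_b j hj.1
    omega

end RowFilling

lemma rowSet_injOn {n k l1 l2 : ℕ} {nu : ℕ → ℕ}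
    (hn : 1 ≤ n) (hk : k ≤ 1) (hl21 : l2 ≤ l1) (hl1n : l1 ≤ k + n) :
    Set.InjOn (rowSet n l1) (LRset (SBF (twoRowFun l1 l2) k n) nu) := by
  intro T hT T' hT' he
  have h := rowFilling_of_LR hn hk hl21 hl1n hT
  have h' := rowFilling_of_LR hn hk hl21 hl1n hT'
  have ha : ∀ v, fib (fun j => T (n, j)) l1 v = fib (fun j => T' (n, j)) l1 v := fun v => by
    rw [h.fib_a, h'.fib_a, he]
  have hb : ∀ v, fib (fun j => T (n + 1, j)) l2 v = fib (fun j => T' (n + 1, j)) l2 v :=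
    fun v => by
      have h1 := h.x_eq v
      have h2 := h'.x_eq v
      have h3 := ha v
      omega
  have hmono : ∀ {S : ℕ × ℕ → ℕ}, RowFilling n k l1 l2 nu S →
      ∀ i j, i ≤ j → j < l1 → S (n, i) ≤ S (n, j) := fun hS i j hij hj => by
    rcases Nat.eq_or_lt_of_le hij with rfl | hlt
    · exact le_rfl
    · exact (hS.a_strict i j hlt hj).le
  have ha' := eq_of_fib_eq (hmono h) (hmono h') ha
  have hb' := eq_of_fib_eq h.b_mono h'.b_mono hb
  funext p
  by_cases hp : p ∈ SBF (twoRowFun l1 l2) k n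
  · rcases hp with hp | hp
    · rw [h.std p hp, h'.std p hp]
    · rw [found_row hk] at hp
      rcases hp with ⟨j, hj, rfl⟩ | ⟨j, hj, rfl⟩
      · exact ha' j hj
      · exact hb' j hj
  · rw [hT.1.2.1 p hp, hT'.1.2.1 p hp]

/-! ### Fillings over the transposed foundation -/

lemma found_col {n k l1 l2 : ℕ} (hk : k ≤ 1) (hl21 : l2 ≤ l1) (p : ℕ × ℕ) :
    p ∈ foundationCells (twoRowTransposeFun l1 l2) k n ↔
      (∃ i < l1, p = (n + i, 0)) ∨ (∃ i < l2, p = (n + i, 1)) := by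
  obtain ⟨i, j⟩ := p
  have e : (i, j) ∈ foundationCells (twoRowTransposeFun l1 l2) k n ↔
    n ≤ i ∧ k - 1 - (i - n) ≤ j ∧ j < twoRowTransposeFun l1 l2 (i - n) := Iff.rfl
  rw [e]
  unfold twoRowTransposeFun
  constructor
  · rintro ⟨h1, -, h3⟩
    have hj : (j = 0 ∧ i - n < l1) ∨ (j = 1 ∧ i - n < l2) := by
      split_ifs at h3 <;> omega
    rcases hj with ⟨rfl, hj⟩ | ⟨rfl, hj⟩
    · exact Or.inl ⟨i - n, hj, by rw [Prod.mk.injEq]; omega⟩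
    · exact Or.inr ⟨i - n, hj, by rw [Prod.mk.injEq]; omega⟩
  · rintro (⟨i', h, he⟩ | ⟨i', h, he⟩) <;>
    · rw [Prod.mk.injEq] at he
      obtain ⟨rfl, rfl⟩ := he
      refine ⟨by omega, by omega, ?_⟩
      rw [Nat.add_sub_cancel_left]
      split_ifs <;> omega

/-- The elements of `C` in increasing order, followed by zeros. -/
noncomputable def enum (C : Finset ℕ) (i : ℕ) : ℕ := Nat.nth (· ∈ C) i

lemma card_toFinset_mem (C : Finset ℕ) (hf : (Set.ofPred (· ∈ C)).Finite) :
    hf.toFinset.card = C.card := by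
  congr 1
  ext v
  rw [Set.Finite.mem_toFinset]
  rfl

lemma finite_mem (C : Finset ℕ) : (Set.ofPred (· ∈ C)).Finite := C.finite_toSet

lemma enum_mem {C : Finset ℕ} {i : ℕ} (h : i < C.card) : enum C i ∈ C :=
  Nat.nth_mem (p := (· ∈ C)) i (fun hf => by rw [card_toFinset_mem]; exact h)

lemma enum_eq_zero {C : Finset ℕ} {i : ℕ} (h : C.card ≤ i) : enum C i = 0 :=
  Nat.nth_of_card_le (p := (· ∈ C)) (finite_mem C) (by rw [card_toFinset_mem]; exact h)

lemma enum_lt {C : Finset ℕ} {i j : ℕ} (hij : i < j) (h : j < C.card) : enum C i < enum C j :=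
  Nat.nth_lt_nth' (p := (· ∈ C)) hij (fun hf => by rw [card_toFinset_mem]; exact h)

lemma exists_enum {C : Finset ℕ} {v : ℕ} (h : v ∈ C) : ∃ i < C.card, enum C i = v := by
  obtain ⟨i, hi, hv⟩ := Nat.exists_lt_card_nth_eq (p := (· ∈ C)) h
  exact ⟨i, by have := hi (finite_mem C); rwa [card_toFinset_mem] at this, hv⟩

lemma enum_le {C D : Finset ℕ} {i : ℕ} (hi : i < D.card)
    (h : ∀ t, Nat.count (· ∈ D) t ≤ Nat.count (· ∈ C) t) : enum C i ≤ enum D i := by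
  have h1 : Nat.count (· ∈ D) (enum D i + 1) = i + 1 :=
    Nat.count_nth_succ (p := (· ∈ D)) (fun hf => by rw [card_toFinset_mem]; exact hi)
  have h2 := h (enum D i + 1)
  have h3 : enum C i < enum D i + 1 := Nat.nth_lt_of_lt_count (p := (· ∈ C)) (by omega)
  omega

/-- The entries of the second column complementary to the set `C` of first-column entries. -/
def colCompl (n : ℕ) (x : ℕ → ℕ) (C : Finset ℕ) : Finset ℕ :=
  (Finset.range (n + 3)).filter (fun v => x v = 2 ∨ (x v = 1 ∧ v ∉ C))

open Classical in
/-- The filling with standard staircase part whose foundation has columns `C` and `D`. -/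
noncomputable def build (n k : ℕ) (C D : Finset ℕ) (p : ℕ × ℕ) : ℕ :=
  if p ∈ staircaseCells n k then p.1 + p.2 + 2 - k - n
  else if p.1 < n then 0
  else if p.2 = 0 then enum C (p.1 - n)
  else if p.2 = 1 then enum D (p.1 - n)
  else 0

lemma build_std (n k : ℕ) (C D : Finset ℕ) : IsStd n k (build n k C D) :=
  fun _ hp => if_pos hp

lemma build_c (n k : ℕ) (C D : Finset ℕ) (i : ℕ) : build n k C D (n + i, 0) = enum C i := by
  have h : (n + i, 0) ∉ staircaseCells n k := by rw [mem_staircase]; omega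
  simp [build, h]

lemma build_d (n k : ℕ) (C D : Finset ℕ) (i : ℕ) : build n k C D (n + i, 1) = enum D i := by
  have h : (n + i, 1) ∉ staircaseCells n k := by rw [mem_staircase]; omega
  simp [build, h]

namespace ColData

variable {n k l1 l2 : ℕ} {x : ℕ → ℕ} {C : Finset ℕ}

lemma mem_compl (h : ColData n k l1 l2 x C) (v : ℕ) :
    v ∈ colCompl n x C ↔ x v = 2 ∨ (x v = 1 ∧ v ∉ C) := by
  unfold colCompl
  simp only [Finset.mem_filter, Finset.mem_range, and_iff_right_iff_imp]
  intro h1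
  by_contra h2
  have := h.top v (by omega)
  omega

lemma mem_lt (h : ColData n k l1 l2 x C) {v : ℕ} (hv : v ∈ C) : v < n + 3 := by
  by_contra h2
  have := h.top v (by omega)
  have := h.mem_x v hv
  omega

lemma x_eq (h : ColData n k l1 l2 x C) (v : ℕ) :
    x v = (if v ∈ C then 1 else 0) + (if v ∈ colCompl n x C then 1 else 0) := by
  have h1 := h.le_two v
  have h2 := h.mem_x v
  have h3 := h.two_mem v
  simp only [h.mem_compl]
  by_cases hv : v ∈ C
  · have := h2 hv
    simp only [hv, not_true, and_false, or_false, if_true]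
    split_ifs <;> omega
  · have : x v ≠ 2 := fun e => hv (h3 e)
    simp only [hv, not_false_eq_true, and_true, if_false]
    split_ifs <;> omega

lemma card_compl (h : ColData n k l1 l2 x C) : (colCompl n x C).card = l2 := by
  have hs := h.sum
  rw [Finset.sum_congr rfl (fun v _ => h.x_eq v), Finset.sum_add_distrib, Finset.sum_boole,
    Finset.sum_boole] at hs
  have e1 : (Finset.range (n + 3)).filter (fun v => v ∈ C) = C := by
    ext v
    simp only [Finset.mem_filter, Finset.mem_range]
    exact ⟨fun h => h.2, fun hv => ⟨h.mem_lt hv, hv⟩⟩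
  have e2 : (Finset.range (n + 3)).filter (fun v => v ∈ colCompl n x C) = colCompl n x C := by
    ext v
    simp only [Finset.mem_filter, Finset.mem_range]
    exact ⟨fun h => h.2, fun hv => ⟨Finset.mem_range.1 (Finset.mem_filter.1 hv).1, hv⟩⟩
  rw [e1, e2, h.card] at hs
  simpa using hs

lemma count_le (h : ColData n k l1 l2 x C) (t : ℕ) :
    Nat.count (· ∈ colCompl n x C) t ≤ Nat.count (· ∈ C) t := by
  have hb := h.bal t
  have e : height x C t =
      (Nat.count (· ∈ C) t : ℤ) - (Nat.count (· ∈ colCompl n x C) t : ℤ) := by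
    unfold height
    rw [Nat.count_eq_card_filter_range, Nat.count_eq_card_filter_range, ← Finset.sum_boole,
      ← Finset.sum_boole, ← Finset.sum_sub_distrib]
    apply Finset.sum_congr rfl
    intro v _
    rw [h.x_eq v]
    push_cast
    ring
  omega

lemma c_low (h : ColData n k l1 l2 x C) {i : ℕ} (hi : i < l1) : 2 - k ≤ enum C i := by
  by_contra hc
  have h1 := h.mem_x _ (enum_mem (by rw [h.card]; exact hi))
  have h2 := h.low (enum C i) (by omega)
  omega

lemma c_le_d (h : ColData n k l1 l2 x C) {i : ℕ} (hi : i < l2) :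
    enum C i ≤ enum (colCompl n x C) i :=
  enum_le (by rw [h.card_compl]; exact hi) h.count_le

lemma d_low (h : ColData n k l1 l2 x C) (hk : k ≤ 1) (hl21 : l2 ≤ l1) {i : ℕ} (hi : i < l2) :
    3 - k ≤ enum (colCompl n x C) i := by
  have h1 := h.c_low (i := i) (by omega)
  have h2 := h.c_le_d hi
  have h3 := enum_mem (C := C) (i := i) (by rw [h.card]; omega)
  have h4 := enum_mem (C := colCompl n x C) (i := i) (by rw [h.card_compl]; omega)
  by_contra hc
  have e1 : enum C i = 2 - k := by omega
  have e2 : enum (colCompl n x C) i = 2 - k := by omega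
  rw [e1] at h3
  rw [e2] at h4
  have h5 := h.x_eq (2 - k)
  rw [if_pos h3, if_pos h4] at h5
  have := h.low'
  omega

lemma build_ssyt (h : ColData n k l1 l2 x C) (hk : k ≤ 1) (hl21 : l2 ≤ l1) :
    IsSSYT (SBF (twoRowTransposeFun l1 l2) k n) (build n k C (colCompl n x C)) := by
  have hstd := build_std n k C (colCompl n x C)
  have hcell : ∀ p ∈ SBF (twoRowTransposeFun l1 l2) k n, p ∈ staircaseCells n k ∨
      (∃ i < l1, p = (n + i, 0)) ∨ (∃ i < l2, p = (n + i, 1)) := by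
    rintro p (hp | hp)
    · exact Or.inl hp
    · exact Or.inr ((found_col hk hl21 p).1 hp)
  refine ⟨?_, ?_, ?_, ?_⟩
  · intro p hp
    rcases hcell p hp with hp | ⟨i, hi, rfl⟩ | ⟨i, hi, rfl⟩
    · rw [hstd p hp]
      obtain ⟨h1, h2, h3⟩ := hp
      omega
    · rw [build_c]; have := h.c_low hi; omega
    · rw [build_d]; have := h.d_low hk hl21 hi; omega
  · rintro ⟨i, j⟩ hp
    have h1 : (i, j) ∉ staircaseCells n k := fun h' => hp (Or.inl h')
    have h2 : (i, j) ∉ foundationCells (twoRowTransposeFun l1 l2) k n := fun h' => hp (Or.inr h')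
    rw [found_col hk hl21] at h2
    push Not at h2
    unfold build
    rw [if_neg h1]
    split_ifs with h3 h4 h5
    · rfl
    · simp only at h3 h4
      apply enum_eq_zero
      rw [h.card]
      by_contra hc
      exact h2.1 (i - n) (by simp only at hc; omega) (by rw [Prod.mk.injEq]; omega)
    · simp only at h3 h5
      apply enum_eq_zero
      rw [h.card_compl]
      by_contra hc
      exact h2.2 (i - n) (by simp only at hc; omega) (by rw [Prod.mk.injEq]; omega)
    · rfl
  · intro i j1 j2 hj hp1 hp2
    rcases hcell _ hp1 with h1 | ⟨i1, hi1, h1⟩ | ⟨i1, hi1, h1⟩ <;>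
    rcases hcell _ hp2 with h2 | ⟨i2, hi2, h2⟩ | ⟨i2, hi2, h2⟩
    · rw [hstd _ h1, hstd _ h2]; simp only; omega
    · rw [mem_staircase] at h1; rw [Prod.mk.injEq] at h2; omega
    · rw [mem_staircase] at h1; rw [Prod.mk.injEq] at h2; omega
    · rw [mem_staircase] at h2; rw [Prod.mk.injEq] at h1; omega
    · rw [Prod.mk.injEq] at h1 h2
      obtain ⟨rfl, rfl⟩ := h1
      obtain ⟨-, rfl⟩ := h2
      exact le_rfl
    · rw [Prod.mk.injEq] at h1 h2
      obtain ⟨rfl, rfl⟩ := h1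
      obtain ⟨h3, rfl⟩ := h2
      have : i1 = i2 := by omega
      subst this
      rw [build_c, build_d]
      exact h.c_le_d hi2
    · rw [mem_staircase] at h2; rw [Prod.mk.injEq] at h1; omega
    · rw [Prod.mk.injEq] at h1 h2; omega
    · rw [Prod.mk.injEq] at h1 h2
      obtain ⟨rfl, rfl⟩ := h1
      obtain ⟨-, rfl⟩ := h2
      exact le_rfl
  · intro i1 i2 j hi hp1 hp2
    rcases hcell _ hp1 with h1 | ⟨a, ha, h1⟩ | ⟨a, ha, h1⟩ <;>
    rcases hcell _ hp2 with h2 | ⟨b, hb, h2⟩ | ⟨b, hb, h2⟩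
    · rw [hstd _ h1, hstd _ h2]
      rw [mem_staircase] at h1
      simp only
      omega
    · rw [h2, hstd _ h1, build_c]
      have := h.c_low hb
      rw [mem_staircase] at h1; rw [Prod.mk.injEq] at h2
      simp only
      omega
    · rw [h2, hstd _ h1, build_d]
      have := h.d_low hk hl21 hb
      rw [mem_staircase] at h1; rw [Prod.mk.injEq] at h2
      simp only
      omega
    · rw [mem_staircase] at h2; rw [Prod.mk.injEq] at h1; omega
    · rw [h1, h2, build_c, build_c]
      rw [Prod.mk.injEq] at h1 h2
      exact enum_lt (by omega) (by rw [h.card]; exact hb)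
    · rw [Prod.mk.injEq] at h1 h2; omega
    · rw [mem_staircase] at h2; rw [Prod.mk.injEq] at h1; omega
    · rw [Prod.mk.injEq] at h1 h2; omega
    · rw [h1, h2, build_d, build_d]
      rw [Prod.mk.injEq] at h1 h2
      exact enum_lt (by omega) (by rw [h.card_compl]; exact hb)

lemma fib_enum {C : Finset ℕ} {m : ℕ} (hm : m ≤ C.card) (v : ℕ) :
    fib (enum C) m v = if v ∈ (Finset.range m).image (enum C) then 1 else 0 :=
  fib_of_inj (fun _ _ hij hj => enum_lt hij (by omega)) v

lemma fib_enum_card (C : Finset ℕ) (v : ℕ) :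
    fib (enum C) C.card v = if v ∈ C then 1 else 0 := by
  rw [fib_enum le_rfl]
  congr 1
  rw [Finset.mem_image, eq_iff_iff]
  constructor
  · rintro ⟨i, hi, rfl⟩; exact enum_mem (Finset.mem_range.1 hi)
  · intro h
    obtain ⟨i, hi, hv⟩ := exists_enum h
    exact ⟨i, Finset.mem_range.2 hi, hv⟩

/-- If `v + 1` is among the first `m` elements of `C` and `v ∈ C`, so is `v`. -/
lemma mem_image_pred {C : Finset ℕ} {m v : ℕ}
    (h : v + 1 ∈ (Finset.range m).image (enum C)) (hv : v ∈ C) :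
    v ∈ (Finset.range m).image (enum C) := by
  rw [Finset.mem_image] at h ⊢
  obtain ⟨i, hi, he⟩ := h
  obtain ⟨i', hi', he'⟩ := exists_enum hv
  rw [Finset.mem_range] at hi
  refine ⟨i', Finset.mem_range.2 ?_, he'⟩
  by_contra hc
  have := enum_lt (C := C) (i := i) (j := i') (by omega) hi'
  omega

lemma mem_of_mem_image {C : Finset ℕ} {m v : ℕ} (hm : m ≤ C.card)
    (h : v ∈ (Finset.range m).image (enum C)) : v ∈ C := by
  rw [Finset.mem_image] at h
  obtain ⟨i, hi, rfl⟩ := h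
  exact enum_mem (by rw [Finset.mem_range] at hi; omega)

/-- The lattice inequality after reading `α` entries of the first column and `β` entries of the
second one. A value `v + 1 ≤ n + 1` needs a further `v` only for its second copy; the value
`n + 2` needs `n + 1` to be read first. -/
lemma lattice_core (h : ColData n k l1 l2 x C) (hl21 : l2 ≤ l1) {α β v : ℕ} (hα : α ≤ l1)
    (hβ : β ≤ l2) (hαβ : α ≤ β ∨ l2 = β) :
    (n + 1 - (v + 1)) + (fib (enum C) α (v + 1) + fib (enum (colCompl n x C)) β (v + 1)) ≤
      (n + 1 - v) + (fib (enum C) α v + fib (enum (colCompl n x C)) β v) := by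
  have hα' : α ≤ C.card := by rw [h.card]; exact hα
  have hβ' : β ≤ (colCompl n x C).card := by rw [h.card_compl]; exact hβ
  rw [fib_enum hα', fib_enum hα', fib_enum hβ', fib_enum hβ']
  have pC := mem_image_pred (C := C) (m := α) (v := v)
  have pD := mem_image_pred (C := colCompl n x C) (m := β) (v := v)
  have mC := mem_of_mem_image (v := v + 1) hα'
  have mD := mem_of_mem_image (v := v + 1) hβ'
  have hx1 := h.x_eq (v + 1)
  have hx := h.x_eq v
  by_cases hvn : v ≤ n
  · by_cases hb : v + 1 ∈ (Finset.range α).image (enum C) ∧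
        v + 1 ∈ (Finset.range β).image (enum (colCompl n x C))
    · obtain ⟨b1, b2⟩ := hb
      rw [if_pos (mC b1), if_pos (mD b2)] at hx1
      have hx2 := h.pred v hx1
      rw [if_pos b1, if_pos b2]
      by_cases hvC : v ∈ C
      · rw [if_pos (pC b1 hvC)]; omega
      · have hvD : v ∈ colCompl n x C := by
          by_contra hvD
          rw [if_neg hvC, if_neg hvD] at hx; omega
        rw [if_pos (pD b2 hvD)]; omega
    · rw [not_and_or] at hb
      rcases hb with hb | hb <;> rw [if_neg hb] <;> split_ifs <;> omega
  · by_cases hvn2 : v = n + 1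
    · subst hvn2
      have ht : x (n + 1 + 1) ≤ 1 := h.top'
      by_cases b1 : n + 1 + 1 ∈ (Finset.range α).image (enum C)
      · rw [if_pos (mC b1)] at hx1
        have b2 : n + 1 + 1 ∉ (Finset.range β).image (enum (colCompl n x C)) := fun b2 => by
          rw [if_pos (mD b2)] at hx1; omega
        have hxp : 1 ≤ x (n + 1) := h.top_pred (by show x (n + 1 + 1) = 1; omega)
        rw [if_pos b1, if_neg b2]
        by_cases hvC : n + 1 ∈ C
        · rw [if_pos (pC b1 hvC)]; omega
        · have hvD : n + 1 ∈ colCompl n x C := by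
            by_contra hvD
            rw [if_neg hvC, if_neg hvD] at hx; omega
          -- `n + 2` is the last entry of the first column, so all of the second has been read
          have hvD' : n + 1 ∈ (Finset.range β).image (enum (colCompl n x C)) := by
            obtain ⟨i', hi', he'⟩ := exists_enum hvD
            rw [h.card_compl] at hi'
            rw [Finset.mem_image] at b1 ⊢
            obtain ⟨i, hi, he⟩ := b1
            rw [Finset.mem_range] at hi
            refine ⟨i', Finset.mem_range.2 ?_, he'⟩
            by_contra hc
            have h1 : enum C i < enum C i' := enum_lt (by omega) (by rw [h.card]; omega)
            have h2 := h.mem_lt (enum_mem (C := C) (i := i') (by rw [h.card]; omega))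
            omega
          rw [if_pos hvD']; omega
      · rw [if_neg b1]
        by_cases b2 : n + 1 + 1 ∈ (Finset.range β).image (enum (colCompl n x C))
        · rw [if_pos (mD b2)] at hx1
          have hnC : n + 1 + 1 ∉ C := fun hc => by rw [if_pos hc] at hx1; omega
          have hx2 : x (n + 2) = 1 := by show x (n + 1 + 1) = 1; omega
          have hxp : 1 ≤ x (n + 1) := h.top_pred hx2
          have hvD : n + 1 ∈ colCompl n x C := by
            by_contra hvD
            rw [if_neg hvD] at hx
            by_cases hvC : n + 1 ∈ C
            · rw [if_pos hvC] at hx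
              exact hnC (h.exc (by omega) hx2 hvC)
            · rw [if_neg hvC] at hx; omega
          rw [if_pos b2, if_pos (pD b2 hvD)]; omega
        · rw [if_neg b2]; omega
    · have h0 := h.top (v + 1) (by omega)
      have n1 : v + 1 ∉ C := fun hc => by rw [if_pos hc] at hx1; omega
      have n2 : v + 1 ∉ colCompl n x C := fun hc => by rw [if_pos hc] at hx1; omega
      rw [if_neg (fun hc => n1 (mC hc)), if_neg (fun hc => n2 (mD hc))]
      omega

lemma build_LR {nu : ℕ → ℕ} (h : ColData n k l1 l2 (foundContent n nu) C) (hk : k ≤ 1)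
    (hl21 : l2 ≤ l1) (hnu : ∀ v, 1 ≤ v → n + 1 - v ≤ nu v) :
    build n k C (colCompl n (foundContent n nu) C) ∈
      LRset (SBF (twoRowTransposeFun l1 l2) k n) nu := by
  have hfound := found_col (n := n) (k := k) hk hl21
  have hf : Function.Injective (fun i : ℕ => (n + i, 0)) := fun a b h => by
    have := (Prod.mk.inj h).1; omega
  have hg : Function.Injective (fun i : ℕ => (n + i, 1)) := fun a b h => by
    have := (Prod.mk.inj h).1; omega
  have hfg : ∀ i j : ℕ, (fun i : ℕ => (n + i, 0)) i ≠ (fun i : ℕ => (n + i, 1)) j :=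
    fun i j h => by have := (Prod.mk.inj h).2; omega
  have hfin := SBF_finite hfound
  have hstd := build_std n k C (colCompl n (foundContent n nu) C)
  refine ⟨h.build_ssyt hk hl21, ?_, ?_⟩
  · intro q hq v hv
    by_cases hqn : q.1 < n
    · exact staircase_lattice hfin hstd hqn hv
    · rw [read_eq hfound hf hg hfg hstd (by omega) hv,
        read_eq hfound hf hg hfg hstd (by omega) (by omega)]
      simp only [build_c, build_d]
      have hq' : q ∈ foundationCells (twoRowTransposeFun l1 l2) k n := by
        rcases hq with hq | hq
        · exact absurd hq.1 hqn
        · exact hq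
      -- the part of a column of length `l` read up to `q` is an initial segment
      have hcard : ∀ (P : ℕ → Prop) [DecidablePred P] (c : ℕ → ℕ) (l m w : ℕ),
          m ≤ l → (∀ i < l, P i ↔ i < m) →
          ((Finset.range l).filter (fun i => P i ∧ c i = w)).card = fib c m w := by
        intro P _ c l m w hm hP
        unfold fib
        congr 1
        ext i
        simp only [Finset.mem_filter, Finset.mem_range]
        constructor
        · rintro ⟨h1, h2, h3⟩; exact ⟨(hP i h1).1 h2, h3⟩
        · rintro ⟨h1, h2⟩; exact ⟨by omega, (hP i (by omega)).2 h1, h2⟩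
      rcases (hfound q).1 hq' with ⟨r, hr, rfl⟩ | ⟨r, hr, rfl⟩
      · rw [hcard _ _ l1 (r + 1) _ (by omega) (by intro i hi; simp only; omega),
          hcard _ _ l2 (min l2 (r + 1)) _ (by omega) (by intro i hi; simp only; omega),
          hcard _ _ l1 (r + 1) _ (by omega) (by intro i hi; simp only; omega),
          hcard _ _ l2 (min l2 (r + 1)) _ (by omega) (by intro i hi; simp only; omega)]
        exact h.lattice_core hl21 (by omega) (by omega) (by omega)
      · rw [hcard _ _ l1 r _ (by omega) (by intro i hi; simp only; omega),
          hcard _ _ l2 (r + 1) _ (by omega) (by intro i hi; simp only; omega),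
          hcard _ _ l1 r _ (by omega) (by intro i hi; simp only; omega),
          hcard _ _ l2 (r + 1) _ (by omega) (by intro i hi; simp only; omega)]
        exact h.lattice_core hl21 (by omega) (by omega) (by omega)
  · intro v hv
    rw [content_eq hfound hf hg hfg hstd hv]
    simp only [build_c, build_d]
    have e1 := fib_enum_card C v
    have e2 := fib_enum_card (colCompl n (foundContent n nu) C) v
    rw [h.card] at e1
    rw [h.card_compl] at e2
    have e3 := h.x_eq v
    have e4 := hnu v hv
    have e5 : foundContent n nu v = nu v - (n + 1 - v) := if_neg (by omega)
    change (n + 1 - v) + (fib (enum C) l1 v +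
      fib (enum (colCompl n (foundContent n nu) C)) l2 v) = nu v
    omega

lemma build_inj {C' D D' : Finset ℕ} (h : ColData n k l1 l2 x C) (h' : ColData n k l1 l2 x C')
    (he : build n k C D = build n k C' D') : C = C' := by
  have hen : ∀ i, enum C i = enum C' i := fun i => by
    rw [← build_c n k C D, he, build_c]
  ext v
  constructor
  · intro hv
    obtain ⟨i, hi, rfl⟩ := exists_enum hv
    rw [hen]; exact enum_mem (by rw [h'.card, ← h.card]; exact hi)
  · intro hv
    obtain ⟨i, hi, rfl⟩ := exists_enum hv
    rw [← hen]; exact enum_mem (by rw [h.card, ← h'.card]; exact hi)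

end ColData

/-- All fillings with a given content take their values in the value set of any one of them. -/
lemma LRset_finite {D : Set (ℕ × ℕ)} (hD : D.Finite) (nu : ℕ → ℕ) : (LRset D nu).Finite := by
  rcases (LRset D nu).eq_empty_or_nonempty with he | ⟨T₀, hT₀⟩
  · rw [he]; exact Set.finite_empty
  classical
  have hV : (T₀ '' D).Finite := hD.image _
  have := hD.to_subtype
  have := hV.to_subtype
  refine (Set.finite_range (fun (c : D → T₀ '' D) (p : ℕ × ℕ) =>
    if h : p ∈ D then (c ⟨p, h⟩ : ℕ) else 0)).subset ?_
  intro T hT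
  have hval : ∀ p ∈ D, T p ∈ T₀ '' D := by
    intro p hp
    have hpos := hT.1.1 p hp
    have h1 : 0 < contentOf D T (T p) := by
      unfold contentOf
      rw [Set.ncard_pos (hD.subset fun q hq => hq.1)]
      exact ⟨p, hp, rfl⟩
    rw [hT.2.2 _ hpos, ← hT₀.2.2 _ hpos] at h1
    unfold contentOf at h1
    rw [Set.ncard_pos (hD.subset fun q hq => hq.1)] at h1
    obtain ⟨q, hq, hq2⟩ := h1
    exact ⟨q, hq, hq2⟩
  refine ⟨fun p => ⟨T p, hval p p.2⟩, ?_⟩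
  funext p
  by_cases hp : p ∈ D
  · simp [hp]
  · simp [hp, hT.1.2.1 p hp]

/-- Let `n ≥ 1`, `0 ≤ k ≤ 1`, and let `λ = (l1, l2)` be a
partition with exactly two parts, `1 < l1 ≤ k + n`.  Then
`s_{𝒮(λᵗ,k,n)} - s_{𝒮(λ,k,n)}` is Schur-positive: by the
Littlewood-Richardson rule, for every content `ν` the LR coefficient of `s_ν`
in `s_{𝒮(λ,k,n)}` is at most the one in `s_{𝒮(λᵗ,k,n)}`. -/
theorem twoRow_transpose_diff_schurPositive
    (n k l1 l2 : ℕ) (hn : 1 ≤ n) (hk : k ≤ 1) (hl2 : 1 ≤ l2) (hl21 : l2 ≤ l1)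
    (hl1 : 1 < l1) (hl1n : l1 ≤ k + n) :
    ∀ nu : ℕ → ℕ,
      LRcount (SBF (twoRowFun l1 l2) k n) nu ≤
      LRcount (SBF (twoRowTransposeFun l1 l2) k n) nu := by
  intro nu
  have hfin : (LRset (SBF (twoRowTransposeFun l1 l2) k n) nu).Finite :=
    LRset_finite (SBF_finite (found_col hk hl21)) nu
  have hrow : ∀ T ∈ LRset (SBF (twoRowFun l1 l2) k n) nu, RowFilling n k l1 l2 nu T :=
    fun T hT => rowFilling_of_LR hn hk hl21 hl1n hT
  let x := foundContent n nu
  let toC : (ℕ × ℕ → ℕ) → Finset ℕ := fun T => toCol n l1 l2 x (rowSet n l1 T)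
  change (LRset (SBF (twoRowFun l1 l2) k n) nu).ncard ≤
    (LRset (SBF (twoRowTransposeFun l1 l2) k n) nu).ncard
  refine Set.ncard_le_ncard_of_injOn (fun T => build n k (toC T) (colCompl n x (toC T)))
    ?_ ?_ hfin
  · intro T hT
    have h := hrow T hT
    exact ((h.rowData hk hl21).toCol_colData hk hl21 hl1).build_LR hk hl21 h.nu_le
  · intro T hT T' hT' he
    have h := (hrow T hT).rowData hk hl21
    have h' := (hrow T' hT').rowData hk hl21
    have hC := (h.toCol_colData hk hl21 hl1).build_inj (h'.toCol_colData hk hl21 hl1) he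
    exact rowSet_injOn hn hk hl21 hl1n hT hT' (h.toCol_inj h' hk hl21 hl1 hC)
end

section
/- Let n be a positive integer, let 0 ≤ k ≤ 1, and let λ be a partition with exactly two parts satisfying 1 < λ_1 ≤ k+n. Then the skew Schur functions s_{S(λ^t,k,n)} and s_{S(λ,k,n)} become equal upon restricting to n+1 variables, i.e. after setting x_{n+2} = x_{n+3} = ⋯ = 0. -/
namespace BadFoundation
open Finset

/-! ### Shift operators on functions of integer vectors -/

/-- The sum of `f` over all vectors obtained from `x` by lowering by one the coordinates outside
some `a`-element set: the action of the elementary symmetric polynomial of degree `N - a` in the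
down-shifts of the coordinates (and `0` if `a > N`). -/
def opE {N : ℕ} (a : ℕ) (f : (Fin N → ℤ) → ℤ) (x : Fin N → ℤ) : ℤ :=
  ∑ C ∈ powersetCard a (univ : Finset (Fin N)), f (fun j => x j - if j ∈ C then 0 else 1)

/-- The vectors in `ℕ^N` with coordinate sum `N - a`; none if `a > N`. -/
def compl (N a : ℕ) : Finset (Fin N → ℕ) :=
  (Fintype.piFinset fun _ => range (N + 1)).filter fun p => ∑ j, p j + a = N

lemma mem_compl {N a : ℕ} {p : Fin N → ℕ} : p ∈ compl N a ↔ ∑ j, p j + a = N := by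
  unfold compl
  rw [mem_filter, Fintype.mem_piFinset]
  refine ⟨fun h => h.2, fun h => ⟨fun j => ?_, h⟩⟩
  have := single_le_sum (f := p) (fun i _ => Nat.zero_le _) (mem_univ j)
  rw [mem_range]; omega

/-- The analogue of `opE` for the complete homogeneous symmetric polynomial of degree `N - a`. -/
def opH {N : ℕ} (a : ℕ) (f : (Fin N → ℤ) → ℤ) (x : Fin N → ℤ) : ℤ :=
  ∑ p ∈ compl N a, f (fun j => x j - p j)

/-- Alternating functions: a transposition of coordinates changes the sign. -/
def Alt {N : ℕ} (f : (Fin N → ℤ) → ℤ) : Prop :=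
  ∀ x i j, i ≠ j → f (x ∘ Equiv.swap i j) = - f x

/-- Functions vanishing at vectors with a negative coordinate. -/
def NonnegSupp {N : ℕ} (f : (Fin N → ℤ) → ℤ) : Prop :=
  ∀ x j, x j < 0 → f x = 0

lemma Alt.eq_zero {N : ℕ} {f : (Fin N → ℤ) → ℤ} (hf : Alt f) {x : Fin N → ℤ} {i j : Fin N}
    (hij : i ≠ j) (h : x i = x j) : f x = 0 := by
  have h1 := hf x i j hij
  have h2 : x ∘ Equiv.swap i j = x := by
    funext l
    simp only [Function.comp, Equiv.swap_apply_def]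
    split_ifs <;> simp_all
  rw [h2] at h1; omega

lemma Alt.opE {N a : ℕ} {f : (Fin N → ℤ) → ℤ} (hf : Alt f) : Alt (opE a f) := by
  intro x i j hij
  unfold BadFoundation.opE
  rw [← sum_neg_distrib]
  refine sum_nbij' (fun C => C.map (Equiv.swap i j).toEmbedding)
    (fun C => C.map (Equiv.swap i j).toEmbedding) ?_ ?_ ?_ ?_ ?_
  · intro C hC; simpa [mem_powersetCard] using hC
  · intro C hC; simpa [mem_powersetCard] using hC
  · intro C hC; ext l; simp
  · intro C hC; ext l; simp
  · intro C hC
    rw [← hf _ i j hij]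
    congr 1
    funext l
    simp

lemma Alt.opH {N a : ℕ} {f : (Fin N → ℤ) → ℤ} (hf : Alt f) : Alt (opH a f) := by
  intro x i j hij
  unfold BadFoundation.opH
  rw [← sum_neg_distrib]
  refine sum_nbij' (fun p => p ∘ Equiv.swap i j) (fun p => p ∘ Equiv.swap i j) ?_ ?_ ?_ ?_ ?_
  · intro p hp; rw [mem_compl] at *; exact (congrArg (· + a) (Equiv.sum_comp (Equiv.swap i j) p)).trans hp
  · intro p hp; rw [mem_compl] at *; exact (congrArg (· + a) (Equiv.sum_comp (Equiv.swap i j) p)).trans hp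
  · intro p hp; funext l; simp
  · intro p hp; funext l; simp
  · intro p hp
    rw [← hf _ i j hij]
    congr 1
    funext l
    simp

lemma NonnegSupp.opE {N a : ℕ} {f : (Fin N → ℤ) → ℤ} (hf : NonnegSupp f) :
    NonnegSupp (opE a f) := by
  intro x j hj
  refine sum_eq_zero fun C _ => hf _ j ?_
  split_ifs <;> omega

lemma NonnegSupp.opH {N a : ℕ} {f : (Fin N → ℤ) → ℤ} (hf : NonnegSupp f) :
    NonnegSupp (opH a f) := by
  intro x j hj
  refine sum_eq_zero fun p _ => hf _ j ?_
  omega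

lemma opE_opH_comm {N : ℕ} (a b : ℕ) (f : (Fin N → ℤ) → ℤ) :
    opE a (opH b f) = opH b (opE a f) := by
  funext x
  unfold opE opH
  rw [sum_comm]
  simp only [sub_right_comm]

/-- The composite `opE (α (s + 1)) ∘ ⋯ ∘ opE (α (s + t))`; `t` is the first numerical argument. -/
def opsE {N : ℕ} (α : ℕ → ℕ) : ℕ → ℕ → ((Fin N → ℤ) → ℤ) → (Fin N → ℤ) → ℤ
  | 0, _, f => f
  | t + 1, s, f => opE (α (s + 1)) (opsE α t (s + 1) f)

/-- The composite `opH (α (s + 1)) ∘ ⋯ ∘ opH (α (s + t))`; `t` is the first numerical argument. -/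
def opsH {N : ℕ} (α : ℕ → ℕ) : ℕ → ℕ → ((Fin N → ℤ) → ℤ) → (Fin N → ℤ) → ℤ
  | 0, _, f => f
  | t + 1, s, f => opH (α (s + 1)) (opsH α t (s + 1) f)

lemma Alt.opsE {N : ℕ} {α : ℕ → ℕ} {f : (Fin N → ℤ) → ℤ} (hf : Alt f) (t s : ℕ) :
    Alt (opsE α t s f) := by
  induction t generalizing s with
  | zero => exact hf
  | succ t ih => exact (ih _).opE

lemma Alt.opsH {N : ℕ} {α : ℕ → ℕ} {f : (Fin N → ℤ) → ℤ} (hf : Alt f) (t s : ℕ) :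
    Alt (opsH α t s f) := by
  induction t generalizing s with
  | zero => exact hf
  | succ t ih => exact (ih _).opH

lemma NonnegSupp.opsE {N : ℕ} {α : ℕ → ℕ} {f : (Fin N → ℤ) → ℤ} (hf : NonnegSupp f) (t s : ℕ) :
    NonnegSupp (opsE α t s f) := by
  induction t generalizing s with
  | zero => exact hf
  | succ t ih => exact (ih _).opE

lemma NonnegSupp.opsH {N : ℕ} {α : ℕ → ℕ} {f : (Fin N → ℤ) → ℤ} (hf : NonnegSupp f) (t s : ℕ) :
    NonnegSupp (opsH α t s f) := by
  induction t generalizing s with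
  | zero => exact hf
  | succ t ih => exact (ih _).opH

lemma opsE_opH_comm {N : ℕ} (α : ℕ → ℕ) (b : ℕ) (f : (Fin N → ℤ) → ℤ) (t s : ℕ) :
    opsE α t s (opH b f) = opH b (opsE α t s f) := by
  induction t generalizing s with
  | zero => rfl
  | succ t ih => simp only [opsE, ih, opE_opH_comm]

lemma opsH_opH_comm {N : ℕ} (α : ℕ → ℕ) (b : ℕ) (f : (Fin N → ℤ) → ℤ) (t s : ℕ) :
    opsH α t s (opH b f) = opH b (opsH α t s f) := by
  induction t generalizing s with
  | zero => rfl
  | succ t ih =>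
    simp only [opsH, ih]
    funext x
    unfold opH
    rw [sum_comm]
    simp only [sub_right_comm]

/-! ### Pieri rules -/

/-- The vector `κ + (N - 1, …, 1, 0)`; it is strictly decreasing exactly if `κ` is a partition. -/
def vec {N : ℕ} (κ : Fin N → ℕ) : Fin N → ℤ := fun j => (κ j : ℤ) + ((N : ℤ) - 1 - (j : ℕ))

lemma strictAnti_gap {N : ℕ} {x : Fin N → ℤ} (hx : StrictAnti x) {i j : Fin N} (h : i ≤ j) :
    x j + ((j : ℕ) - (i : ℕ) : ℤ) ≤ x i := by
  obtain ⟨d, hd⟩ : ∃ d : ℕ, (j : ℕ) = i + d := ⟨j - i, by have : (i : ℕ) ≤ j := h; omega⟩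
  induction d generalizing j with
  | zero =>
    have : j = i := Fin.ext (by omega)
    subst this; simp
  | succ d ih =>
    have hlt : (i : ℕ) + d < N := by have := j.2; omega
    have h1 := ih (j := ⟨i + d, hlt⟩) (Fin.le_def.2 (by simp)) rfl
    have h2 : x j < x ⟨i + d, hlt⟩ := hx (Fin.lt_def.2 (by simp; omega))
    simp only at h1
    push_cast at h1
    omega

lemma strictAnti_vec {N : ℕ} {κ : Fin N → ℕ} : StrictAnti (vec κ) ↔ Antitone κ := by
  constructor
  · intro h i j hij
    have := strictAnti_gap h hij
    simp only [vec] at this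
    omega
  · intro h i j hij
    have h1 := h hij.le
    have h2 : (i : ℕ) < j := hij
    simp only [vec]
    omega

lemma vec_injective {N : ℕ} : Function.Injective (vec (N := N)) := by
  intro a b h
  funext j
  have := congrFun h j
  simp only [vec] at this
  omega

/-- Pieri rule for `opE`: lowering some coordinates of a strictly decreasing vector by one gives a
strictly decreasing vector or one with two equal coordinates, where `f` vanishes. -/
lemma opE_eq_sum_strict {N a : ℕ} {f : (Fin N → ℤ) → ℤ} (hf : Alt f) {x : Fin N → ℤ}
    (hx : StrictAnti x) :
    opE a f x = ∑ C ∈ (powersetCard a (univ : Finset (Fin N))).filter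
      (fun C => StrictAnti (fun j => x j - if j ∈ C then (0 : ℤ) else 1)),
      f (fun j => x j - if j ∈ C then 0 else 1) := by
  classical
  unfold opE
  rw [sum_filter_of_ne]
  intro C _ hne i j hij
  have h1 := hx hij
  by_contra hcon
  refine hne (hf.eq_zero hij.ne ?_)
  dsimp only at *
  split_ifs at * <;> omega

/-- `x` and `x - p` interlace: each lowered coordinate stays above the next one of `x`. -/
def Inter {N : ℕ} (x : Fin N → ℤ) (p : Fin N → ℕ) : Prop :=
  ∀ i j : Fin N, (j : ℕ) = i + 1 → x j < x i - p i

open Classical in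
/-- Pieri rule for `opH`: if `x - p` fails to interlace with `x`, swapping the two coordinates of
`x - p` at the first failure is a sign-reversing involution. -/
lemma opH_eq_sum_inter {N a : ℕ} {f : (Fin N → ℤ) → ℤ} (hf : Alt f) {x : Fin N → ℤ}
    (hx : StrictAnti x) :
    opH a f x = ∑ p ∈ (compl N a).filter (Inter x), f (fun j => x j - p j) := by
  unfold opH
  rw [← sum_filter_add_sum_filter_not _ (Inter x), add_eq_left]
  -- `P p i`: the interlacing condition fails at position `i`
  let P : (Fin N → ℕ) → ℕ → Prop := fun p i => ∃ h : i + 1 < N,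
    x ⟨i, by omega⟩ - p ⟨i, by omega⟩ ≤ x ⟨i + 1, h⟩
  have hP : ∀ p, ¬ Inter x p ↔ ∃ i, P p i := by
    intro p
    simp only [Inter, not_forall, not_lt]
    constructor
    · rintro ⟨i, j, hij, h⟩
      refine ⟨i, by have := j.2; omega, ?_⟩
      have : j = ⟨i + 1, by have := j.2; omega⟩ := Fin.ext hij
      rw [← this]; exact h
    · rintro ⟨i, h, h'⟩
      exact ⟨⟨i, by omega⟩, ⟨i + 1, h⟩, rfl, h'⟩
  let e : (i : ℕ) → i + 1 < N → Equiv.Perm (Fin N) := fun i h =>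
    Equiv.swap ⟨i, by omega⟩ ⟨i + 1, h⟩
  let sw : (i : ℕ) → i + 1 < N → (Fin N → ℕ) → (Fin N → ℕ) := fun i h p j =>
    (x j - (x (e i h j) - p (e i h j))).toNat
  have hsw : ∀ p i (hi : P p i) j, ((sw i hi.1 p j : ℕ) : ℤ) =
      x j - (x (e i hi.1 j) - p (e i hi.1 j)) := by
    rintro p i ⟨h, hi⟩ j
    have hlt : x ⟨i + 1, h⟩ < x ⟨i, by omega⟩ := hx (Fin.lt_def.2 (by simp))
    simp only [sw, e]
    rw [Int.toNat_of_nonneg]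
    rw [Equiv.swap_apply_def]
    split_ifs with h1 h2
    · subst h1; omega
    · subst h2; omega
    · omega
  have hswP : ∀ p i (hi : P p i), P (sw i hi.1 p) i := by
    intro p i hi
    refine ⟨hi.1, ?_⟩
    rw [hsw p i hi]
    simp [e]
  have hswlt : ∀ p i (hi : P p i), ∀ i' < i, (P (sw i hi.1 p) i' ↔ P p i') := by
    intro p i hi i' hlt
    have h0 := hi.1
    refine exists_congr fun h => ?_
    rw [hsw p i hi]
    have : e i hi.1 ⟨i', by omega⟩ = ⟨i', by omega⟩ :=
      Equiv.swap_apply_of_ne_of_ne (by simp; omega) (by simp; omega)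
    rw [this]
    simp
  let g : (Fin N → ℕ) → (Fin N → ℕ) := fun p =>
    if h : ∃ i, P p i then sw (Nat.find h) (Nat.find_spec h).1 p else p
  have hg : ∀ p, (∃ i, P p i) → ∃ i, ∃ hi : P p i, g p = sw i hi.1 p ∧ g (g p) = p := by
    intro p h
    have h1 : g p = sw (Nat.find h) (Nat.find_spec h).1 p := dif_pos h
    have h2 : ∃ i, P (g p) i := ⟨_, by rw [h1]; exact hswP p _ (Nat.find_spec h)⟩
    have h3 : Nat.find h2 = Nat.find h := by
      rw [Nat.find_eq_iff]
      refine ⟨by rw [h1]; exact hswP p _ (Nat.find_spec h), fun i' hi' => ?_⟩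
      rw [h1, hswlt p _ (Nat.find_spec h) i' hi']
      exact Nat.find_min h hi'
    refine ⟨Nat.find h, Nat.find_spec h, h1, ?_⟩
    have h4 : g (g p) = sw (Nat.find h2) (Nat.find_spec h2).1 (g p) := dif_pos h2
    funext j
    have h5 := hsw (g p) _ (Nat.find_spec h2) j
    rw [← h4] at h5
    have h6 : e (Nat.find h2) (Nat.find_spec h2).1 = e (Nat.find h) (Nat.find_spec h).1 := by
      congr 1
    rw [h6] at h5
    have h7 := hsw p _ (Nat.find_spec h) (e (Nat.find h) (Nat.find_spec h).1 j)
    rw [← h1] at h7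
    have h8 : e (Nat.find h) (Nat.find_spec h).1 (e (Nat.find h) (Nat.find_spec h).1 j) = j :=
      Equiv.swap_apply_self _ _ _
    rw [h8] at h7
    omega
  have hval : ∀ p i (hi : P p i), (fun j => x j - ((sw i hi.1 p j : ℕ) : ℤ)) =
      (fun j => x j - (p j : ℤ)) ∘ e i hi.1 := by
    intro p i hi
    funext j
    rw [hsw p i hi]
    simp
  have hne : ∀ i (h : i + 1 < N), (⟨i, by omega⟩ : Fin N) ≠ ⟨i + 1, h⟩ := by
    intro i h; simp
  refine sum_involution (fun p _ => g p) ?_ ?_ ?_ ?_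
  · intro p hp
    obtain ⟨i, hi, h1, -⟩ := hg p ((hP p).1 (mem_filter.1 hp).2)
    simp only [h1]
    rw [hval p i hi, hf _ _ _ (hne i hi.1)]
    ring
  · intro p hp hne0 heq
    obtain ⟨i, hi, h1, -⟩ := hg p ((hP p).1 (mem_filter.1 hp).2)
    have h2 := hval p i hi
    rw [← h1, heq] at h2
    have h3 := hf (fun j => x j - (p j : ℤ)) _ _ (hne i hi.1)
    change f (_ ∘ e i hi.1) = _ at h3
    rw [← h2] at h3
    omega
  · intro p hp
    rw [mem_filter, mem_compl] at hp ⊢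
    obtain ⟨i, hi, h1, -⟩ := hg p ((hP p).1 hp.2)
    refine ⟨?_, (hP _).2 ⟨i, by rw [h1]; exact hswP p i hi⟩⟩
    have : ∑ j, (g p j : ℤ) = ∑ j, (p j : ℤ) := by
      rw [h1]
      simp only [hsw p i hi, sum_sub_distrib]
      rw [Equiv.sum_comp (e i hi.1) x, Equiv.sum_comp (e i hi.1) (fun j => (p j : ℤ))]
      ring
    have h2 : ∑ j, g p j = ∑ j, p j := by exact_mod_cast this
    exact (congrArg (· + a) h2).trans hp.1
  · intro p hp
    obtain ⟨i, hi, -, h2⟩ := hg p ((hP p).1 (mem_filter.1 hp).2)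
    exact h2

/-! ### Steps between partitions in a box -/

open Classical in
/-- The partitions `τ ⊆ κ` with `κ - τ` having entries in `{0, 1}` and sum `N - a`: if the vectors
list column lengths, `κ/τ` is a horizontal strip. -/
noncomputable def stepE {N : ℕ} (a : ℕ) (κ : Fin N → ℕ) : Finset (Fin N → ℕ) :=
  (Fintype.piFinset fun j => range (κ j + 1)).filter fun τ =>
    Antitone τ ∧ (∀ j, κ j ≤ τ j + 1) ∧ ∑ j, τ j + N = ∑ j, κ j + a

open Classical in
/-- The partitions `τ ⊆ κ` interlacing with `κ` and with `κ - τ` of sum `N - a`: if the vectors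
list row lengths, `κ/τ` is a horizontal strip. -/
noncomputable def stepH {N : ℕ} (a : ℕ) (κ : Fin N → ℕ) : Finset (Fin N → ℕ) :=
  (Fintype.piFinset fun j => range (κ j + 1)).filter fun τ =>
    Antitone τ ∧ (∀ i j, i < j → κ j ≤ τ i) ∧ ∑ j, τ j + N = ∑ j, κ j + a

lemma mem_stepE {N a : ℕ} {κ τ : Fin N → ℕ} : τ ∈ stepE a κ ↔ (∀ j, τ j ≤ κ j) ∧
    Antitone τ ∧ (∀ j, κ j ≤ τ j + 1) ∧ ∑ j, τ j + N = ∑ j, κ j + a := by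
  simp [stepE]

lemma mem_stepH {N a : ℕ} {κ τ : Fin N → ℕ} : τ ∈ stepH a κ ↔ (∀ j, τ j ≤ κ j) ∧
    Antitone τ ∧ (∀ i j, i < j → κ j ≤ τ i) ∧ ∑ j, τ j + N = ∑ j, κ j + a := by
  simp [stepH]

lemma opE_vec {N a : ℕ} {f : (Fin N → ℤ) → ℤ} (hf : Alt f) (hf' : NonnegSupp f)
    {κ : Fin N → ℕ} (hκ : Antitone κ) :
    opE a f (vec κ) = ∑ τ ∈ stepE a κ, f (vec τ) := by
  classical
  rw [opE_eq_sum_strict hf (strictAnti_vec.2 hκ)]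
  symm
  have key : ∀ τ : Fin N → ℕ, (∀ j, τ j ≤ κ j) → (∀ j, κ j ≤ τ j + 1) →
      (fun j => vec κ j - if j ∈ univ.filter (fun j => τ j = κ j) then (0 : ℤ) else 1) = vec τ := by
    intro τ h1 h2
    funext j
    have := h1 j
    have := h2 j
    simp only [vec, mem_filter, mem_univ, true_and]
    split_ifs <;> omega
  refine sum_bij_ne_zero (fun τ _ _ => univ.filter (fun j => τ j = κ j)) ?_ ?_ ?_ ?_
  · intro τ hτ _
    obtain ⟨h1, h2, h3, h4⟩ := mem_stepE.1 hτ
    rw [mem_filter, key τ h1 h3, mem_powersetCard]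
    refine ⟨⟨subset_univ _, ?_⟩, strictAnti_vec.2 h2⟩
    have : ∑ j, (τ j + 1) = ∑ j, (κ j + if τ j = κ j then 1 else 0) := by
      refine sum_congr rfl fun j _ => ?_
      have := h1 j
      have := h3 j
      split_ifs <;> omega
    simp only [sum_add_distrib, sum_const, card_univ, Fintype.card_fin, smul_eq_mul, mul_one,
      sum_boole, Nat.cast_id] at this
    omega
  · intro τ hτ _ τ' hτ' _ heq
    obtain ⟨h1, h2, h3, h4⟩ := mem_stepE.1 hτ
    obtain ⟨h1', h2', h3', h4'⟩ := mem_stepE.1 hτ'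
    apply vec_injective
    rw [← key τ h1 h3, ← key τ' h1' h3']
    rw [heq]
  · intro C hC hne
    rw [mem_filter, mem_powersetCard] at hC
    obtain ⟨⟨-, hcard⟩, hst⟩ := hC
    -- a coordinate equal to `0` cannot be lowered, as `f` vanishes there
    have hpos : ∀ j, j ∉ C → 1 ≤ κ j := by
      intro j hj
      by_contra hcon
      have hz : κ j = 0 := by omega
      have hN := j.2
      have hl := strictAnti_gap hst (i := j) (j := ⟨N - 1, by omega⟩)
        (Fin.le_def.2 (by simp; omega))
      refine hne (hf' _ ⟨N - 1, by omega⟩ ?_)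
      simp only [vec, hz, if_neg hj] at hl ⊢
      have : κ ⟨N - 1, by omega⟩ ≤ κ j := hκ (Fin.le_def.2 (by simp; omega))
      push_cast [Nat.cast_sub (show 1 ≤ N by omega)] at *
      omega
    have hv : vec (fun j => κ j - if j ∈ C then 0 else 1) =
        fun j => vec κ j - if j ∈ C then (0 : ℤ) else 1 := by
      funext j
      simp only [vec]
      by_cases hj : j ∈ C
      · simp [hj]
      · have := hpos j hj
        simp only [hj, if_false]; omega
    refine ⟨fun j => κ j - if j ∈ C then 0 else 1, ?_, ?_, ?_⟩
    · rw [mem_stepE]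
      refine ⟨fun j => Nat.sub_le _ _, ?_, ?_, ?_⟩
      · rw [← strictAnti_vec, hv]; exact hst
      · intro j; split_ifs <;> omega
      · have : ∑ j, ((κ j - if j ∈ C then 0 else 1) + 1) =
            ∑ j, (κ j + if j ∈ C then 1 else 0) := by
          refine sum_congr rfl fun j _ => ?_
          by_cases hj : j ∈ C
          · simp [hj]
          · have := hpos j hj
            simp [hj]; omega
        simp only [sum_add_distrib, sum_const, card_univ, Fintype.card_fin, smul_eq_mul, mul_one,
          sum_boole, Nat.cast_id, filter_univ_mem, hcard] at this
        exact this
    · rw [hv]; exact hne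
    · ext j
      simp only [mem_filter, mem_univ, true_and]
      by_cases hj : j ∈ C
      · simp [hj]
      · have := hpos j hj
        simp [hj]; omega
  · intro τ hτ _
    obtain ⟨h1, h2, h3, h4⟩ := mem_stepE.1 hτ
    rw [key τ h1 h3]

lemma opH_vec {N a : ℕ} {f : (Fin N → ℤ) → ℤ} (hf : Alt f) (hf' : NonnegSupp f)
    {κ : Fin N → ℕ} (hκ : Antitone κ) :
    opH a f (vec κ) = ∑ τ ∈ stepH a κ, f (vec τ) := by
  classical
  rw [opH_eq_sum_inter hf (strictAnti_vec.2 hκ)]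
  symm
  refine sum_bij_ne_zero (fun τ _ _ => fun j => κ j - τ j) ?_ ?_ ?_ ?_
  · intro τ hτ _
    obtain ⟨h1, h2, h3, h4⟩ := mem_stepH.1 hτ
    rw [mem_filter, mem_compl]
    constructor
    · have : ∑ j, (κ j - τ j) + ∑ j, τ j = ∑ j, κ j := by
        rw [← sum_add_distrib]
        exact sum_congr rfl fun j _ => Nat.sub_add_cancel (h1 j)
      omega
    · intro i j hij
      have := h3 i j (Fin.lt_def.2 (by omega))
      have := h1 i
      simp only [vec]
      omega
  · intro τ hτ _ τ' hτ' _ heq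
    obtain ⟨h1, -⟩ := mem_stepH.1 hτ
    obtain ⟨h1', -⟩ := mem_stepH.1 hτ'
    funext j
    have := congrFun heq j
    have := h1 j
    have := h1' j
    omega
  · intro p hp hne
    rw [mem_filter, mem_compl] at hp
    obtain ⟨hsum, hinterlace⟩ := hp
    -- nonnegativity bounds the last coordinate, interlacing bounds the others
    have hle : ∀ j, p j ≤ κ j := by
      intro j
      by_cases hj : (j : ℕ) + 1 < N
      · have := hinterlace j ⟨j + 1, hj⟩ rfl
        simp only [vec] at this
        push_cast at this
        omega
      · by_contra hcon
        refine hne (hf' _ j ?_)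
        simp only [vec]
        have := j.2
        omega
    have hv : vec (fun j => κ j - p j) = fun j => vec κ j - p j := by
      funext j
      have := hle j
      simp only [vec]
      omega
    have hadj : ∀ i j : Fin N, i < j → κ j ≤ κ i - p i := by
      intro i j hij
      have hij' : (i : ℕ) < j := hij
      have hlt : (i : ℕ) + 1 < N := by have := j.2; omega
      have h1 := hinterlace i ⟨i + 1, hlt⟩ rfl
      have h2 : κ j ≤ κ ⟨i + 1, hlt⟩ := hκ (Fin.le_def.2 (by simp; omega))
      simp only [vec] at h1
      push_cast at h1
      omega
    refine ⟨fun j => κ j - p j, ?_, ?_, ?_⟩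
    · rw [mem_stepH]
      refine ⟨fun j => Nat.sub_le _ _, ?_, hadj, ?_⟩
      · intro i j hij
        rcases hij.eq_or_lt with h | h
        · rw [h]
        · have := hadj i j h
          dsimp only
          omega
      · have : ∑ j, (κ j - p j) + ∑ j, p j = ∑ j, κ j := by
          rw [← sum_add_distrib]
          exact sum_congr rfl fun j _ => Nat.sub_add_cancel (hle j)
        omega
    · rw [hv]; exact hne
    · funext j
      have := hle j
      simp only
      omega
  · intro τ hτ _
    obtain ⟨h1, -⟩ := mem_stepH.1 hτ
    congr 1
    funext j
    have := h1 j
    simp only [vec]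
    omega

/-- The staircase partition `(N, N - 1, …, 1)`. -/
def stair (N : ℕ) : Fin N → ℕ := fun j => N - j

lemma stair_antitone (N : ℕ) : Antitone (stair N) := by
  intro i j h
  have : (i : ℕ) ≤ j := h
  simp only [stair]; omega

/-- Horizontal and vertical strips removed from a staircase are both just sets of corners. -/
lemma stepE_stair (N a : ℕ) : stepE a (stair N) = stepH a (stair N) := by
  ext τ
  rw [mem_stepE, mem_stepH]
  refine and_congr_right fun h1 => and_congr_right fun h2 => and_congr_left fun _ => ?_
  constructor
  · intro h i j hij
    have := h i
    have : (i : ℕ) < j := hij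
    simp only [stair] at *
    omega
  · intro h j
    by_cases hj : (j : ℕ) + 1 < N
    · have := h j ⟨j + 1, hj⟩ (Fin.lt_def.2 (by simp))
      simp only [stair] at *
      omega
    · simp only [stair]; omega

/-- On the staircase all `opE` may be replaced by `opH`: the outermost one by `stepE_stair`, and
commutativity lets each of the others become the outermost one in turn. -/
lemma opsE_stair {N : ℕ} (α : ℕ → ℕ) {f : (Fin N → ℤ) → ℤ} (hf : Alt f) (hf' : NonnegSupp f)
    (t s : ℕ) : opsE α t s f (vec (stair N)) = opsH α t s f (vec (stair N)) := by
  induction t generalizing s f with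
  | zero => rfl
  | succ t ih =>
    simp only [opsE, opsH]
    rw [opE_vec (hf.opsE t _) (hf'.opsE t _) (stair_antitone N), stepE_stair,
      ← opH_vec (hf.opsE t _) (hf'.opsE t _) (stair_antitone N), ← opsE_opH_comm,
      ih hf.opH hf'.opH, opsH_opH_comm]

/-! ### The alternating delta function -/

/-- The alternating function equal to `sign σ` at `y ∘ σ` and to `0` off the orbit of `y` (for
injective `y`), written as a determinant. -/
noncomputable def delta {N : ℕ} (y : Fin N → ℤ) (x : Fin N → ℤ) : ℤ :=
  (Matrix.of fun i j => if x i = y j then (1 : ℤ) else 0).det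

lemma delta_alt {N : ℕ} (y : Fin N → ℤ) : Alt (delta y) := by
  intro x i j hij
  unfold delta
  have := Matrix.det_permute (Equiv.swap i j)
    (Matrix.of fun i j => if x i = y j then (1 : ℤ) else 0)
  rw [Equiv.Perm.sign_swap hij] at this
  simp only [Units.val_neg, Units.val_one, Int.cast_neg, Int.cast_one, neg_one_mul] at this
  exact this

lemma delta_eq_zero {N : ℕ} {y x : Fin N → ℤ} {i : Fin N} (h : ∀ j, x i ≠ y j) :
    delta y x = 0 :=
  Matrix.det_eq_zero_of_row_eq_zero i fun j => by simp [h j]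

lemma delta_nonnegSupp {N : ℕ} {y : Fin N → ℤ} (hy : ∀ j, 0 ≤ y j) : NonnegSupp (delta y) := by
  intro x i hi
  refine delta_eq_zero (i := i) fun j h => ?_
  have := hy j
  omega

lemma delta_strict {N : ℕ} {x y : Fin N → ℤ} (hx : StrictAnti x) (hy : StrictAnti y) :
    delta y x = if x = y then 1 else 0 := by
  split_ifs with h
  · subst h
    have : (Matrix.of fun i j => if x i = x j then (1 : ℤ) else 0) = 1 := by
      ext i j
      simp [Matrix.one_apply, hx.injective.eq_iff]
    rw [delta, this, Matrix.det_one]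
  · by_contra hne
    apply h
    have hsub : ∀ i, ∃ j, x i = y j := by
      intro i
      by_contra hcon
      push Not at hcon
      exact hne (delta_eq_zero hcon)
    have himg : univ.image x = univ.image y := by
      apply eq_of_subset_of_card_le
      · intro v hv
        simp only [mem_image, mem_univ, true_and] at hv ⊢
        obtain ⟨i, rfl⟩ := hv
        obtain ⟨j, hj⟩ := hsub i
        exact ⟨j, hj.symm⟩
      · rw [card_image_of_injective _ hx.injective, card_image_of_injective _ hy.injective]
    have hrange : Set.range x = Set.range y := by
      have := congrArg (fun s : Finset ℤ => (s : Set ℤ)) himg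
      simpa using this
    have h1 : StrictMono (fun i => - x i) := fun i j hij => neg_lt_neg (hx hij)
    have h2 : StrictMono (fun i => - y i) := fun i j hij => neg_lt_neg (hy hij)
    have h3 : Set.range (fun i => - x i) = Set.range (fun i => - y i) := by
      have := congrArg (fun s : Set ℤ => Neg.neg '' s) hrange
      simp only [← Set.range_comp] at this
      exact this
    have h4 := (StrictMono.range_inj h1 h2).1 h3
    funext i
    have := congrFun h4 i
    simpa using this

lemma delta_vec {N : ℕ} {κ c : Fin N → ℕ} (hκ : Antitone κ) (hc : Antitone c) :
    delta (vec c) (vec κ) = if κ = c then 1 else 0 := by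
  rw [delta_strict (strictAnti_vec.2 hκ) (strictAnti_vec.2 hc)]
  simp only [vec_injective.eq_iff]

lemma vec_nonneg {N : ℕ} (c : Fin N → ℕ) (j : Fin N) : 0 ≤ vec c j := by
  have := j.2
  simp only [vec]; omega

/-! ### Conjugation -/

/-- The conjugate of a partition contained in the `N × N` box. -/
def conj {N : ℕ} (κ : Fin N → ℕ) : Fin N → ℕ := fun i => #{j | (i : ℕ) < κ j}

lemma lt_conj {N : ℕ} {κ : Fin N → ℕ} (hκ : Antitone κ) (i j : Fin N) :
    (j : ℕ) < conj κ i ↔ (i : ℕ) < κ j := by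
  constructor
  · intro h
    by_contra hcon
    have hs : ({j | (i : ℕ) < κ j} : Finset (Fin N)) ⊆ Finset.Iio j := by
      intro l hl
      simp only [mem_filter, mem_univ, true_and] at hl
      rw [mem_Iio]
      by_contra hlj
      have := hκ (not_lt.1 hlj)
      omega
    have := card_le_card hs
    rw [Fin.card_Iio] at this
    simp only [conj] at h
    omega
  · intro h
    have hs : Finset.Iic j ⊆ ({j | (i : ℕ) < κ j} : Finset (Fin N)) := by
      intro l hl
      simp only [mem_filter, mem_univ, true_and]
      exact h.trans_le (hκ (mem_Iic.1 hl))
    have := card_le_card hs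
    rw [Fin.card_Iic] at this
    simp only [conj]
    omega

lemma conj_le {N : ℕ} (κ : Fin N → ℕ) (i : Fin N) : conj κ i ≤ N :=
  (card_filter_le _ _).trans (by simp)

lemma conj_antitone {N : ℕ} (κ : Fin N → ℕ) : Antitone (conj κ) := by
  intro i j h
  refine card_le_card fun l hl => ?_
  have : (i : ℕ) ≤ j := h
  simp only [mem_filter, mem_univ, true_and] at *
  omega

/-- A conjugate is recognized by the membership of cells. -/
lemma eq_conj {N : ℕ} {κ κ' : Fin N → ℕ} (hκ' : ∀ i, κ' i ≤ N)
    (h : ∀ i j : Fin N, (i : ℕ) < κ j ↔ (j : ℕ) < κ' i) : conj κ = κ' := by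
  funext i
  unfold conj
  simp only [h]
  have := hκ' i
  rw [Fin.card_filter_val_lt]
  omega

lemma conj_conj {N : ℕ} {κ : Fin N → ℕ} (hκ : Antitone κ) (hN : ∀ i, κ i ≤ N) :
    conj (conj κ) = κ :=
  eq_conj hN fun i j => lt_conj hκ j i

lemma sum_conj {N : ℕ} {κ : Fin N → ℕ} (hN : ∀ i, κ i ≤ N) : ∑ i, conj κ i = ∑ i, κ i := by
  simp only [conj, card_filter]
  rw [sum_comm]
  refine sum_congr rfl fun j _ => ?_
  have := hN j
  rw [← card_filter, Fin.card_filter_val_lt]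
  omega

lemma conj_mono {N : ℕ} {κ τ : Fin N → ℕ} (h : ∀ j, τ j ≤ κ j) (i : Fin N) :
    conj τ i ≤ conj κ i := by
  refine card_le_card fun l hl => ?_
  have := h l
  simp only [mem_filter, mem_univ, true_and] at *
  omega

lemma conj_mem_stepE {N a : ℕ} {κ τ : Fin N → ℕ} (hκ : Antitone κ) (hN : ∀ i, κ i ≤ N)
    (h : τ ∈ stepH a κ) : conj τ ∈ stepE a (conj κ) := by
  obtain ⟨h1, h2, h3, h4⟩ := mem_stepH.1 h
  have hN' : ∀ i, τ i ≤ N := fun i => (h1 i).trans (hN i)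
  refine mem_stepE.2 ⟨conj_mono h1, conj_antitone τ, fun r => ?_, ?_⟩
  · by_contra hcon
    have hle := conj_le κ r
    have a1 := (lt_conj hκ r ⟨conj τ r + 1, by omega⟩).1 (by simpa using hcon)
    have a2 := h3 ⟨conj τ r, by omega⟩ ⟨conj τ r + 1, by omega⟩ (Fin.lt_def.2 (by simp))
    have a3 := (lt_conj h2 r ⟨conj τ r, by omega⟩).2 (a1.trans_le a2)
    simp at a3
  · rw [sum_conj hN', sum_conj hN, h4]

lemma conj_mem_stepH {N a : ℕ} {κ τ : Fin N → ℕ} (hκ : Antitone κ) (hN : ∀ i, κ i ≤ N)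
    (h : τ ∈ stepE a κ) : conj τ ∈ stepH a (conj κ) := by
  obtain ⟨h1, h2, h3, h4⟩ := mem_stepE.1 h
  have hN' : ∀ i, τ i ≤ N := fun i => (h1 i).trans (hN i)
  refine mem_stepH.2 ⟨conj_mono h1, conj_antitone τ, fun i j hij => ?_, ?_⟩
  · by_contra hcon
    have hle := conj_le κ j
    have a1 := (lt_conj hκ j ⟨conj τ i, by omega⟩).1 (by simpa using hcon)
    have a2 := h3 ⟨conj τ i, by omega⟩
    have a3 : (i : ℕ) < j := hij
    have a4 := (lt_conj h2 i ⟨conj τ i, by omega⟩).2 (by omega)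
    simp at a4
  · rw [sum_conj hN', sum_conj hN, h4]

/-- Conjugation exchanges vertical and horizontal strips, hence the two kinds of chains. -/
lemma opsE_conj {N : ℕ} (α : ℕ → ℕ) {c : Fin N → ℕ} (hc : Antitone c) (hcN : ∀ i, c i ≤ N)
    (t s : ℕ) {κ : Fin N → ℕ} (hκ : Antitone κ) (hN : ∀ i, κ i ≤ N) :
    opsE α t s (delta (vec (conj c))) (vec (conj κ)) = opsH α t s (delta (vec c)) (vec κ) := by
  induction t generalizing s κ with
  | zero =>
    simp only [opsE, opsH]
    rw [delta_vec (conj_antitone _) (conj_antitone _), delta_vec hκ hc]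
    congr 1
    refine propext ⟨fun h => ?_, fun h => by rw [h]⟩
    rw [← conj_conj hκ hN, h, conj_conj hc hcN]
  | succ t ih =>
    simp only [opsE, opsH]
    rw [opE_vec ((delta_alt _).opsE t _) ((delta_nonnegSupp (vec_nonneg _)).opsE t _)
        (conj_antitone κ),
      opH_vec ((delta_alt _).opsH t _) ((delta_nonnegSupp (vec_nonneg _)).opsH t _) hκ]
    symm
    have hτN : ∀ τ ∈ stepH (α (s + 1)) κ, ∀ i, τ i ≤ N := fun τ hτ i =>
      ((mem_stepH.1 hτ).1 i).trans (hN i)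
    refine sum_nbij' conj conj (fun τ hτ => conj_mem_stepE hκ hN hτ) ?_ ?_ ?_ ?_
    · intro τ hτ
      have := conj_mem_stepH (conj_antitone κ) (conj_le κ) hτ
      rwa [conj_conj hκ hN] at this
    · intro τ hτ
      exact conj_conj (mem_stepH.1 hτ).2.1 (hτN τ hτ)
    · intro τ hτ
      have h := mem_stepE.1 hτ
      exact conj_conj h.2.1 fun i => (h.1 i).trans (conj_le κ i)
    · intro τ hτ
      exact (ih (s + 1) (mem_stepH.1 hτ).2.1 (hτN τ hτ)).symm

lemma conj_stair (N : ℕ) : conj (stair N) = stair N := by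
  refine eq_conj (fun i => by simp [stair]) fun i j => ?_
  simp only [stair]; omega

/-! ### Removing the smallest letter of a tableau -/

/-- The cells of the skew diagram whose column `j` (for `j < N`) occupies the rows
`ν j, …, K j - 1`; rows are numbered downwards. -/
def cells {N : ℕ} (ν K : Fin N → ℕ) : Set (ℕ × ℕ) :=
  {p | ∃ j : Fin N, p.2 = j ∧ ν j ≤ p.1 ∧ p.1 < K j}

/-- The semistandard tableaux on `cells ν K` with all entries larger than `s` and with `α v`
entries equal to `v` for each `v > s`. The set is empty unless `ν ≤ K`. -/
def Tab {N : ℕ} (α : ℕ → ℕ) (K : Fin N → ℕ) (s : ℕ) (ν : Fin N → ℕ) : Set (ℕ × ℕ → ℕ) :=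
  {T | (∀ j, ν j ≤ K j) ∧ IsSSYT (cells ν K) T ∧ (∀ p ∈ cells ν K, s < T p) ∧
    ∀ v, s < v → contentOf (cells ν K) T v = α v}

/-- The top boundary after the top cell of each column in `C` is deleted. -/
def bump {N : ℕ} (ν : Fin N → ℕ) (C : Finset (Fin N)) : Fin N → ℕ :=
  fun j => ν j + if j ∈ C then 1 else 0

open Classical in
/-- Put the letter `s + 1` into the top cells of the columns in `C`. -/
noncomputable def addTop {N : ℕ} (ν : Fin N → ℕ) (C : Finset (Fin N)) (s : ℕ)
    (T : ℕ × ℕ → ℕ) : ℕ × ℕ → ℕ :=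
  fun p => if ∃ j ∈ C, p = (ν j, (j : ℕ)) then s + 1 else T p

lemma mk_mem_cells {N : ℕ} {ν K : Fin N → ℕ} {r : ℕ} {j : Fin N} :
    (r, (j : ℕ)) ∈ cells ν K ↔ ν j ≤ r ∧ r < K j := by
  constructor
  · rintro ⟨l, h, h'⟩
    have : j = l := Fin.ext h
    subst this; exact h'
  · intro h; exact ⟨j, rfl, h⟩

lemma cells_finite {N : ℕ} (ν K : Fin N → ℕ) : (cells ν K).Finite := by
  refine ((Set.finite_Iio (∑ j, K j)).prod (Set.finite_Iio N)).subset ?_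
  rintro ⟨r, _⟩ ⟨j, rfl, h1, h2⟩
  have := single_le_sum (f := K) (fun i _ => Nat.zero_le _) (mem_univ j)
  exact ⟨lt_of_lt_of_le h2 this, j.2⟩

lemma mem_top_iff {N : ℕ} {ν : Fin N → ℕ} {C : Finset (Fin N)} {r : ℕ} {j : Fin N} :
    (∃ l ∈ C, ((r, (j : ℕ)) : ℕ × ℕ) = (ν l, (l : ℕ))) ↔ j ∈ C ∧ r = ν j := by
  constructor
  · rintro ⟨l, hl, h⟩
    rw [Prod.mk.injEq] at h
    have : j = l := Fin.ext h.2
    subst this; exact ⟨hl, h.1⟩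
  · rintro ⟨h, rfl⟩; exact ⟨j, h, rfl⟩

lemma addTop_mk {N : ℕ} {ν : Fin N → ℕ} {C : Finset (Fin N)} {s : ℕ} {T : ℕ × ℕ → ℕ}
    {r : ℕ} {j : Fin N} :
    addTop ν C s T (r, j) = if j ∈ C ∧ r = ν j then s + 1 else T (r, j) := by
  classical
  unfold addTop
  simp only [mem_top_iff]

lemma ncard_top {N : ℕ} (ν : Fin N → ℕ) (C : Finset (Fin N)) :
    ((fun j : Fin N => (ν j, (j : ℕ))) '' (C : Set (Fin N))).ncard = #C := by
  rw [Set.ncard_image_of_injective, Set.ncard_coe_finset]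
  intro i j h
  exact Fin.ext (Prod.mk.inj h).2

lemma addTop_mem {N : ℕ} {α : ℕ → ℕ} {K ν : Fin N → ℕ} {C : Finset (Fin N)} {s : ℕ}
    {T : ℕ × ℕ → ℕ} (hν : Antitone ν) (hb : Antitone (bump ν C)) (hC : #C = α (s + 1))
    (hT : T ∈ Tab α K (s + 1) (bump ν C)) : addTop ν C s T ∈ Tab α K s ν := by
  obtain ⟨hle, ⟨hpos, hout, hrow, hcol⟩, hgt, hcont⟩ := hT
  have hmem : ∀ r (j : Fin N), (r, (j : ℕ)) ∈ cells ν K ↔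
      (j ∈ C ∧ r = ν j) ∨ (r, (j : ℕ)) ∈ cells (bump ν C) K := by
    intro r j
    have h1 := hle j
    rw [mk_mem_cells, mk_mem_cells]
    simp only [bump] at *
    by_cases hj : j ∈ C
    · simp only [hj, if_true, true_and] at *; omega
    · simp [hj]
  have htop : ∀ j, j ∈ C → (ν j, (j : ℕ)) ∉ cells (bump ν C) K := by
    intro j hj h
    rw [mk_mem_cells] at h
    simp only [bump, hj, if_true] at h
    omega
  have hval : ∀ r (j : Fin N), (r, (j : ℕ)) ∈ cells ν K →
      ((j ∈ C ∧ r = ν j) ∧ addTop ν C s T (r, j) = s + 1) ∨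
      ((r, (j : ℕ)) ∈ cells (bump ν C) K ∧ ¬ (j ∈ C ∧ r = ν j) ∧
        addTop ν C s T (r, j) = T (r, j) ∧ s + 1 < T (r, j)) := by
    intro r j h
    rw [addTop_mk]
    by_cases h' : j ∈ C ∧ r = ν j
    · exact Or.inl ⟨h', if_pos h'⟩
    · have h2 := ((hmem r j).1 h).resolve_left h'
      exact Or.inr ⟨h2, h', if_neg h', hgt _ h2⟩
  refine ⟨fun j => ?_, ⟨?_, ?_, ?_, ?_⟩, ?_, ?_⟩
  · have := hle j
    simp only [bump] at this
    omega
  · rintro ⟨r, _⟩ ⟨j, rfl, h⟩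
    rcases hval r j ⟨j, rfl, h⟩ with h1 | h1
    · rw [h1.2]; omega
    · rw [h1.2.2.1]; omega
  · rintro ⟨r, j⟩ h
    unfold addTop
    rw [if_neg, hout]
    · rintro ⟨l, h1, h2⟩
      apply h
      simp only at h1 h2
      subst h1
      exact (hmem r l).2 (Or.inr ⟨l, rfl, h2⟩)
    · rintro ⟨l, hl, h'⟩
      rw [Prod.mk.injEq] at h'
      obtain ⟨rfl, rfl⟩ := h'
      exact h ((hmem _ l).2 (Or.inl ⟨hl, rfl⟩))
  · rintro i _ _ hj ⟨j1, rfl, h1⟩ ⟨j2, rfl, h2⟩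
    have hj' : j1 ≤ j2 := hj
    simp only at h1 h2
    rcases hval i j1 ⟨j1, rfl, h1⟩ with h3 | h3
    · rcases hval i j2 ⟨j2, rfl, h2⟩ with h4 | h4
      · rw [h3.2, h4.2]
      · rw [h3.2, h4.2.2.1]; omega
    · rcases hval i j2 ⟨j2, rfl, h2⟩ with h4 | h4
      · -- the top cell of a lengthened column forces the cell to its left to be a top cell too
        exfalso
        apply h3.2.1
        have h5 := hb hj'
        have h6 := hν hj'
        simp only [bump, h4.1.1, if_true] at h5
        have h7 := h4.1.2
        by_cases hjC : j1 ∈ C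
        · exact ⟨hjC, by omega⟩
        · simp only [hjC, if_false] at h5; omega
      · rw [h3.2.2.1, h4.2.2.1]
        exact hrow i j1 j2 hj h3.1 h4.1
  · rintro i1 i2 _ hi ⟨j, rfl, h1⟩ ⟨j', hjj, h2⟩
    have : j = j' := Fin.ext hjj
    subst this
    simp only at h1 h2
    rcases hval i2 j ⟨j, rfl, h2⟩ with h4 | h4
    · have := h4.1.2; omega
    · rcases hval i1 j ⟨j, rfl, h1⟩ with h3 | h3
      · rw [h3.2, h4.2.2.1]; omega
      · rw [h3.2.2.1, h4.2.2.1]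
        exact hcol i1 i2 j hi h3.1 h4.1
  · rintro ⟨r, _⟩ ⟨j, rfl, h⟩
    rcases hval r j ⟨j, rfl, h⟩ with h1 | h1
    · rw [h1.2]; omega
    · rw [h1.2.2.1]; omega
  · intro v hv
    rcases Nat.lt_or_ge (s + 1) v with hv' | hv'
    · rw [← hcont v hv']
      unfold contentOf
      congr 1
      ext ⟨r, q⟩
      constructor
      · rintro ⟨⟨j, h0, h⟩, hT⟩
        simp only at h0; subst h0
        rcases hval r j ⟨j, rfl, h⟩ with h1 | h1
        · rw [h1.2] at hT; omega
        · exact ⟨h1.1, by rw [← h1.2.2.1]; exact hT⟩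
      · rintro ⟨⟨j, h0, h⟩, hT⟩
        simp only at h0; subst h0
        have hm := (hmem r j).2 (Or.inr ⟨j, rfl, h⟩)
        refine ⟨hm, ?_⟩
        rcases hval r j hm with h1 | h1
        · have hb' : (r, (j : ℕ)) ∈ cells (bump ν C) K := ⟨j, rfl, h⟩
          rw [h1.1.2] at hb'
          exact absurd hb' (htop j h1.1.1)
        · rw [h1.2.2.1]; exact hT
    · have : v = s + 1 := by omega
      subst this
      rw [← hC, ← ncard_top ν C]
      unfold contentOf
      congr 1
      ext ⟨r, q⟩
      constructor
      · rintro ⟨⟨j, h0, h⟩, hT⟩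
        simp only at h0; subst h0
        rcases hval r j ⟨j, rfl, h⟩ with h1 | h1
        · exact ⟨j, h1.1.1, by rw [h1.1.2]⟩
        · rw [h1.2.2.1] at hT; omega
      · rintro ⟨j, hj, h⟩
        rw [Prod.mk.injEq] at h
        obtain ⟨rfl, rfl⟩ := h
        refine ⟨(hmem _ j).2 (Or.inl ⟨hj, rfl⟩), ?_⟩
        rw [addTop_mk, if_pos ⟨hj, rfl⟩]

/-- Every tableau with entries `> s` arises by adding letters `s + 1` on top of one with entries
`> s + 1`: these letters sit at column tops, and the rows being weakly increasing makes the
remaining top boundary weakly decreasing again. -/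
lemma exists_addTop {N : ℕ} {α : ℕ → ℕ} {K ν : Fin N → ℕ} {s : ℕ}
    {T : ℕ × ℕ → ℕ} (hν : Antitone ν) (hK : Antitone K) (hT : T ∈ Tab α K s ν) :
    ∃ C : Finset (Fin N), #C = α (s + 1) ∧ Antitone (bump ν C) ∧
      ∃ T' ∈ Tab α K (s + 1) (bump ν C), addTop ν C s T' = T := by
  classical
  obtain ⟨hle, ⟨hpos, hout, hrow, hcol⟩, hgt, hcont⟩ := hT
  set C : Finset (Fin N) := univ.filter fun j => T (ν j, j) = s + 1 with hCdef
  have hC : ∀ j, j ∈ C ↔ T (ν j, j) = s + 1 := by simp [hCdef]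
  have hCin : ∀ j, j ∈ C → ν j < K j := by
    intro j hj
    by_contra hcon
    have := hout (ν j, j) (by rw [mk_mem_cells]; omega)
    rw [(hC j).1 hj] at this
    omega
  -- the letter `s + 1` occurs only at the tops of columns
  have htop : ∀ r (j : Fin N), (r, (j : ℕ)) ∈ cells ν K → (T (r, j) = s + 1 ↔ j ∈ C ∧ r = ν j) := by
    intro r j h
    constructor
    · intro hs
      have h' := mk_mem_cells.1 h
      have hr : r = ν j := by
        by_contra hcon
        have hlt : ν j < r := by omega
        have hm : (ν j, (j : ℕ)) ∈ cells ν K := mk_mem_cells.2 (by omega)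
        have h1 := hcol (ν j) r j hlt hm h
        have h2 := hgt _ hm
        omega
      subst hr
      exact ⟨(hC j).2 hs, rfl⟩
    · rintro ⟨h1, rfl⟩; exact (hC j).1 h1
  have hmem : ∀ r (j : Fin N), (r, (j : ℕ)) ∈ cells (bump ν C) K ↔
      (r, (j : ℕ)) ∈ cells ν K ∧ ¬ (j ∈ C ∧ r = ν j) := by
    intro r j
    rw [mk_mem_cells, mk_mem_cells]
    simp only [bump]
    by_cases hj : j ∈ C
    · simp only [hj, if_true, true_and]; omega
    · simp [hj]
  have hsub : ∀ p ∈ cells (bump ν C) K, p ∈ cells ν K := by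
    rintro ⟨r, _⟩ ⟨j, rfl, h⟩
    exact ((hmem r j).1 ⟨j, rfl, h⟩).1
  let T' : ℕ × ℕ → ℕ := fun p => if T p = s + 1 then 0 else T p
  have hT' : ∀ p ∈ cells (bump ν C) K, T' p = T p ∧ s + 1 < T p := by
    rintro ⟨r, _⟩ ⟨j, rfl, h⟩
    have h1 := (hmem r j).1 ⟨j, rfl, h⟩
    have h2 : T (r, j) ≠ s + 1 := fun h3 => h1.2 ((htop r j h1.1).1 h3)
    have h3 := hgt _ h1.1
    exact ⟨if_neg h2, by omega⟩
  refine ⟨C, ?_, ?_, T', ⟨?_, ⟨?_, ?_, ?_, ?_⟩, ?_, ?_⟩, ?_⟩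
  · rw [← hcont (s + 1) (by omega), ← ncard_top ν C]
    unfold contentOf
    congr 1
    ext ⟨r, q⟩
    constructor
    · rintro ⟨j, hj, h⟩
      rw [Prod.mk.injEq] at h
      obtain ⟨rfl, rfl⟩ := h
      exact ⟨mk_mem_cells.2 ⟨le_rfl, hCin j hj⟩, (hC j).1 hj⟩
    · rintro ⟨⟨j, h0, h⟩, hs⟩
      simp only at h0; subst h0
      obtain ⟨h1, rfl⟩ := (htop r j ⟨j, rfl, h⟩).1 hs
      exact ⟨j, h1, rfl⟩
  · intro i j hij
    have h1 := hν hij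
    simp only [bump]
    by_cases hj : j ∈ C
    · by_cases he : ν i = ν j
      · have h2 := hCin j hj
        have h3 := hK hij
        have hmi : (ν i, (i : ℕ)) ∈ cells ν K := mk_mem_cells.2 (by omega)
        have hmj : (ν i, (j : ℕ)) ∈ cells ν K := mk_mem_cells.2 (by omega)
        have h4 := hrow (ν i) i j hij hmi hmj
        have h5 := hgt _ hmi
        have h6 := (hC j).1 hj
        rw [← he] at h6
        have hi : i ∈ C := (hC i).2 (by omega)
        simp only [hi, hj, if_true]; omega
      · simp only [hj, if_true]; omega
    · simp only [hj, if_false]; omega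
  · intro j
    have h1 := hle j
    simp only [bump]
    by_cases hj : j ∈ C
    · have := hCin j hj
      simp only [hj, if_true]; omega
    · simp only [hj, if_false]; omega
  · intro p hp
    have := hT' p hp
    omega
  · rintro ⟨r, q⟩ hp
    by_cases h : (r, q) ∈ cells ν K
    · obtain ⟨j, h0, h'⟩ := h
      simp only at h0; subst h0
      have hm : (r, (j : ℕ)) ∈ cells ν K := ⟨j, rfl, h'⟩
      have h2 : j ∈ C ∧ r = ν j := by
        by_contra hcon
        exact hp ((hmem r j).2 ⟨hm, hcon⟩)
      exact if_pos ((htop r j hm).2 h2)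
    · simp only [T', hout _ h]
      simp
  · intro i j1 j2 hj h1 h2
    rw [(hT' _ h1).1, (hT' _ h2).1]
    exact hrow i j1 j2 hj (hsub _ h1) (hsub _ h2)
  · intro i1 i2 j hi h1 h2
    rw [(hT' _ h1).1, (hT' _ h2).1]
    exact hcol i1 i2 j hi (hsub _ h1) (hsub _ h2)
  · intro p hp
    have := hT' p hp
    omega
  · intro v hv
    rw [← hcont v (by omega)]
    unfold contentOf
    congr 1
    ext ⟨r, q⟩
    constructor
    · rintro ⟨h, hs⟩
      exact ⟨hsub _ h, by rw [← (hT' _ h).1]; exact hs⟩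
    · rintro ⟨⟨j, h0, h⟩, hs⟩
      simp only at h0; subst h0
      have hm : (r, (j : ℕ)) ∈ cells (bump ν C) K := (hmem r j).2 ⟨⟨j, rfl, h⟩, fun h3 => by
        have := (htop r j ⟨j, rfl, h⟩).2 h3
        omega⟩
      exact ⟨hm, by rw [(hT' _ hm).1]; exact hs⟩
  · funext ⟨r, q⟩
    unfold addTop
    split_ifs with h
    · obtain ⟨j, hj, h⟩ := h
      rw [h]; exact ((hC j).1 hj).symm
    · by_cases hs : T (r, q) = s + 1
      · exfalso
        have hm : (r, q) ∈ cells ν K := by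
          by_contra hcon
          rw [hout _ hcon] at hs; omega
        obtain ⟨j, h0, h'⟩ := hm
        simp only at h0; subst h0
        exact h (mem_top_iff.2 ((htop r j ⟨j, rfl, h'⟩).1 hs))
      · exact if_neg hs

/-- The columns that received the letter `s + 1` can be read off the tableau. -/
lemma mem_of_addTop {N : ℕ} {α : ℕ → ℕ} {K ν : Fin N → ℕ} {C : Finset (Fin N)} {s : ℕ}
    {T : ℕ × ℕ → ℕ} (hT : T ∈ Tab α K (s + 1) (bump ν C)) (j : Fin N) :
    j ∈ C ↔ addTop ν C s T (ν j, j) = s + 1 := by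
  obtain ⟨hle, ⟨hpos, hout, hrow, hcol⟩, hgt, hcont⟩ := hT
  rw [addTop_mk]
  by_cases hj : j ∈ C
  · simp [hj]
  · simp only [hj, false_and, if_false, false_iff]
    intro h
    by_cases hm : (ν j, (j : ℕ)) ∈ cells (bump ν C) K
    · have := hgt _ hm; omega
    · have := hout _ hm; omega

lemma addTop_injOn {N : ℕ} {α : ℕ → ℕ} {K ν : Fin N → ℕ} {C : Finset (Fin N)} {s : ℕ} :
    Set.InjOn (addTop ν C s) (Tab α K (s + 1) (bump ν C)) := by
  intro T hT T' hT' h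
  funext p
  have hp := congrFun h p
  unfold addTop at hp
  split_ifs at hp with hc
  · obtain ⟨j, hj, rfl⟩ := hc
    have hn : (ν j, (j : ℕ)) ∉ cells (bump ν C) K := by
      rw [mk_mem_cells]
      simp [bump, hj]
    rw [hT.2.1.2.1 _ hn, hT'.2.1.2.1 _ hn]
  · exact hp

open Classical in
/-- Classification of tableaux by the set `C` of columns containing the smallest letter. -/
lemma tab_succ {N : ℕ} {α : ℕ → ℕ} {K ν : Fin N → ℕ} {s : ℕ} (hν : Antitone ν) (hK : Antitone K)
    (hfin : ∀ C, Antitone (bump ν C) → (Tab α K (s + 1) (bump ν C)).Finite) :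
    (Tab α K s ν).Finite ∧ (Tab α K s ν).ncard =
      ∑ C ∈ (powersetCard (α (s + 1)) univ).filter (fun C => Antitone (bump ν C)),
        (Tab α K (s + 1) (bump ν C)).ncard := by
  set S := (powersetCard (α (s + 1)) (univ : Finset (Fin N))).filter
    (fun C => Antitone (bump ν C)) with hS
  have hSm : ∀ C, C ∈ S ↔ #C = α (s + 1) ∧ Antitone (bump ν C) := by
    intro C; simp [hS, mem_powersetCard]
  have hU : Tab α K s ν = ⋃ C ∈ S, addTop ν C s '' Tab α K (s + 1) (bump ν C) := by
    ext T
    simp only [Set.mem_iUnion, Set.mem_image, exists_prop]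
    constructor
    · intro hT
      obtain ⟨C, h1, h2, h3⟩ := exists_addTop hν hK hT
      exact ⟨C, (hSm C).2 ⟨h1, h2⟩, h3⟩
    · rintro ⟨C, hC, T', hT', rfl⟩
      exact addTop_mem hν ((hSm C).1 hC).2 ((hSm C).1 hC).1 hT'
  have hF : ∀ C ∈ S, (addTop ν C s '' Tab α K (s + 1) (bump ν C)).Finite := fun C hC =>
    (hfin C ((hSm C).1 hC).2).image _
  have hfinite : (Tab α K s ν).Finite := by
    rw [hU]; exact S.finite_toSet.biUnion hF
  refine ⟨hfinite, ?_⟩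
  rw [Set.ncard_eq_toFinset_card _ hfinite]
  rw [card_eq_sum_card_fiberwise (f := fun T => univ.filter fun j => T (ν j, (j : ℕ)) = s + 1)
    (t := S)]
  · refine sum_congr rfl fun C hC => ?_
    rw [← (addTop_injOn (α := α) (K := K) (ν := ν) (C := C) (s := s)).ncard_image,
      ← Set.ncard_coe_finset]
    congr 1
    ext T
    simp only [coe_filter, Set.Finite.mem_toFinset, Set.mem_ofPred_eq]
    constructor
    · rintro ⟨hT, hTC⟩
      rw [hU] at hT
      simp only [Set.mem_iUnion, exists_prop] at hT
      obtain ⟨C', hC', T', hT', rfl⟩ := hT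
      have : C = C' := by
        rw [← hTC]; ext j
        simp [mem_of_addTop hT' j]
      subst this
      exact ⟨T', hT', rfl⟩
    · rintro ⟨T', hT', rfl⟩
      refine ⟨addTop_mem hν ((hSm C).1 hC).2 ((hSm C).1 hC).1 hT', ?_⟩
      ext j
      simp [mem_of_addTop hT' j]
  · intro T hT
    rw [Set.Finite.coe_toFinset, hU] at hT
    simp only [Set.mem_iUnion, exists_prop] at hT
    obtain ⟨C', hC', T', hT', rfl⟩ := hT
    have : (univ.filter fun j : Fin N => addTop ν C' s T' (ν j, (j : ℕ)) = s + 1) = C' := by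
      ext j
      simp [mem_of_addTop hT' j]
    simp only [this]
    exact hC'

/-- Tableau counts as iterated shift operators: the top boundary after the letters `1, …, s` is
`ν`, and `ν j + 1 - s` is the length of column `j` of the complementary partition. Adding a letter
to the columns in `C` lowers this length by one exactly in the columns outside `C`. -/
lemma ncard_tab {N : ℕ} {α : ℕ → ℕ} {c : Fin N → ℕ} (hc : Antitone c) {n : ℕ}
    (hα : ∀ v, n + 1 < v → α v = 0) (t s : ℕ) (hts : s + t = n + 1) {ν : Fin N → ℕ}
    (hν : Antitone ν) :
    (Tab α (fun j => n + c j) s ν).Finite ∧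
    ((Tab α (fun j => n + c j) s ν).ncard : ℤ) =
      opsE α t s (delta (vec c)) (fun j => vec ν j + 1 - s) := by
  classical
  have hK : Antitone (fun j => n + c j) := fun i j h => Nat.add_le_add_left (hc h) n
  have hstr : ∀ {μ : Fin N → ℕ} (s : ℕ), StrictAnti (fun j => vec μ j + 1 - (s : ℤ)) ↔
      Antitone μ := by
    intro μ s
    rw [← strictAnti_vec]
    refine ⟨fun h i j hij => ?_, fun h i j hij => ?_⟩
    · have := h hij; simp only at this; omega
    · have := h hij; simp only; omega
  induction t generalizing s ν with
  | zero =>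
    have hs : s = n + 1 := by omega
    subst hs
    simp only [opsE]
    rw [delta_strict ((hstr _).2 hν) (strictAnti_vec.2 hc)]
    by_cases hνK : ν = fun j => n + c j
    · have h1 : Tab α (fun j => n + c j) (n + 1) ν = {fun _ => 0} := by
        have hempty : cells ν (fun j => n + c j) = ∅ := by
          ext ⟨r, q⟩
          simp only [Set.mem_empty_iff_false, iff_false]
          rintro ⟨j, -, h⟩
          rw [hνK] at h
          omega
        ext T
        simp only [Tab, hempty, IsSSYT, contentOf, Set.mem_ofPred_eq, Set.mem_singleton_iff]
        constructor
        · rintro ⟨-, ⟨-, h, -⟩, -⟩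
          funext p; exact h p (by simp)
        · rintro rfl
          refine ⟨fun j => by rw [hνK], by simp, by simp, fun v hv => ?_⟩
          rw [hα v hv]; simp
      rw [h1]
      refine ⟨Set.finite_singleton _, ?_⟩
      rw [if_pos, Set.ncard_singleton]
      · rfl
      · funext j
        rw [hνK]
        simp only [vec]
        push_cast
        ring
    · have h1 : Tab α (fun j => n + c j) (n + 1) ν = ∅ := by
        ext T
        simp only [Set.mem_empty_iff_false, iff_false]
        rintro ⟨hle, -, hgt, hcont⟩
        apply hνK
        funext j
        by_contra hne
        have hlt : ν j < n + c j := lt_of_le_of_ne (hle j) hne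
        have hm : (ν j, (j : ℕ)) ∈ cells ν (fun j => n + c j) := mk_mem_cells.2 ⟨le_rfl, hlt⟩
        have h2 := hgt _ hm
        have h3 := hcont _ h2
        rw [hα _ h2, contentOf, Set.ncard_eq_zero ((cells_finite _ _).subset fun p hp => hp.1)] at h3
        have : (ν j, (j : ℕ)) ∈ ({p ∈ cells ν (fun j => n + c j) | T p = T (ν j, j)}) := ⟨hm, rfl⟩
        rw [h3] at this
        exact this
      rw [h1]
      refine ⟨Set.finite_empty, ?_⟩
      rw [if_neg, Set.ncard_empty]
      · rfl
      · intro h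
        apply hνK
        funext j
        have := congrFun h j
        simp only [vec] at this
        push_cast at this
        omega
  | succ t ih =>
    obtain ⟨h1, h2⟩ := tab_succ (α := α) (s := s) hν hK
      (fun C hC => (ih (s + 1) (by omega) hC).1)
    refine ⟨h1, ?_⟩
    rw [h2, opsE, opE_eq_sum_strict ((delta_alt _).opsE t _) ((hstr s).2 hν)]
    have hx : ∀ C : Finset (Fin N), (fun j => vec ν j + 1 - (s : ℤ) - if j ∈ C then (0 : ℤ) else 1)
        = fun j => vec (bump ν C) j + 1 - ((s + 1 : ℕ) : ℤ) := by
      intro C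
      funext j
      simp only [vec, bump]
      split_ifs <;> push_cast <;> ring
    simp only [hx, hstr]
    push_cast
    refine sum_congr rfl fun C hC => ?_
    have := (ih (s + 1) (by omega) (mem_filter.1 hC).2).2
    push_cast at this
    exact this

lemma SBF_eq_cells {n k : ℕ} (hk : k ≤ 1) {lam : ℕ → ℕ} {c : Fin (n + k) → ℕ}
    (hlam : ∀ i, lam i ≤ n + k)
    (h : ∀ (i : ℕ) (j : Fin (n + k)), (j : ℕ) < lam i ↔ i < c j) :
    SBF lam k n = cells (fun j => n + k - 1 - j) (fun j => n + c j) := by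
  ext ⟨r, q⟩
  simp only [SBF, staircaseCells, foundationCells, Set.mem_union, Set.mem_ofPred_eq]
  constructor
  · rintro (⟨h1, h2, h3⟩ | ⟨h1, h2, h3⟩)
    · exact ⟨⟨q, h3⟩, rfl, by simp only; omega, by simp only; omega⟩
    · have h4 := hlam (r - n)
      have h5 := (h (r - n) ⟨q, by omega⟩).1 h3
      exact ⟨⟨q, by omega⟩, rfl, by simp only; omega, by simp only; omega⟩
  · rintro ⟨j, rfl, h1, h2⟩
    simp only at h1 h2
    have hj := j.2
    by_cases hr : r < n
    · left; omega
    · right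
      refine ⟨by omega, by omega, (h _ j).2 (by omega)⟩

/-- The diagram `SBF lam k n` filled with `1, …, n + 1` corresponds to chains from the staircase
`(N, N - 1, …, 1)`, `N = n + k`, down to the conjugate `c` of `lam`. -/
lemma SSYTcount_SBF {n k : ℕ} (hk : k ≤ 1) {lam : ℕ → ℕ} {c : Fin (n + k) → ℕ}
    (hlam : ∀ i, lam i ≤ n + k) (hc : Antitone c) (hc0 : ∀ j : Fin (n + k), (j : ℕ) = 0 → 1 ≤ c j)
    (h : ∀ (i : ℕ) (j : Fin (n + k)), (j : ℕ) < lam i ↔ i < c j)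
    {α : ℕ → ℕ} (hα : ∀ v, n + 1 < v → α v = 0) :
    (SSYTcount (SBF lam k n) α : ℤ) =
      opsE α (n + 1) 0 (delta (vec c)) (vec (stair (n + k))) := by
  have hν : Antitone (fun j : Fin (n + k) => n + k - 1 - (j : ℕ)) := by
    intro i j hij
    have : (i : ℕ) ≤ j := hij
    simp only; omega
  have h1 := (ncard_tab hc hα (n + 1) 0 (by omega) hν).2
  have h2 : (fun j => vec (fun j : Fin (n + k) => n + k - 1 - (j : ℕ)) j + 1 - ((0 : ℕ) : ℤ)) =
      vec (stair (n + k)) := by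
    funext j
    have := j.2
    simp only [vec, stair]
    omega
  rw [h2] at h1
  rw [← h1, SSYTcount, SBF_eq_cells hk hlam h]
  congr 2
  ext T
  simp only [Tab, Set.mem_ofPred_eq]
  constructor
  · rintro ⟨hS, hC⟩
    refine ⟨fun j => ?_, hS, hS.1, fun v hv => hC v hv⟩
    by_cases hj : (j : ℕ) = 0
    · have := hc0 j hj; omega
    · omega
  · rintro ⟨-, hS, -, hC⟩
    exact ⟨hS, fun v hv => hC v hv⟩

end BadFoundation

/-- Let `n ≥ 1`, `0 ≤ k ≤ 1`, and let `λ = (l1, l2)` be a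
partition with exactly two parts, `1 < l1 ≤ k + n`.  Then `s_{𝒮(λᵗ,k,n)}` and
`s_{𝒮(λ,k,n)}` are equal upon restricting to `n+1` variables: for every
content `α` supported on `{1,…,n+1}` the monomial coefficients agree. -/
theorem twoRow_transpose_eq_in_nPlusOne_variables
    (n k l1 l2 : ℕ) (hn : 1 ≤ n) (hk : k ≤ 1) (hl2 : 1 ≤ l2) (hl21 : l2 ≤ l1)
    (hl1 : 1 < l1) (hl1n : l1 ≤ k + n) :
    ∀ alpha : ℕ → ℕ, (∀ v, n + 1 < v → alpha v = 0) →
      SSYTcount (SBF (twoRowTransposeFun l1 l2) k n) alpha =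
      SSYTcount (SBF (twoRowFun l1 l2) k n) alpha := by
  intro α hα
  have hT : ∀ i, twoRowTransposeFun l1 l2 i ≤ n + k := by
    intro i; unfold twoRowTransposeFun; split_ifs <;> omega
  have hR : ∀ i, twoRowFun l1 l2 i ≤ n + k := by
    intro i; unfold twoRowFun; split_ifs <;> omega
  have hTR : ∀ i j, j < twoRowTransposeFun l1 l2 i ↔ i < twoRowFun l1 l2 j := by
    intro i j; unfold twoRowTransposeFun twoRowFun; split_ifs <;> omega
  -- the column lengths of `λᵗ` and of `λ`
  let c : Fin (n + k) → ℕ := fun j => twoRowFun l1 l2 j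
  let c' : Fin (n + k) → ℕ := fun j => twoRowTransposeFun l1 l2 j
  have hc : Antitone c := by
    intro i j hij
    have : (i : ℕ) ≤ j := hij
    simp only [c, twoRowFun]; split_ifs <;> omega
  have hc' : Antitone c' := by
    intro i j hij
    have : (i : ℕ) ≤ j := hij
    simp only [c', twoRowTransposeFun]; split_ifs <;> omega
  have hconj : BadFoundation.conj c = c' :=
    BadFoundation.eq_conj (fun i => hT i) fun i j => (hTR i j).symm
  have h1 := BadFoundation.SSYTcount_SBF hk hT hc
    (fun j hj => by simp only [c, twoRowFun, hj]; simp; omega) (fun i j => hTR i j) hα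
  have h2 := BadFoundation.SSYTcount_SBF hk hR hc'
    (fun j hj => by simp only [c', twoRowTransposeFun, hj]; split_ifs <;> omega)
    (fun i j => (hTR j i).symm) hα
  have h3 := BadFoundation.opsE_stair α (BadFoundation.delta_alt (BadFoundation.vec c))
    (BadFoundation.delta_nonnegSupp (BadFoundation.vec_nonneg c)) (n + 1) 0
  have h4 := BadFoundation.opsE_conj α hc (fun i => hR i) (n + 1) 0
    (BadFoundation.stair_antitone (n + k)) (fun i => by simp [BadFoundation.stair])
  rw [hconj, BadFoundation.conj_stair] at h4
  have : (SSYTcount (SBF (twoRowTransposeFun l1 l2) k n) α : ℤ) =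
      SSYTcount (SBF (twoRowFun l1 l2) k n) α := by
    rw [h1, h2, h3, h4]
  exact_mod_cast this
end

section
/- Let n be a positive integer, let 0 ≤ k ≤ 1, and let λ be a partition with exactly two parts satisfying 1 < λ_1 ≤ k+n and λ ≠ λ^t. Then the skew Schur functions s_{S(λ^t,k,n)} and s_{S(λ,k,n)} are NOT equal upon restricting to n+2 variables, i.e. after setting x_{n+3} = x_{n+4} = ⋯ = 0. -/
/-! ### Diagrams whose column tops are leftmost in their rows -/

/-- Structural properties of a staircase-like diagram `D`: it occupies columns `0,…,r`, and each
column `c` is an interval of cells whose top cell lies on the antidiagonal `i + c = r`.  In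
particular the top cell of every column is the leftmost cell of its row. -/
structure IsStairTopped (D : Set (ℕ × ℕ)) (r : ℕ) : Prop where
  finite : D.Finite
  le_add : ∀ i c, (i, c) ∈ D → r ≤ i + c
  col_le : ∀ i c, (i, c) ∈ D → c ≤ r
  up : ∀ i c, (i + 1, c) ∈ D → r < i + 1 + c → (i, c) ∈ D
  top_mem : ∀ c, c ≤ r → (r - c, c) ∈ D

/-- The columns in which the entry `v` occurs. -/
def colSet (T : ℕ × ℕ → ℕ) (v : ℕ) : Set ℕ := {c | ∃ i, T (i, c) = v}

/-- Column `c` contains exactly one of the letters `1`, `2` (necessarily in its top cell). -/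
def IsSingle (r : ℕ) (T : ℕ × ℕ → ℕ) (c : ℕ) : Prop :=
  c ≤ r ∧ (T (r - c, c) = 2 ∨ (T (r - c, c) = 1 ∧ T (r - c + 1, c) ≠ 2))

/-- The content `(4 - j, j, β₃, β₄, …)`. -/
def pairContent (β : ℕ → ℕ) (j v : ℕ) : ℕ := if v = 1 then 4 - j else if v = 2 then j else β v

/-- Semistandard tableaux of shape `D` with four entries in `{1, 2}`, and `β v` entries equal to
`v` for every `v ≥ 3`. -/
def pairTableaux (D : Set (ℕ × ℕ)) (β : ℕ → ℕ) : Set (ℕ × ℕ → ℕ) :=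
  {T | IsSSYT D T ∧ (∀ v, 3 ≤ v → contentOf D T v = β v) ∧ contentOf D T 1 + contentOf D T 2 = 4}

lemma IsSSYT.mem {D : Set (ℕ × ℕ)} {T : ℕ × ℕ → ℕ} (h : IsSSYT D T) {p : ℕ × ℕ} (hp : T p ≠ 0) :
    p ∈ D := by
  by_contra hn
  exact hp (h.2.1 p hn)

/-- Columns are strictly increasing, so an entry is counted by the columns containing it. -/
lemma contentOf_eq_ncard_colSet {D : Set (ℕ × ℕ)} {T : ℕ × ℕ → ℕ} (h : IsSSYT D T) {v : ℕ}
    (hv : 1 ≤ v) : contentOf D T v = (colSet T v).ncard := by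
  have himg : colSet T v = Prod.snd '' {p ∈ D | T p = v} := by
    ext c
    constructor
    · rintro ⟨i, hi⟩
      exact ⟨(i, c), ⟨h.mem (by omega), hi⟩, rfl⟩
    · rintro ⟨⟨i, c'⟩, ⟨-, hT⟩, rfl⟩
      exact ⟨i, hT⟩
  rw [himg, Set.InjOn.ncard_image]
  · rfl
  · rintro ⟨i, c⟩ ⟨hD, hT⟩ ⟨i', c'⟩ ⟨hD', hT'⟩ (rfl : c = c')
    rcases lt_trichotomy i i' with hlt | rfl | hlt
    · have := h.2.2.2 i i' c hlt hD hD'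
      omega
    · rfl
    · have := h.2.2.2 i' i c hlt hD' hD
      omega

lemma colSet_finite {D : Set (ℕ × ℕ)} {T : ℕ × ℕ → ℕ} (hD : D.Finite) (h : IsSSYT D T) {v : ℕ}
    (hv : 1 ≤ v) : (colSet T v).Finite := by
  refine (hD.image Prod.snd).subset ?_
  rintro c ⟨i, hi⟩
  exact ⟨(i, c), h.mem (by omega), rfl⟩

lemma pairTableaux_finite {D : Set (ℕ × ℕ)} (hD : D.Finite) {β : ℕ → ℕ} {M : ℕ}
    (hβ : ∀ v, M < v → β v = 0) : (pairTableaux D β).Finite := by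
  have : Finite D := hD
  have hfin : {f : D → ℕ | ∀ p, f p ∈ Set.Iic (M + 2)}.Finite :=
    Set.Finite.pi' fun _ => Set.finite_Iic _
  refine Set.Finite.of_finite_image (f := fun (T : ℕ × ℕ → ℕ) (p : D) => T p) (hfin.subset ?_) ?_
  · rintro _ ⟨T, ⟨-, hc, -⟩, rfl⟩ p
    by_contra hlt
    have hlt : M + 2 < T p := by simpa using hlt
    have h0 : contentOf D T (T p) = 0 := by
      rw [hc _ (by omega), hβ _ (by omega)]
    rw [contentOf, Set.ncard_eq_zero (hD.subset fun _ hq => hq.1)] at h0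
    exact Set.notMem_empty p.1 (h0 ▸ ⟨p.2, rfl⟩)
  · intro T hT T' hT' heq
    funext p
    by_cases hp : p ∈ D
    · exact congrFun heq ⟨p, hp⟩
    · rw [hT.1.2.1 p hp, hT'.1.2.1 p hp]

/-! ### The sign-reversing involution -/

/-- Exchange `1` and `2` in the top cell of column `c`. -/
def toggle (r : ℕ) (T : ℕ × ℕ → ℕ) (c : ℕ) : ℕ × ℕ → ℕ :=
  Function.update T (r - c, c) (3 - T (r - c, c))

section Toggle

variable {D : Set (ℕ × ℕ)} {r : ℕ} {T : ℕ × ℕ → ℕ}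

lemma toggle_top (c : ℕ) : toggle r T c (r - c, c) = 3 - T (r - c, c) := by
  simp [toggle]

lemma toggle_of_ne {c : ℕ} {p : ℕ × ℕ} (hp : p ≠ (r - c, c)) : toggle r T c p = T p := by
  simp [toggle, hp]

/-- An entry not on top of its column is at least `2`. -/
lemma two_le_of_not_top (hD : IsStairTopped D r) (h : IsSSYT D T) {i c : ℕ} (hm : (i, c) ∈ D)
    (hi : r < i + c) : 2 ≤ T (i, c) := by
  have hc := hD.col_le i c hm
  obtain ⟨i, rfl⟩ : ∃ j, i = j + 1 := ⟨i - 1, by omega⟩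
  have hup := hD.up i c hm hi
  have h1 := h.1 _ hup
  have h2 := h.2.2.2 i (i + 1) c (by omega) hup hm
  omega

lemma isSingle_iff (h : IsSSYT D T) {c : ℕ} :
    IsSingle r T c ↔ c ≤ r ∧ (T (r - c, c) = 1 ∨ T (r - c, c) = 2) ∧ T (r - c + 1, c) ≠ 2 := by
  constructor
  · rintro ⟨hc, h2 | ⟨h1, h2⟩⟩
    · refine ⟨hc, Or.inr h2, fun hb => ?_⟩
      have := h.2.2.2 (r - c) (r - c + 1) c (by omega) (h.mem (by omega)) (h.mem (by omega))
      omega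
    · exact ⟨hc, Or.inl h1, h2⟩
  · rintro ⟨hc, h1 | h2, hb⟩
    · exact ⟨hc, Or.inr ⟨h1, hb⟩⟩
    · exact ⟨hc, Or.inl h2⟩

/-- Toggling the single letter of a column keeps the tableau semistandard: the top cell is leftmost
in its row, and all entries to its right are at least `2`. -/
lemma toggle_isSSYT (hD : IsStairTopped D r) (h : IsSSYT D T) {c : ℕ} (hs : IsSingle r T c) :
    IsSSYT D (toggle r T c) := by
  obtain ⟨hc, ht, hb⟩ := (isSingle_iff h).1 hs
  have htop := hD.top_mem c hc
  refine ⟨fun p hp => ?_, fun p hp => ?_, fun i j1 j2 hj h1 h2 => ?_, fun i1 i2 j hi h1 h2 => ?_⟩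
  · by_cases hpe : p = (r - c, c)
    · subst hpe
      rw [toggle_top]
      omega
    · rw [toggle_of_ne hpe]
      exact h.1 p hp
  · have hpe : p ≠ (r - c, c) := fun he => hp (he ▸ htop)
    rw [toggle_of_ne hpe]
    exact h.2.1 p hp
  · rcases hj.eq_or_lt with rfl | hj
    · exact le_rfl
    by_cases hp1 : (i, j1) = (r - c, c)
    · obtain ⟨rfl, rfl⟩ := Prod.mk.inj hp1
      have := two_le_of_not_top hD h h2 (by omega)
      rw [toggle_top, toggle_of_ne (by simp; omega)]
      omega
    · have hp2 : (i, j2) ≠ (r - c, c) := by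
        intro he
        obtain ⟨rfl, rfl⟩ := Prod.mk.inj he
        have := hD.le_add _ _ h1
        omega
      rw [toggle_of_ne hp1, toggle_of_ne hp2]
      exact h.2.2.1 i j1 j2 hj.le h1 h2
  · have hp2 : (i2, j) ≠ (r - c, c) := by
      intro he
      obtain ⟨rfl, rfl⟩ := Prod.mk.inj he
      have := hD.le_add _ _ h1
      omega
    have hlt := h.2.2.2 i1 i2 j hi h1 h2
    by_cases hp1 : (i1, j) = (r - c, c)
    · obtain ⟨rfl, rfl⟩ := Prod.mk.inj hp1
      rw [toggle_top, toggle_of_ne hp2]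
      -- the entries below the top cell exceed `2`: the next one is not `2`, by singleness
      have hge : r - j + 1 = i2 ∨ r - j + 1 < i2 := by omega
      rcases hge with rfl | hge
      · omega
      · obtain ⟨i3, rfl⟩ : ∃ i3, i2 = i3 + 1 := ⟨i2 - 1, by omega⟩
        have hm := hD.up i3 j h2 (by omega)
        have h3 := h.2.2.2 (r - j) i3 j (by omega) h1 hm
        have h4 := h.2.2.2 i3 (i3 + 1) j (by omega) hm h2
        omega
    · rw [toggle_of_ne hp1, toggle_of_ne hp2]
      exact hlt

lemma isSingle_toggle (hD : IsStairTopped D r) (h : IsSSYT D T) {c : ℕ} (hs : IsSingle r T c)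
    (c' : ℕ) : IsSingle r (toggle r T c) c' ↔ IsSingle r T c' := by
  rw [isSingle_iff (toggle_isSSYT hD h hs), isSingle_iff h]
  have hb : ((r - c' + 1, c') : ℕ × ℕ) ≠ (r - c, c) := by
    intro he
    obtain ⟨h1, rfl⟩ := Prod.mk.inj he
    omega
  rw [toggle_of_ne hb]
  by_cases hcc : c' = c
  · subst hcc
    rw [toggle_top]
    have := (isSingle_iff h).1 hs
    omega
  · rw [toggle_of_ne (by simp [hcc])]

lemma toggle_toggle (h : IsSSYT D T) {c : ℕ} (hs : IsSingle r T c) :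
    toggle r (toggle r T c) c = T := by
  have := (isSingle_iff h).1 hs
  funext p
  by_cases hp : p = (r - c, c)
  · subst hp
    rw [toggle_top, toggle_top]
    omega
  · rw [toggle_of_ne hp, toggle_of_ne hp]

lemma contentOf_toggle_of_three_le (h : IsSSYT D T) {c : ℕ}
    (hs : IsSingle r T c) {v : ℕ} (hv : 3 ≤ v) :
    contentOf D (toggle r T c) v = contentOf D T v := by
  have := (isSingle_iff h).1 hs
  unfold contentOf
  congr 1
  ext p
  simp only [Set.mem_ofPred_eq]
  by_cases hp : p = (r - c, c)
  · subst hp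
    rw [toggle_top]
    refine and_congr_right fun _ => ?_
    omega
  · rw [toggle_of_ne hp]

/-- Toggling a top cell from `1` to `2` moves one unit of content from `1` to `2`. -/
lemma contentOf_toggle_one (hD : IsStairTopped D r) {c : ℕ} (hc : c ≤ r)
    (h1 : T (r - c, c) = 1) :
    contentOf D (toggle r T c) 1 + 1 = contentOf D T 1 ∧
      contentOf D (toggle r T c) 2 = contentOf D T 2 + 1 := by
  have htop := hD.top_mem c hc
  constructor
  · have he : {p ∈ D | toggle r T c p = 1} = {p ∈ D | T p = 1} \ {(r - c, c)} := by
      ext p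
      by_cases hp : p = (r - c, c)
      · subst hp
        simp [toggle_top, h1]
      · simp [toggle_of_ne hp, hp]
    unfold contentOf
    rw [he]
    exact Set.ncard_sdiff_singleton_add_one (⟨htop, h1⟩ : (r - c, c) ∈ {p ∈ D | T p = 1})
      (hD.finite.subset fun _ hq => hq.1)
  · have he : {p ∈ D | toggle r T c p = 2} = insert (r - c, c) {p ∈ D | T p = 2} := by
      ext p
      by_cases hp : p = (r - c, c)
      · subst hp
        simp [toggle_top, h1, htop]
      · simp [toggle_of_ne hp, hp]
    unfold contentOf
    rw [he, Set.ncard_insert_of_notMem (by simp [h1]) (hD.finite.subset fun _ hq => hq.1)]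

lemma contentOf_toggle (hD : IsStairTopped D r) (h : IsSSYT D T) {c : ℕ} (hs : IsSingle r T c) :
    contentOf D (toggle r T c) 1 + contentOf D (toggle r T c) 2
        = contentOf D T 1 + contentOf D T 2 ∧
      (contentOf D (toggle r T c) 2 = contentOf D T 2 + 1 ∨
        contentOf D T 2 = contentOf D (toggle r T c) 2 + 1) := by
  obtain ⟨hc, h1 | h2, -⟩ := (isSingle_iff h).1 hs
  · have := contentOf_toggle_one hD hc h1
    omega
  · have := contentOf_toggle_one (T := toggle r T c) hD hc (by rw [toggle_top]; omega)
    rw [toggle_toggle h hs] at this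
    omega

end Toggle

open Classical in
/-- The sign-reversing involution: toggle the first column with a single letter from `{1, 2}`. -/
noncomputable def toggleFirst (r : ℕ) (T : ℕ × ℕ → ℕ) : ℕ × ℕ → ℕ :=
  if h : ∃ c, IsSingle r T c then toggle r T (Nat.find h) else T

lemma toggleFirst_of_exists {r : ℕ} {T : ℕ × ℕ → ℕ} (h : ∃ c, IsSingle r T c) :
    ∃ c, IsSingle r T c ∧ (∀ c' < c, ¬ IsSingle r T c') ∧ toggleFirst r T = toggle r T c := by
  classical
  refine ⟨Nat.find h, Nat.find_spec h, fun c' hc' => Nat.find_min h hc', ?_⟩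
  rw [toggleFirst, dif_pos h]

lemma toggleFirst_toggleFirst {D : Set (ℕ × ℕ)} {r : ℕ} {T : ℕ × ℕ → ℕ} (hD : IsStairTopped D r)
    (hT : IsSSYT D T) (h : ∃ c, IsSingle r T c) : toggleFirst r (toggleFirst r T) = T := by
  obtain ⟨c, hs, hmin, he⟩ := toggleFirst_of_exists h
  have hiff := isSingle_toggle hD hT hs
  obtain ⟨c', hs', hmin', he'⟩ := toggleFirst_of_exists ⟨c, (hiff c).2 hs⟩
  have hcc : c' = c := by
    rcases lt_trichotomy c' c with hlt | heq | hlt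
    · exact absurd ((hiff c').1 hs') (hmin c' hlt)
    · exact heq
    · exact absurd ((hiff c).2 hs) (hmin' c hlt)
  rw [he, he', hcc, toggle_toggle hT hs]

open Classical in
/-- The coefficient of `y⁴ x^β` in `s_D(y, -y, x₃, x₄, …)`: by toggling, only the tableaux in which
each column contains both or none of the letters `1`, `2` contribute. -/
lemma alternating_sum_eq {D : Set (ℕ × ℕ)} {r : ℕ} (hD : IsStairTopped D r) {β : ℕ → ℕ}
    (hfin : (pairTableaux D β).Finite) :
    ∑ j ∈ Finset.range 5, (-1 : ℤ) ^ j * SSYTcount D (pairContent β j) =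
      ∑ T ∈ hfin.toFinset with (¬ ∃ c, IsSingle r T c), (-1 : ℤ) ^ contentOf D T 2 := by
  have hcancel : ∑ T ∈ hfin.toFinset with (∃ c, IsSingle r T c), (-1 : ℤ) ^ contentOf D T 2 = 0 := by
    refine Finset.sum_involution (fun T _ => toggleFirst r T) ?_ ?_ ?_ ?_
    · intro T hT
      simp only [Finset.mem_filter, Set.Finite.mem_toFinset] at hT
      obtain ⟨c, hs, -, he⟩ := toggleFirst_of_exists hT.2
      rw [he]
      rcases (contentOf_toggle hD hT.1.1 hs).2 with h | h <;> rw [h, pow_succ] <;> ring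
    · intro T hT hne heq
      simp only [Finset.mem_filter, Set.Finite.mem_toFinset] at hT
      obtain ⟨c, hs, -, he⟩ := toggleFirst_of_exists hT.2
      have := (contentOf_toggle hD hT.1.1 hs).2
      rw [← he, heq] at this
      omega
    · intro T hT
      simp only [Finset.mem_filter, Set.Finite.mem_toFinset] at hT ⊢
      obtain ⟨⟨hT, hβT, h4⟩, hex⟩ := hT
      obtain ⟨c, hs, -, he⟩ := toggleFirst_of_exists hex
      rw [he]
      refine ⟨⟨toggle_isSSYT hD hT hs, fun v hv => ?_, ?_⟩, c, (isSingle_toggle hD hT hs c).2 hs⟩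
      · rw [contentOf_toggle_of_three_le hT hs hv, hβT v hv]
      · rw [(contentOf_toggle hD hT hs).1, h4]
    · intro T hT
      simp only [Finset.mem_filter, Set.Finite.mem_toFinset] at hT
      exact toggleFirst_toggleFirst hD hT.1.1 hT.2
  have htotal : ∑ T ∈ hfin.toFinset, (-1 : ℤ) ^ contentOf D T 2 =
      ∑ j ∈ Finset.range 5, (-1 : ℤ) ^ j * SSYTcount D (pairContent β j) := by
    have hmaps : ∀ T ∈ hfin.toFinset, contentOf D T 2 ∈ Finset.range 5 := by
      intro T hT
      have := ((Set.Finite.mem_toFinset _).1 hT).2.2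
      simp only [Finset.mem_range]
      omega
    rw [← Finset.sum_fiberwise_of_maps_to hmaps]
    refine Finset.sum_congr rfl fun j hj => ?_
    have hset : {T | IsSSYT D T ∧ ∀ v, 1 ≤ v → contentOf D T v = pairContent β j v} =
        ({T ∈ hfin.toFinset | contentOf D T 2 = j} : Finset (ℕ × ℕ → ℕ)) := by
      ext T
      simp only [Set.mem_ofPred_eq, Finset.coe_filter, Set.Finite.mem_toFinset, Finset.mem_range]
        at hj ⊢
      constructor
      · rintro ⟨hT, hc⟩
        have h1 := hc 1 le_rfl
        have h2 := hc 2 (by omega)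
        simp only [pairContent] at h1 h2
        norm_num at h1 h2
        refine ⟨⟨hT, fun v hv => ?_, by omega⟩, h2⟩
        rw [hc v (by omega), pairContent, if_neg (by omega), if_neg (by omega)]
      · rintro ⟨⟨hT, hβT, h4⟩, h2⟩
        refine ⟨hT, fun v hv => ?_⟩
        unfold pairContent
        split_ifs with hv1 hv2
        · subst hv1
          omega
        · subst hv2
          exact h2
        · exact hβT v (by omega)
    rw [SSYTcount, hset, Set.ncard_coe_finset, Finset.sum_congr rfl (g := fun _ => (-1 : ℤ) ^ j)]
    · rw [Finset.sum_const, nsmul_eq_mul, mul_comm]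
    · intro T hT
      rw [(Finset.mem_filter.1 hT).2]
  rw [← htotal, ← Finset.sum_filter_add_sum_filter_not _ (fun T => ∃ c, IsSingle r T c), hcancel,
    zero_add]

/-- In a surviving tableau the letters `1`, `2` fill precisely the two top cells of each of the
columns `0` and `1`; consequently every survivor has sign `+1`. -/
lemma survivor {D : Set (ℕ × ℕ)} {r : ℕ} (hD : IsStairTopped D r) {β : ℕ → ℕ} {T : ℕ × ℕ → ℕ}
    (hT : T ∈ pairTableaux D β) (hns : ¬ ∃ c, IsSingle r T c) :
    contentOf D T 2 = 2 ∧ 1 ≤ r ∧ T (r, 0) = 1 ∧ T (r + 1, 0) = 2 ∧ T (r - 1, 1) = 1 ∧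
      T (r, 1) = 2 := by
  obtain ⟨hT, -, h4⟩ := hT
  set P : Set ℕ := {c | c ≤ r ∧ T (r - c, c) = 1 ∧ T (r - c + 1, c) = 2} with hP
  have hP1 : colSet T 1 = P := by
    ext c
    constructor
    · rintro ⟨i, hi⟩
      have hm := hT.mem (p := (i, c)) (by omega)
      have hc := hD.col_le i c hm
      have hle := hD.le_add i c hm
      have hi' : i = r - c := by
        by_contra hne
        have := two_le_of_not_top hD hT hm (by omega)
        omega
      subst hi'
      refine ⟨hc, hi, ?_⟩
      by_contra hb
      exact hns ⟨c, hc, Or.inr ⟨hi, hb⟩⟩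
    · rintro ⟨-, h1, -⟩
      exact ⟨_, h1⟩
  have hP2 : colSet T 2 = P := by
    ext c
    constructor
    · rintro ⟨i, hi⟩
      have hm := hT.mem (p := (i, c)) (by omega)
      have hc := hD.col_le i c hm
      have hle := hD.le_add i c hm
      have htop := hD.top_mem c hc
      have hi' : r - c < i := by
        by_contra hne
        have he : i = r - c := by omega
        subst he
        exact hns ⟨c, hc, Or.inl hi⟩
      have hlt := hT.2.2.2 (r - c) i c hi' htop hm
      have hpos := hT.1 _ htop
      have h1 : T (r - c, c) = 1 := by omega
      refine ⟨hc, h1, ?_⟩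
      by_contra hb
      exact hns ⟨c, hc, Or.inr ⟨h1, hb⟩⟩
    · rintro ⟨-, -, h2⟩
      exact ⟨_, h2⟩
  rw [contentOf_eq_ncard_colSet hT le_rfl, contentOf_eq_ncard_colSet hT (by omega), hP1, hP2] at h4
  -- the `2` in column `c + 1` lies to the right of the top cell of column `c`
  have hdown : ∀ c, c + 1 ∈ P → c ∈ P := by
    rintro c ⟨hc, -, h2⟩
    rw [show r - (c + 1) + 1 = r - c by omega] at h2
    have htop := hD.top_mem c (by omega)
    have hle := hT.2.2.1 (r - c) c (c + 1) (by omega) htop (hT.mem (by omega))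
    have hpos := hT.1 _ htop
    by_contra hcP
    refine hns ⟨c, by omega, ?_⟩
    have h12 : T (r - c, c) = 2 ∨ T (r - c, c) = 1 := by omega
    refine h12.imp_right fun h1 => ⟨h1, fun hb => hcP ⟨by omega, h1, hb⟩⟩
  have hone : 1 ∈ P := by
    by_contra hn
    have hnone : ∀ c, c + 1 ∉ P := by
      intro c
      induction c with
      | zero => exact hn
      | succ c ih => exact fun hc => ih (hdown _ hc)
    have hsub : P ⊆ {0} := by
      intro c hc
      cases c with
      | zero => rfl
      | succ c => exact absurd hc (hnone c)
    have := Set.ncard_le_ncard hsub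
    rw [Set.ncard_singleton] at this
    omega
  have hzero := hdown 0 hone
  obtain ⟨hr, h1, h2⟩ := hone
  obtain ⟨-, h3, h5⟩ := hzero
  rw [show r - 1 + 1 = r by omega] at h2
  refine ⟨?_, hr, h3, h5, h1, h2⟩
  rw [contentOf_eq_ncard_colSet hT (by omega), hP2]
  omega

/-- If the contents `(4 - j, j, β)` do not distinguish `D₁` from `D₂`, then a survivor of shape `D₁`
forces the existence of a survivor of shape `D₂`. -/
lemma exists_survivor {D₁ D₂ : Set (ℕ × ℕ)} {r M : ℕ} (hD₁ : IsStairTopped D₁ r)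
    (hD₂ : IsStairTopped D₂ r) {β : ℕ → ℕ} (hβ : ∀ v, M < v → β v = 0)
    (heq : ∀ j, SSYTcount D₁ (pairContent β j) = SSYTcount D₂ (pairContent β j))
    {T₀ : ℕ × ℕ → ℕ} (hT₀ : T₀ ∈ pairTableaux D₁ β) (hns : ¬ ∃ c, IsSingle r T₀ c) :
    ∃ T ∈ pairTableaux D₂ β, ¬ ∃ c, IsSingle r T c := by
  classical
  by_contra! hno
  have h1 := alternating_sum_eq hD₁ (pairTableaux_finite hD₁.finite hβ)
  have h2 := alternating_sum_eq hD₂ (pairTableaux_finite hD₂.finite hβ)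
  simp only [heq] at h1
  rw [h1, Finset.sum_eq_zero (s := Finset.filter _ (pairTableaux_finite hD₂.finite hβ).toFinset)]
    at h2
  · refine absurd h2 (ne_of_gt (Finset.sum_pos (fun T hT => ?_) ⟨T₀, ?_⟩))
    · simp only [Finset.mem_filter, Set.Finite.mem_toFinset] at hT
      rw [(survivor hD₁ hT.1 hT.2).1]
      norm_num
    · simp only [Finset.mem_filter, Set.Finite.mem_toFinset]
      exact ⟨hT₀, hns⟩
  · intro T hT
    simp only [Finset.mem_filter, Set.Finite.mem_toFinset] at hT
    exact absurd (hno T hT.1) hT.2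

/-! ### Staircases with bad foundation -/

lemma SBF_isStairTopped {lam : ℕ → ℕ} {k n L : ℕ} (hn : 1 ≤ n) (hk : k ≤ 1)
    (hanti : ∀ i, lam (i + 1) ≤ lam i) (hL : ∀ i, L ≤ i → lam i = 0) (hpos : 1 ≤ lam 0)
    (hle : lam 0 ≤ n + k) : IsStairTopped (SBF lam k n) (n + k - 1) := by
  have hle' : ∀ i, lam i ≤ n + k := fun i => (antitone_nat_of_succ_le hanti (Nat.zero_le i)).trans hle
  refine ⟨?_, ?_, ?_, ?_, ?_⟩
  · refine ((Set.finite_Iio (n + L)).prod (Set.finite_Iio (n + k))).subset ?_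
    rintro ⟨i, c⟩ (h | h)
    · simp only [staircaseCells, Set.mem_ofPred_eq] at h
      simp only [Set.mem_prod, Set.mem_Iio]
      omega
    · simp only [foundationCells, Set.mem_ofPred_eq] at h
      simp only [Set.mem_prod, Set.mem_Iio]
      have h1 := hle' (i - n)
      have h2 : ¬ L ≤ i - n := fun hLi => by
        have := hL _ hLi
        omega
      omega
  · rintro i c (h | h)
    · simp only [staircaseCells, Set.mem_ofPred_eq] at h
      omega
    · simp only [foundationCells, Set.mem_ofPred_eq] at h
      omega
  · rintro i c (h | h)
    · simp only [staircaseCells, Set.mem_ofPred_eq] at h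
      omega
    · simp only [foundationCells, Set.mem_ofPred_eq] at h
      have := hle' (i - n)
      omega
  · rintro i c (h | h) hr
    · simp only [staircaseCells, Set.mem_ofPred_eq] at h
      left
      simp only [staircaseCells, Set.mem_ofPred_eq]
      omega
    · simp only [foundationCells, Set.mem_ofPred_eq] at h
      have hbd := hle' (i + 1 - n)
      by_cases hi : i < n
      · left
        simp only [staircaseCells, Set.mem_ofPred_eq]
        omega
      · right
        simp only [foundationCells, Set.mem_ofPred_eq]
        rw [show i + 1 - n = i - n + 1 by omega] at h
        have := hanti (i - n)
        omega
  · intro c hc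
    by_cases hck : k ≤ c
    · left
      simp only [staircaseCells, Set.mem_ofPred_eq]
      omega
    · right
      simp only [foundationCells, Set.mem_ofPred_eq]
      have hc0 : c = 0 := by omega
      subst hc0
      rw [show n + k - 1 - 0 - n = 0 by omega]
      omega

open Classical in
/-- The surviving tableau of shape `S(λᵗ, k, n)`: from top to bottom, columns `0` and `1` read
`1, 2, 3, …` and all other columns read `3, 4, 5, …`. -/
noncomputable def extremalTableau (D : Set (ℕ × ℕ)) (r : ℕ) : ℕ × ℕ → ℕ := fun p =>
  if p ∈ D then p.1 + p.2 + 1 - r + (if 2 ≤ p.2 then 2 else 0) else 0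

lemma extremalTableau_isSSYT {D : Set (ℕ × ℕ)} {r : ℕ} (hD : IsStairTopped D r) :
    IsSSYT D (extremalTableau D r) := by
  refine ⟨?_, ?_, ?_, ?_⟩
  · rintro ⟨i, c⟩ hp
    have := hD.le_add i c hp
    simp only [extremalTableau, if_pos hp]
    omega
  · intro p hp
    simp only [extremalTableau, if_neg hp]
  · intro i j1 j2 hj h1 h2
    simp only [extremalTableau, if_pos h1, if_pos h2]
    split_ifs <;> omega
  · intro i1 i2 j hi h1 h2
    have := hD.le_add _ _ h1
    simp only [extremalTableau, if_pos h1, if_pos h2]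
    omega

lemma extremalTableau_of_mem {D : Set (ℕ × ℕ)} {r i c : ℕ} (h : (i, c) ∈ D) :
    extremalTableau D r (i, c) = i + c + 1 - r + (if 2 ≤ c then 2 else 0) := by
  simp only [extremalTableau, if_pos h]

lemma SBF_transpose_mem {n k l1 l2 i c : ℕ} :
    (i, c) ∈ SBF (twoRowTransposeFun l1 l2) k n ↔
      (i < n ∧ k + n - 1 - i ≤ c ∧ c < n + k) ∨
        (n ≤ i ∧ k - 1 - (i - n) ≤ c ∧ ((c < 2 ∧ i - n < l2) ∨ (c < 1 ∧ i - n < l1))) := by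
  simp only [SBF, staircaseCells, foundationCells, twoRowTransposeFun, Set.mem_union,
    Set.mem_ofPred_eq]
  refine or_congr_right (and_congr_right fun _ => and_congr_right fun _ => ?_)
  split_ifs <;> omega

lemma SBF_twoRow_mem {n k l1 l2 i c : ℕ} :
    (i, c) ∈ SBF (twoRowFun l1 l2) k n ↔
      (i < n ∧ k + n - 1 - i ≤ c ∧ c < n + k) ∨
        (n ≤ i ∧ k - 1 - (i - n) ≤ c ∧ ((i = n ∧ c < l1) ∨ (i = n + 1 ∧ c < l2))) := by
  simp only [SBF, staircaseCells, foundationCells, twoRowFun, Set.mem_union, Set.mem_ofPred_eq]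
  refine or_congr_right (and_congr_right fun _ => and_congr_right fun _ => ?_)
  split_ifs <;> omega

/-- The letters `1` and `2` occur in the extremal tableau exactly in columns `0` and `1`. -/
lemma colSet_extremalTableau {D : Set (ℕ × ℕ)} {r v : ℕ} (hD : IsStairTopped D r)
    (hv1 : 1 ≤ v) (hv2 : v ≤ 2) (h0 : (r + v - 1, 0) ∈ D) (h1 : (r + v - 2, 1) ∈ D) (hr : 1 ≤ r) :
    colSet (extremalTableau D r) v = {0, 1} := by
  ext c
  simp only [Set.mem_insert_iff, Set.mem_singleton_iff]
  constructor
  · rintro ⟨i, hi⟩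
    have hm := (extremalTableau_isSSYT hD).mem (p := (i, c)) (by omega)
    have hle := hD.le_add i c hm
    rw [extremalTableau_of_mem hm] at hi
    split_ifs at hi <;> omega
  · rintro (rfl | rfl)
    · refine ⟨_, (extremalTableau_of_mem h0).trans ?_⟩
      norm_num
      omega
    · refine ⟨_, (extremalTableau_of_mem h1).trans ?_⟩
      norm_num
      omega

/-- Among survivors, the content of the extremal tableau of shape `S(λᵗ, k, n)` does not occur
for the shape `S(λ, k, n)`: for `k = 1` there are too few columns with room for a `3`, and for
`k = 0`, where every column has to contain a `3`, there are too few with room for a `4`. -/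
lemma no_survivor {n k l1 l2 r : ℕ} (hr : r = n + k - 1) (hk : k ≤ 1) (hl2 : 1 ≤ l2)
    (hl1 : 3 ≤ l1) (hl1n : l1 ≤ k + n)
    (hD₁ : IsStairTopped (SBF (twoRowTransposeFun l1 l2) k n) r)
    (hD₂ : IsStairTopped (SBF (twoRowFun l1 l2) k n) r) {T : ℕ × ℕ → ℕ}
    (hT : IsSSYT (SBF (twoRowFun l1 l2) k n) T)
    (h1 : T (r, 0) = 1) (h2 : T (r + 1, 0) = 2) (h3 : T (r - 1, 1) = 1) (h4 : T (r, 1) = 2)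
    (hc : ∀ v, 3 ≤ v → contentOf (SBF (twoRowFun l1 l2) k n) T v =
      contentOf (SBF (twoRowTransposeFun l1 l2) k n)
        (extremalTableau (SBF (twoRowTransposeFun l1 l2) k n) r) v) : False := by
  set D₁ := SBF (twoRowTransposeFun l1 l2) k n with hD₁def
  have hT₀ := extremalTableau_isSSYT hD₁
  have heq : ∀ v, 3 ≤ v → colSet T v ⊆ colSet (extremalTableau D₁ r) v →
      colSet T v = colSet (extremalTableau D₁ r) v := by
    intro v hv hsub
    refine Set.eq_of_subset_of_ncard_le hsub ?_ (colSet_finite hD₁.finite hT₀ (by omega))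
    have := hc v hv
    rw [contentOf_eq_ncard_colSet hT (by omega), contentOf_eq_ncard_colSet hT₀ (by omega)] at this
    exact this.ge
  -- the columns `c ≥ 2` of the extremal tableau start with `3`, `4`
  have hthree : ∀ c, 2 ≤ c → c ≤ r → c ∈ colSet (extremalTableau D₁ r) 3 := by
    intro c hc2 hcr
    refine ⟨r - c, ?_⟩
    rw [extremalTableau_of_mem (hD₁.top_mem c hcr), if_pos hc2]
    omega
  have hfour : ∀ c, 2 ≤ c → c ≤ r → c ∈ colSet (extremalTableau D₁ r) 4 := by
    intro c hc2 hcr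
    refine ⟨r - c + 1, ?_⟩
    rw [extremalTableau_of_mem (SBF_transpose_mem.2 (Or.inl (by omega))), if_pos hc2]
    omega
  have hcol : ∀ v, 3 ≤ v → ∀ c ∈ colSet T v, c ≤ r := by
    rintro v hv c ⟨i, hi⟩
    exact hD₂.col_le i c (hT.mem (by omega))
  have h0three : 0 ∈ colSet (extremalTableau D₁ r) 3 := by
    refine ⟨r + 2, ?_⟩
    rw [extremalTableau_of_mem (SBF_transpose_mem.2 (Or.inr (by omega)))]
    norm_num
    omega
  -- cells of `T` in column `0` or `1` with entry at least `3` lie below the two top cells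
  have hcol0 : ∀ i, 3 ≤ T (i, 0) → i = n + 1 ∧ k = 0 := by
    intro i hi
    have hm := SBF_twoRow_mem.1 (hT.mem (p := (i, 0)) (by omega))
    have hi1 : i ≠ r := by
      rintro rfl
      omega
    have hi2 : i ≠ r + 1 := by
      rintro rfl
      omega
    omega
  have hcol1 : ∀ i, 3 ≤ T (i, 1) → (i = n + 1 ∧ 2 ≤ l2) ∨ (i = n ∧ k = 0) := by
    intro i hi
    have hm := SBF_twoRow_mem.1 (hT.mem (p := (i, 1)) (by omega))
    have hi1 : i ≠ r - 1 := by
      rintro rfl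
      omega
    have hi2 : i ≠ r := by
      rintro rfl
      omega
    omega
  obtain rfl | rfl : k = 0 ∨ k = 1 := by omega
  · have h1three : 1 ∈ colSet (extremalTableau D₁ r) 3 := by
      refine ⟨r + 1, ?_⟩
      rw [extremalTableau_of_mem (SBF_transpose_mem.2 (Or.inr (by omega)))]
      norm_num
      omega
    have he3 := heq 3 le_rfl fun c hcT => by
      have := hcol 3 le_rfl c hcT
      obtain rfl | rfl | hc2 : c = 0 ∨ c = 1 ∨ 2 ≤ c := by omega
      · exact h0three
      · exact h1three
      · exact hthree c hc2 this
    obtain ⟨i0, hi0⟩ : 0 ∈ colSet T 3 := he3 ▸ h0three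
    obtain ⟨i1, hi1⟩ : 1 ∈ colSet T 3 := he3 ▸ h1three
    have hn4 : 0 ∉ colSet T 4 := by
      rintro ⟨i, hi⟩
      have ha := (hcol0 i (by omega)).1
      have hb := (hcol0 i0 (by omega)).1
      rw [ha] at hi
      rw [hb] at hi0
      omega
    have he4 := heq 4 (by omega) fun c hcT => by
      have := hcol 4 (by omega) c hcT
      obtain rfl | rfl | hc2 : c = 0 ∨ c = 1 ∨ 2 ≤ c := by omega
      · exact absurd hcT hn4
      · obtain ⟨i, hi⟩ := hcT
        have ha := hcol1 i (by omega)
        have hb := hcol1 i1 (by omega)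
        have hne : i ≠ i1 := by
          rintro rfl
          omega
        refine ⟨r + 2, ?_⟩
        rw [extremalTableau_of_mem (SBF_transpose_mem.2 (Or.inr (by omega)))]
        norm_num
        omega
      · exact hfour c hc2 this
    refine hn4 (he4 ▸ ⟨r + 3, ?_⟩)
    rw [extremalTableau_of_mem (SBF_transpose_mem.2 (Or.inr (by omega)))]
    norm_num
    omega
  · have hn3 : 0 ∉ colSet T 3 := by
      rintro ⟨i, hi⟩
      have := hcol0 i (by omega)
      omega
    have he3 := heq 3 le_rfl fun c hcT => by
      have := hcol 3 le_rfl c hcT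
      obtain rfl | rfl | hc2 : c = 0 ∨ c = 1 ∨ 2 ≤ c := by omega
      · exact absurd hcT hn3
      · obtain ⟨i, hi⟩ := hcT
        have ha := hcol1 i (by omega)
        refine ⟨r + 1, ?_⟩
        rw [extremalTableau_of_mem (SBF_transpose_mem.2 (Or.inr (by omega)))]
        norm_num
        omega
      · exact hthree c hc2 this
    exact hn3 (he3 ▸ h0three)

/-- Let `n ≥ 1`, `0 ≤ k ≤ 1`, and let `λ = (l1, l2)` be a
partition with exactly two parts, `1 < l1 ≤ k + n`, with `λ ≠ λᵗ`.  Then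
`s_{𝒮(λᵗ,k,n)}` and `s_{𝒮(λ,k,n)}` are NOT equal upon restricting to `n+2`
variables: some monomial coefficient (indexed by a content supported on
`{1,…,n+2}`) differs. -/
theorem twoRow_transpose_ne_in_nPlusTwo_variables
    (n k l1 l2 : ℕ) (hn : 1 ≤ n) (hk : k ≤ 1) (hl2 : 1 ≤ l2) (hl21 : l2 ≤ l1)
    (hl1 : 1 < l1) (hl1n : l1 ≤ k + n)
    (hne : twoRowFun l1 l2 ≠ twoRowTransposeFun l1 l2) :
    ∃ alpha : ℕ → ℕ, (∀ v, n + 2 < v → alpha v = 0) ∧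
      SSYTcount (SBF (twoRowTransposeFun l1 l2) k n) alpha ≠
      SSYTcount (SBF (twoRowFun l1 l2) k n) alpha := by
  -- for `λ₁ = 2` the partition is self-conjugate
  have hl3 : 3 ≤ l1 := by
    by_contra hlt
    refine hne (funext fun i => ?_)
    have h1 : l1 = 2 := by omega
    subst h1
    simp only [twoRowFun, twoRowTransposeFun]
    split_ifs <;> omega
  obtain ⟨r, hr⟩ : ∃ r, r = n + k - 1 := ⟨_, rfl⟩
  have hD₁ : IsStairTopped (SBF (twoRowTransposeFun l1 l2) k n) r := by
    rw [hr]
    refine SBF_isStairTopped (L := l1) hn hk (fun i => ?_) (fun i hi => ?_) ?_ ?_ <;>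
      simp only [twoRowTransposeFun] <;> split_ifs <;> omega
  have hD₂ : IsStairTopped (SBF (twoRowFun l1 l2) k n) r := by
    rw [hr]
    refine SBF_isStairTopped (L := 2) hn hk (fun i => ?_) (fun i hi => ?_) ?_ ?_
    · obtain rfl | hi : i = 0 ∨ 1 ≤ i := by omega
      · exact hl21
      · rw [twoRowFun, if_neg (by omega), if_neg (by omega)]
        exact Nat.zero_le _
    · unfold twoRowFun
      split_ifs <;> omega
    · exact hl2.trans hl21
    · simpa [twoRowFun, add_comm] using hl1n
  set D₁ := SBF (twoRowTransposeFun l1 l2) k n with hD₁def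
  set D₂ := SBF (twoRowFun l1 l2) k n with hD₂def
  have hT₀ := extremalTableau_isSSYT hD₁
  have hβ : ∀ v, n + 2 < v → contentOf D₁ (extremalTableau D₁ r) v = 0 := by
    intro v hv
    have hempty : {p ∈ D₁ | extremalTableau D₁ r p = v} = ∅ := by
      refine Set.eq_empty_iff_forall_notMem.2 ?_
      rintro ⟨i, c⟩ ⟨hm, he⟩
      rw [extremalTableau_of_mem hm] at he
      have hm' := SBF_transpose_mem.1 hm
      split_ifs at he <;> omega
    rw [contentOf, hempty, Set.ncard_empty]
  by_contra! hall
  have heq : ∀ j, SSYTcount D₁ (pairContent (contentOf D₁ (extremalTableau D₁ r)) j) =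
      SSYTcount D₂ (pairContent (contentOf D₁ (extremalTableau D₁ r)) j) := by
    intro j
    refine hall _ fun v hv => ?_
    rw [pairContent, if_neg (by omega), if_neg (by omega), hβ v hv]
  have hm0 : (r, 0) ∈ D₁ := SBF_transpose_mem.2 (by omega)
  have hm0' : (r + 1, 0) ∈ D₁ := SBF_transpose_mem.2 (by omega)
  have hm1 : (r - 1, 1) ∈ D₁ := SBF_transpose_mem.2 (by omega)
  have hm1' : (r, 1) ∈ D₁ := SBF_transpose_mem.2 (by omega)
  obtain ⟨T, hT, hns⟩ := exists_survivor hD₁ hD₂ hβ heq (T₀ := extremalTableau D₁ r)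
    ⟨hT₀, fun _ _ => rfl, by
      rw [contentOf_eq_ncard_colSet hT₀ le_rfl, contentOf_eq_ncard_colSet hT₀ (by omega),
        colSet_extremalTableau hD₁ le_rfl (by omega) hm0 hm1 (by omega),
        colSet_extremalTableau hD₁ (by omega) le_rfl hm0' hm1' (by omega),
        Set.ncard_pair (by omega)]⟩
    (by
      rintro ⟨c, hc, hs⟩
      rw [extremalTableau_of_mem (hD₁.top_mem c hc)] at hs
      obtain rfl | rfl | hc2 : c = 0 ∨ c = 1 ∨ 2 ≤ c := by omega
      · rw [Nat.sub_zero, extremalTableau_of_mem hm0'] at hs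
        norm_num at hs
        omega
      · rw [show r - 1 + 1 = r by omega, extremalTableau_of_mem hm1'] at hs
        norm_num at hs
        omega
      · rw [if_pos hc2] at hs
        omega)
  obtain ⟨-, -, h1, h2, h3, h4⟩ := survivor hD₂ hT hns
  exact no_survivor hr hk hl2 hl3 hl1n hD₁ hD₂ hT.1 h1 h2 h3 h4 hT.2.1
end
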